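/- arXiv:1104.5007 — 2 statements merged into one kernel-verified Lean document; each statement's English description precedes it below -/
import Mathlib

section
/- For every integer t ≥ 1 there exists a constant C_t such that for every integer n ≥ 1, the maximum size r_{2t+3}(n) of a family of n-permutations with VC-dimension at most 2t+3 satisfies r_{2t+3}(n) ≤ 2^{n·((2/t!)·α(n)^t·log₂ α(n) + C_t·α(n)^t)}. -/
/-! ## Inverse Ackermann hierarchy -/

/-- Bounded-fuel iteration counter: number of applications of `f` needed to bring `m`
down to a value `≤ 1` (assuming `f` strictly decreases on values `≥ 2`). -/
def iterCount (f : ℕ → ℕ) : ℕ → ℕ → ℕ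
  | 0, _ => 0
  | fuel + 1, m => if m ≤ 1 then 0 else 1 + iterCount f fuel (f m)

/-- The inverse Ackermann hierarchy: `alphaHier 1 m = ⌈m/2⌉`, `alphaHier d 1 = 0` for `d ≥ 2`,
and `alphaHier d m = 1 + alphaHier d (alphaHier (d-1) m)` for `m, d ≥ 2`. -/
def alphaHier : ℕ → ℕ → ℕ
  | 0, m => m
  | 1, m => (m + 1) / 2
  | d + 2, m => iterCount (alphaHier (d + 1)) m m

/-- The inverse Ackermann function `α(m) = min {k ≥ 1 : α_k(m) ≤ 3}`. -/
noncomputable def invAck (m : ℕ) : ℕ := sInf {k : ℕ | 1 ≤ k ∧ alphaHier k m ≤ 3}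

/-! ## Permutations, restrictions, VC-dimension -/

/-- The restriction of the `n`-permutation `π` to the (increasing) `k`-tuple of positions `a`
is the `k`-permutation `σ`. -/
def PermRestrictionIs {n k : ℕ} (π : Equiv.Perm (Fin n)) (a : Fin k → Fin n)
    (σ : Equiv.Perm (Fin k)) : Prop :=
  ∀ i j : Fin k, σ i < σ j ↔ π (a i) < π (a j)

/-- The `k`-tuple of positions `a` is shattered by the family `P` of `n`-permutations. -/
def Shatters {n k : ℕ} (P : Finset (Equiv.Perm (Fin n))) (a : Fin k → Fin n) : Prop :=
  StrictMono a ∧ ∀ σ : Equiv.Perm (Fin k), ∃ π ∈ P, PermRestrictionIs π a σ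

/-- The family `P` of `n`-permutations has VC-dimension at most `k`:
no `(k+1)`-tuple of positions is shattered by `P`. -/
def VCDimLE (n k : ℕ) (P : Finset (Equiv.Perm (Fin n))) : Prop :=
  ∀ a : Fin (k + 1) → Fin n, ¬ Shatters P a

/-- The number of `1`-entries of the union of the permutation matrices of a family `P`
of `n`-permutations. -/
noncomputable def permOnes {n : ℕ} (P : Finset (Equiv.Perm (Fin n))) : ℕ :=
  Nat.card {p : Fin n × Fin n // ∃ π ∈ P, π p.2 = p.1}

/-- `v(P) = |M_P| / n`, the average number of `1`-entries per column of the union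
of the permutation matrices of the family `P`. -/
noncomputable def vPerm {n : ℕ} (P : Finset (Equiv.Perm (Fin n))) : ℝ :=
  (permOnes P : ℝ) / (n : ℝ)

/-! ## (0,1)-matrices -/

/-- The number of `1`-entries of a `(0,1)`-matrix (represented as a `Bool` matrix). -/
noncomputable def matOnes {m n : ℕ} (M : Fin m → Fin n → Bool) : ℕ :=
  Nat.card {p : Fin m × Fin n // M p.1 p.2 = true}

/-- The number of `1`-entries in column `j` of a `(0,1)`-matrix. -/
noncomputable def colOnes {m n : ℕ} (M : Fin m → Fin n → Bool) (j : Fin n) : ℕ :=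
  Nat.card {i : Fin m // M i j = true}

/-- The matrix `B` contains the matrix `S`. -/
def MatContains {m n p q : ℕ} (B : Fin m → Fin n → Bool) (S : Fin p → Fin q → Bool) : Prop :=
  ∃ (r : Fin p → Fin m) (c : Fin q → Fin n), StrictMono r ∧ StrictMono c ∧
    ∀ a b, S a b = true → B (r a) (c b) = true

/-- The `s × 2` matrix `DS_s`, with a `1`-entry in (1-indexed) row `i` and column `j`
exactly when `i + j` is odd. -/
def DS (s : ℕ) : Fin s → Fin 2 → Bool :=
  fun i j => decide ((i.val + j.val) % 2 = 1)

/-- The maximum number of `1`-entries in an `n × n` matrix avoiding `S`. -/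
noncomputable def exMat {p q : ℕ} (S : Fin p → Fin q → Bool) (n : ℕ) : ℕ :=
  sSup {x : ℕ | ∃ M : Fin n → Fin n → Bool, ¬ MatContains M S ∧ matOnes M = x}

/-- An `n × n` matrix is `k`-full if some increasing `k`-tuple of columns contains
every `k`-permutation matrix. -/
def IsFull (k : ℕ) {n : ℕ} (M : Fin n → Fin n → Bool) : Prop :=
  ∃ c : Fin k → Fin n, StrictMono c ∧ ∀ σ : Equiv.Perm (Fin k),
    ∃ r : Fin k → Fin n, StrictMono r ∧ ∀ b : Fin k, M (r (σ b)) (c b) = true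

/-- `pFull k n` is the maximum number of `1`-entries in an `n × n` matrix that is
not `(k+1)`-full. -/
noncomputable def pFull (k n : ℕ) : ℕ :=
  sSup {x : ℕ | ∃ M : Fin n → Fin n → Bool, ¬ IsFull (k + 1) M ∧ matOnes M = x}

/-! ## Formations -/

/-- `M` contains a `B`-fat `(r,s)`-formation: there are an `s`-partition of the rows into
intervals (the fibers of a monotone map `g`) and `r` columns, each having at least `B`
`1`-entries in every interval. -/
def FatFormation (B r s : ℕ) {m n : ℕ} (M : Fin m → Fin n → Bool) : Prop :=
  ∃ g : Fin m → Fin s, Monotone g ∧ ∃ c : Fin r → Fin n, StrictMono c ∧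
    ∀ (j : Fin r) (i : Fin s), B ≤ Nat.card {x : Fin m // g x = i ∧ M x (c j) = true}

/-- `M` contains a doubled `(r,s)`-formation: there are an `s`-partition of the rows into
intervals and `r` columns, each having at least one `1`-entry in the first and last
interval and at least two `1`-entries in every other interval. -/
def DoubledFormation (r s : ℕ) {m n : ℕ} (M : Fin m → Fin n → Bool) : Prop :=
  ∃ g : Fin m → Fin s, Monotone g ∧ ∃ c : Fin r → Fin n, StrictMono c ∧
    ∀ (j : Fin r) (i : Fin s),
      1 ≤ Nat.card {x : Fin m // g x = i ∧ M x (c j) = true} ∧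
      (i.val ≠ 0 → i.val ≠ s - 1 → 2 ≤ Nat.card {x : Fin m // g x = i ∧ M x (c j) = true})

/-! ## The functions R, D, β -/

/-- Nivasch's hierarchy `R_s(d)` (shifted as in the paper). -/
def Rfun : ℕ → ℕ → ℕ
  | 0, _ => 0
  | 1, _ => 0
  | 2, _ => 2
  | 3, _ => 3
  | 4, d => 2 * d + 1
  | _ + 5, 0 => 0
  | _ + 5, 1 => 0
  | s + 5, 2 => 2 ^ (s + 3) + 1
  | s + 5, d + 3 =>
      2 * (Rfun (s + 4) (d + 3) - 1) + (Rfun (s + 3) (d + 3) - 1) * (Rfun (s + 5) (d + 2) - 3) + 1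
  termination_by s d => (s, d)

/-- The hierarchy `D_s(d)`. -/
def Dfun : ℕ → ℕ → ℕ
  | 0, _ => 0
  | 1, _ => 0
  | 2, _ => 2
  | _ + 3, 0 => 0
  | _ + 3, 1 => 0
  | s + 3, 2 => 2 ^ (s + 2) + 2 ^ (s + 1) - 1
  | s + 3, d + 3 =>
      2 * Dfun (s + 2) (d + 3) + (Dfun (s + 1) (d + 3) + 1) * (Rfun (s + 3) (d + 2) - 3)
        + Dfun (s + 3) (d + 2) - Rfun (s + 3) (d + 2) + 1
  termination_by s d => (s, d)

/-- `β_s(m) = D_s(α(m))`. -/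
noncomputable def betaFun (s m : ℕ) : ℕ := Dfun s (invAck m)

/-! ## Sequences: MST and formations in sequences -/

/-- The list of column indices of the `1`-entries of a row, in increasing order. -/
def rowList {n : ℕ} (row : Fin n → Bool) : List (Fin n) :=
  (List.finRange n).filter (fun j => row j)

/-- The matrix → sequence transformation: read the rows top to bottom, writing for each
`1`-entry the index of its column. -/
def MST {m n : ℕ} (M : Fin m → Fin n → Bool) : List (Fin n) :=
  ((List.finRange m).map (fun i => rowList (M i))).flatten

/-- The list `L` contains an `(r,s)`-formation as a subsequence: a concatenation of `s`
permutations of the same `r`-element set of symbols is a sublist of `L`. -/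
def IsFormationSeq {A : Type*} [DecidableEq A] (r s : ℕ) (L : List A) : Prop :=
  ∃ (T : Finset A) (F : List (List A)), T.card = r ∧ F.length = s ∧
    (∀ l ∈ F, l.Nodup ∧ l.toFinset = T) ∧ List.Sublist F.flatten L

/-!
Draw a set of pairs (value, position) as a point set. If it has no `(r, s)`-formation, splitting the
rows into blocks and recursing both inside the blocks and on the contracted rows bounds its size by
a multiple of the number of its columns, up to a term linear in the number of rows. The multiplier
`R` obeys an Ackermann-type recursion along the inverse Ackermann hierarchy, and
`log₂ R ≤ α(n)^t * log₂ α(n) / t! + O(α(n)^t)` when `s = 2 * t + 4`.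

A product of `(2 * R + 1)`-element sets of values over enough positions contains a formation, hence
realises every order on some `s` of them. A family of VC-dimension less than `s` therefore realises
no such product, and a Sauer–Shelah argument bounds it once each position takes few values.

An entropy argument gives a set `S` of at most half of the positions such that, after fixing the
values on `S`, typical members of the family take popular, hence few possible, values at half of
the remaining positions. There the values are rounded to blocks of about `R` consecutive ones, up to
logarithmic factors; the bound applies to the rounded functions, and induction handles `S` and all
the other positions. Each position thus costs a factor `R` for the rounding and another one for the
Sauer–Shelah bound, so the family has size at most `(2 ^ y) ^ n` with
`y = 2 * log₂ R + O(log log R)`.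
-/

namespace PermVC

open Finset

/-! ### Formations in point sets -/

section Formation

variable {ι : Type*} {r s : ℕ} {A B : Finset (ℕ × ι)} {b : ℕ → ℕ}

/-- The point set `A`, whose points are pairs (row, column), contains an `(r, s)`-formation:
there are `r` columns and a partition of the rows into intervals, the fibres of a monotone
labelling `g`, such that each of these columns has a point in each of the intervals
`0, …, s - 1`. -/
def HasFormation (r s : ℕ) (A : Finset (ℕ × ι)) : Prop :=
  ∃ T : Finset ι, #T = r ∧ ∃ g : ℕ → ℕ, Monotone g ∧
    ∀ c ∈ T, ∀ i < s, ∃ y, g y = i ∧ (y, c) ∈ A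

theorem HasFormation.mono (h : HasFormation r s A) (hAB : A ⊆ B) : HasFormation r s B := by
  obtain ⟨T, hT, g, hg, hpt⟩ := h
  refine ⟨T, hT, g, hg, fun c hc i hi => ?_⟩
  obtain ⟨y, hy, hyA⟩ := hpt c hc i hi
  exact ⟨y, hy, hAB hyA⟩

theorem HasFormation.extend_above {e : ℕ} (hb : Monotone b) (h : HasFormation r (s + 1) B)
    (hBA : B ⊆ A) (hB : ∀ p ∈ B, b p.1 ≤ e)
    (habove : ∀ p ∈ B, ∃ q ∈ A, q.2 = p.2 ∧ e < b q.1) : HasFormation r (s + 2) A := by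
  obtain ⟨T, hT, g, hg, hpt⟩ := h
  refine ⟨T, hT, fun y => if b y ≤ e then min (g y) s else s + 1, ?_, fun c hc i hi => ?_⟩
  · intro y z hyz
    have := hg hyz
    have := hb hyz
    dsimp only
    split_ifs <;> omega
  · rcases Nat.lt_succ_iff_lt_or_eq.1 hi with hi | rfl
    · obtain ⟨y, hy, hyB⟩ := hpt c hc i hi
      have hye : b y ≤ e := hB _ hyB
      exact ⟨y, (if_pos hye).trans (by omega), hBA hyB⟩
    · obtain ⟨y, -, hyB⟩ := hpt c hc 0 s.succ_pos
      obtain ⟨⟨z, _⟩, hzA, rfl, hz⟩ := habove _ hyB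
      exact ⟨z, if_neg hz.not_ge, hzA⟩

theorem HasFormation.extend_below {e : ℕ} (hb : Monotone b) (h : HasFormation r (s + 1) B)
    (hBA : B ⊆ A) (hB : ∀ p ∈ B, e ≤ b p.1)
    (hbelow : ∀ p ∈ B, ∃ q ∈ A, q.2 = p.2 ∧ b q.1 < e) : HasFormation r (s + 2) A := by
  obtain ⟨T, hT, g, hg, hpt⟩ := h
  refine ⟨T, hT, fun y => if e ≤ b y then g y + 1 else 0, ?_, fun c hc i hi => ?_⟩
  · intro y z hyz
    have := hg hyz
    have := hb hyz
    dsimp only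
    split_ifs <;> omega
  · rcases i with _ | i
    · obtain ⟨y, -, hyB⟩ := hpt c hc 0 s.succ_pos
      obtain ⟨⟨z, _⟩, hzA, rfl, hz⟩ := hbelow _ hyB
      exact ⟨z, if_neg hz.not_ge, hzA⟩
    · obtain ⟨y, hy, hyB⟩ := hpt c hc i (by omega)
      have hye : e ≤ b y := hB _ hyB
      exact ⟨y, (if_pos hye).trans (by rw [hy]), hBA hyB⟩

/-- The column of `p` has a point of `A` in a row block before that of `p`, where `b` sends a
row to the index of its block. -/
def HasEarlier (b : ℕ → ℕ) (A : Finset (ℕ × ι)) (p : ℕ × ι) : Prop :=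
  ∃ q ∈ A, q.2 = p.2 ∧ b q.1 < b p.1

/-- The column of `p` has a point of `A` in a row block after that of `p`, where `b` sends a
row to the index of its block. -/
def HasLater (b : ℕ → ℕ) (A : Finset (ℕ × ι)) (p : ℕ × ι) : Prop :=
  ∃ q ∈ A, q.2 = p.2 ∧ b p.1 < b q.1

theorem not_hasFormation_block_of_hasLater (hb : Monotone b) (hA : ¬HasFormation r (s + 2) A)
    (hBA : B ⊆ A) (hlater : ∀ p ∈ B, HasLater b A p) (i : ℕ) :
    ¬HasFormation r (s + 1) (B.filter fun p => b p.1 = i) := fun h =>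
  hA <| h.extend_above hb ((filter_subset _ _).trans hBA) (fun _ hp => (mem_filter.1 hp).2.le)
    fun p hp => (mem_filter.1 hp).2 ▸ hlater p (mem_filter.1 hp).1

theorem not_hasFormation_block_of_hasEarlier (hb : Monotone b)
    (hA : ¬HasFormation r (s + 2) A) (hBA : B ⊆ A) (hearlier : ∀ p ∈ B, HasEarlier b A p)
    (i : ℕ) : ¬HasFormation r (s + 1) (B.filter fun p => b p.1 = i) := fun h =>
  hA <| h.extend_below hb ((filter_subset _ _).trans hBA) (fun _ hp => (mem_filter.1 hp).2.ge)
    fun p hp => (mem_filter.1 hp).2 ▸ hearlier p (mem_filter.1 hp).1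

theorem HasFormation.of_card_row {y : ℕ} (hr : r ≤ #(A.filter fun p => p.1 = y)) :
    HasFormation r 1 (A.filter fun p => p.1 = y) := by
  classical
  have hinj : Set.InjOn Prod.snd (A.filter fun p => p.1 = y : Set (ℕ × ι)) := by
    intro p hp q hq hpq
    exact Prod.ext ((mem_filter.1 hp).2.trans (mem_filter.1 hq).2.symm) hpq
  obtain ⟨T, hT, hTr⟩ := exists_subset_card_eq (hr.trans_eq (card_image_of_injOn hinj).symm)
  refine ⟨T, hTr, fun _ => 0, monotone_const, fun c hc i hi => ?_⟩
  obtain ⟨⟨z, _⟩, hp, rfl⟩ := mem_image.1 (hT hc)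
  exact ⟨z, (Nat.lt_one_iff.1 hi).symm, hp⟩

theorem card_le_of_forall_not_hasFormation_row {a m : ℕ} (hB : ∀ p ∈ B, p.1 ∈ Ico a (a + m))
    (h : ∀ y, ¬HasFormation r 1 (B.filter fun p => p.1 = y)) : #B ≤ r * m := by
  have hrow (y : ℕ) (_ : y ∈ Ico a (a + m)) : #(B.filter fun p => p.1 = y) ≤ r :=
    (not_le.1 fun hr => h y (.of_card_row hr)).le
  simpa using card_le_mul_card_image_of_maps_to hB r hrow

theorem not_hasFormation_block_of_hasEarlier_of_hasLater (hb : Monotone b)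
    (hA : ¬HasFormation r (s + 3) A) (hBA : B ⊆ A) (hearlier : ∀ p ∈ B, HasEarlier b A p)
    (hlater : ∀ p ∈ B, HasLater b A p) (i : ℕ) :
    ¬HasFormation r (s + 1) (B.filter fun p => b p.1 = i) := by
  -- A formation in block `i` is first extended inside the part of `A` that lies in the columns
  -- of `B`, from block `i` on, so that every point there still has an earlier one.
  classical
  intro h
  let A' := A.filter fun p =>
    i ≤ b p.1 ∧ p.2 ∈ (B.filter fun p => b p.1 = i).image Prod.snd
  have hsub : (B.filter fun p => b p.1 = i) ⊆ A' := fun p hp =>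
    mem_filter.2 ⟨hBA (mem_filter.1 hp).1, (mem_filter.1 hp).2.ge, mem_image_of_mem _ hp⟩
  have hA' : HasFormation r (s + 2) A' := by
    refine h.extend_above hb hsub (fun p hp => (mem_filter.1 hp).2.le) fun p hp => ?_
    obtain ⟨hpB, rfl⟩ := mem_filter.1 hp
    obtain ⟨q, hqA, hqp, hlt⟩ := hlater p hpB
    exact ⟨q, mem_filter.2 ⟨hqA, hlt.le, hqp ▸ mem_image_of_mem _ hp⟩, hqp, hlt⟩
  refine hA <| hA'.extend_below hb (filter_subset _ _) (fun p hp => (mem_filter.1 hp).2.1) ?_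
  intro p hp
  obtain ⟨p', hp', hpp'⟩ := mem_image.1 (mem_filter.1 hp).2.2
  obtain ⟨hp'B, rfl⟩ := mem_filter.1 hp'
  obtain ⟨q, hqA, hqp', hlt⟩ := hearlier p' hp'B
  exact ⟨q, hqA, hqp'.trans hpp', hlt⟩

variable [DecidableEq ι]

theorem HasFormation.of_contraction (hb : Monotone b)
    (h : HasFormation r s (A.image (Prod.map b id))) : HasFormation r s A := by
  obtain ⟨T, hT, g, hg, hpt⟩ := h
  refine ⟨T, hT, g ∘ b, hg.comp hb, fun c hc i hi => ?_⟩
  obtain ⟨y, hy, hyA⟩ := hpt c hc i hi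
  obtain ⟨⟨z, _⟩, hzA, hz⟩ := mem_image.1 hyA
  obtain ⟨rfl, rfl⟩ := Prod.mk.inj hz
  exact ⟨z, hy, hzA⟩

theorem card_image_block_le (h : ∀ p ∈ B, ∀ q ∈ B, p.2 = q.2 → b p.1 ≤ b q.1) :
    #(B.image (Prod.map b id)) ≤ #(B.image Prod.snd) := by
  have himage : B.image Prod.snd = (B.image (Prod.map b id)).image Prod.snd := by
    rw [image_image]; rfl
  have hinj : Set.InjOn Prod.snd (B.image (Prod.map b id) : Set (ℕ × ι)) := by
    rw [coe_image]
    rintro _ ⟨p, hp, rfl⟩ _ ⟨q, hq, rfl⟩ hpq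
    exact Prod.ext (le_antisymm (h p hp q hq hpq) (h q hq p hp hpq.symm)) hpq
  rw [himage, card_image_of_injOn hinj]

theorem card_image_block_le_of_not_hasLater (hBA : B ⊆ A) (h : ∀ p ∈ B, ¬HasLater b A p) :
    #(B.image (Prod.map b id)) ≤ #(B.image Prod.snd) :=
  card_image_block_le fun p hp q hq hpq => not_lt.1 fun hlt => h q hq ⟨p, hBA hp, hpq, hlt⟩

theorem card_image_block_le_of_not_hasEarlier (hBA : B ⊆ A)
    (h : ∀ p ∈ B, ¬HasEarlier b A p) :
    #(B.image (Prod.map b id)) ≤ #(B.image Prod.snd) :=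
  card_image_block_le fun p hp q hq hpq =>
    not_lt.1 fun hlt => h p hp ⟨q, hBA hq, hpq.symm, hlt⟩

end Formation

section FormationBound

variable {ι : Type*} [DecidableEq ι] {r s : ℕ} {A B : Finset (ℕ × ι)} {b : ℕ → ℕ}

instance : DecidablePred (HasEarlier b A) := fun p =>
  inferInstanceAs (Decidable (∃ q ∈ A, q.2 = p.2 ∧ b q.1 < b p.1))

instance : DecidablePred (HasLater b A) := fun p =>
  inferInstanceAs (Decidable (∃ q ∈ A, q.2 = p.2 ∧ b p.1 < b q.1))

/-- A point set with no `(r, s)`-formation, contained in `m` consecutive rows and meeting `n`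
columns, has at most `R * (n + X * m)` points. -/
def FormationBound (ι : Type*) [DecidableEq ι] (r s m R X : ℕ) : Prop :=
  ∀ (a : ℕ) (A : Finset (ℕ × ι)), (∀ p ∈ A, p.1 ∈ Ico a (a + m)) → ¬HasFormation r s A →
    #A ≤ R * (#(A.image Prod.snd) + X * m)

theorem FormationBound.mono {m R X R' X' : ℕ} (h : FormationBound ι r s m R X) (hR : R ≤ R')
    (hX : X ≤ X') : FormationBound ι r s m R' X' := fun a A hA hform =>
  (h a A hA hform).trans (by gcongr)

theorem card_le_card_columns_of_not_hasLater (hBA : B ⊆ A) (h : ∀ p ∈ B, ¬HasLater id A p) :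
    #B ≤ #(A.image Prod.snd) := by
  simpa using (card_image_block_le_of_not_hasLater hBA h).trans
    (card_le_card (image_subset_image hBA))

theorem card_le_card_columns_of_not_hasEarlier (hBA : B ⊆ A)
    (h : ∀ p ∈ B, ¬HasEarlier id A p) : #B ≤ #(A.image Prod.snd) := by
  simpa using (card_image_block_le_of_not_hasEarlier hBA h).trans
    (card_le_card (image_subset_image hBA))

theorem formationBound_two (r m : ℕ) : FormationBound ι r 2 m 1 r := by
  intro a A hA hform
  have hlast : #(A.filter fun p => ¬HasLater id A p) ≤ #(A.image Prod.snd) :=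
    card_le_card_columns_of_not_hasLater (filter_subset _ _) fun p hp => (mem_filter.1 hp).2
  have hrest : #(A.filter (HasLater id A)) ≤ r * m :=
    card_le_of_forall_not_hasFormation_row (fun p hp => hA p (filter_subset _ _ hp))
      (not_hasFormation_block_of_hasLater monotone_id hform (filter_subset _ _)
        fun p hp => (mem_filter.1 hp).2)
  have hsplit := card_filter_add_card_filter_not (s := A) (HasLater id A)
  omega

theorem formationBound_three (r m : ℕ) : FormationBound ι r 3 m 2 r := by
  intro a A hA hform
  let later := A.filter (HasLater id A)
  have hlater : later ⊆ A := filter_subset _ _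
  have hlast : #(A.filter fun p => ¬HasLater id A p) ≤ #(A.image Prod.snd) :=
    card_le_card_columns_of_not_hasLater (filter_subset _ _) fun p hp => (mem_filter.1 hp).2
  have hfirst : #(later.filter fun p => ¬HasEarlier id A p) ≤ #(A.image Prod.snd) :=
    card_le_card_columns_of_not_hasEarlier ((filter_subset _ _).trans hlater)
      fun p hp => (mem_filter.1 hp).2
  have hrest : #(later.filter (HasEarlier id A)) ≤ r * m :=
    card_le_of_forall_not_hasFormation_row
      (fun p hp => hA p (hlater (filter_subset _ _ hp)))
      (not_hasFormation_block_of_hasEarlier_of_hasLater monotone_id hform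
        ((filter_subset _ _).trans hlater) (fun p hp => (mem_filter.1 hp).2)
        fun p hp => (mem_filter.1 (mem_filter.1 hp).1).2)
  have hsplit : #later + #(A.filter fun p => ¬HasLater id A p) = #A :=
    card_filter_add_card_filter_not _
  have hsplit' := card_filter_add_card_filter_not (s := later) (HasEarlier id A)
  omega

/-- The index of the block of row `y` when the rows from `a` on are cut into blocks of `g`
consecutive rows. -/
def block (a g y : ℕ) : ℕ := (y - a) / g

theorem monotone_block (a g : ℕ) : Monotone (block a g) := fun _ _ h =>
  Nat.div_le_div_right (Nat.sub_le_sub_right h a)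

theorem block_mem_Ico {a m g y : ℕ} (hg : 0 < g) (hy : y ∈ Ico a (a + m)) :
    y ∈ Ico (a + block a g y * g) (a + block a g y * g + min g (m - block a g y * g)) := by
  have hdiv : g * block a g y + (y - a) % g = y - a := Nat.div_add_mod _ _
  have hmod : (y - a) % g < g := Nat.mod_lt _ hg
  rw [mul_comm] at hdiv
  simp only [mem_Ico] at hy ⊢
  omega

theorem block_lt {a m g k y : ℕ} (hm : m ≤ k * g) (hy : y ∈ Ico a (a + m)) :
    block a g y < k := by
  refine Nat.div_lt_of_lt_mul ?_
  rw [mem_Ico] at hy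
  rw [mul_comm]
  omega

theorem sum_min_sub_mul (g m k : ℕ) : ∑ i ∈ range k, min g (m - i * g) = min (k * g) m := by
  induction k with
  | zero => simp
  | succ k ih =>
    rw [sum_range_succ, ih, Nat.succ_mul]
    omega

theorem sum_card_columns_block_le (b : ℕ → ℕ) (k : ℕ) (hk : ∀ p ∈ B, b p.1 < k) :
    ∑ i ∈ range k, #((B.filter fun p => b p.1 = i).image Prod.snd) ≤
      #(B.image (Prod.map b id)) := by
  have hmaps : ∀ q ∈ B.image (Prod.map b id), q.1 ∈ range k := by
    simpa only [forall_mem_image, mem_range, Prod.map_fst] using hk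
  rw [card_eq_sum_card_fiberwise hmaps]
  refine sum_le_sum fun i _ => card_le_card_of_injOn (fun c => (i, c)) ?_ ?_
  · intro c hc
    obtain ⟨p, hp, rfl⟩ := mem_image.1 hc
    obtain ⟨hpB, rfl⟩ := mem_filter.1 hp
    exact mem_filter.2 ⟨mem_image_of_mem _ hpB, rfl⟩
  · exact fun c _ d _ h => (Prod.mk.inj h).2

theorem card_le_of_forall_not_hasFormation_block {a m g R X : ℕ} (hg : 0 < g)
    (hB : ∀ p ∈ B, p.1 ∈ Ico a (a + m))
    (hform : ∀ i, ¬HasFormation r s (B.filter fun p => block a g p.1 = i))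
    (hbound : ∀ m' ≤ g, FormationBound ι r s m' R X) :
    #B ≤ R * (#(B.image (Prod.map (block a g) id)) + X * m) := by
  have hlt : ∀ p ∈ B, block a g p.1 < m + 1 := fun p hp => by
    have := Nat.div_le_self (p.1 - a) g
    have := mem_Ico.1 (hB p hp)
    unfold block
    omega
  rw [card_eq_sum_card_fiberwise fun p hp => mem_range.2 (hlt p hp)]
  calc ∑ i ∈ range (m + 1), #(B.filter fun p => block a g p.1 = i)
      ≤ ∑ i ∈ range (m + 1), R * (#((B.filter fun p => block a g p.1 = i).image Prod.snd) +
          X * min g (m - i * g)) := by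
        refine sum_le_sum fun i _ => hbound _ (min_le_left _ _) (a + i * g) _ ?_ (hform i)
        intro p hp
        obtain ⟨hpB, rfl⟩ := mem_filter.1 hp
        exact block_mem_Ico hg (hB p hpB)
    _ = R * (∑ i ∈ range (m + 1), #((B.filter fun p => block a g p.1 = i).image Prod.snd) +
          X * min ((m + 1) * g) m) := by
        rw [← mul_sum, sum_add_distrib, ← mul_sum, sum_min_sub_mul]
    _ ≤ _ := by
        gcongr
        · exact sum_card_columns_block_le _ _ hlt
        · exact min_le_right _ _

theorem card_contraction_le {a m g k R X : ℕ} (hA : ∀ p ∈ A, p.1 ∈ Ico a (a + m))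
    (hm : m ≤ k * g) (hform : ¬HasFormation r s A) (hbound : FormationBound ι r s k R X) :
    #(A.image (Prod.map (block a g) id)) ≤ R * (#(A.image Prod.snd) + X * k) := by
  have hwindow : ∀ q ∈ A.image (Prod.map (block a g) id), q.1 ∈ Ico 0 (0 + k) := by
    simp only [forall_mem_image, zero_add, mem_Ico, zero_le, true_and]
    exact fun p hp => block_lt hm (hA p hp)
  have hcard := hbound 0 _ hwindow (mt (HasFormation.of_contraction (monotone_block a g)) hform)
  rwa [image_image] at hcard

theorem card_local_columns_add_card_columns_le (b : ℕ → ℕ) (A : Finset (ℕ × ι)) :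
    #((A.filter fun p => ¬HasEarlier b A p ∧ ¬HasLater b A p).image Prod.snd) +
      #((A.filter fun p => HasEarlier b A p ∨ HasLater b A p).image Prod.snd) ≤
      #(A.image Prod.snd) := by
  rw [← card_union_of_disjoint]
  · exact card_le_card (union_subset (image_subset_image (filter_subset _ _))
      (image_subset_image (filter_subset _ _)))
  rw [disjoint_left]
  intro c hc hc'
  obtain ⟨p, hp, rfl⟩ := mem_image.1 hc
  obtain ⟨p', hp', hcol⟩ := mem_image.1 hc'
  obtain ⟨-, hearlier, hlater⟩ := mem_filter.1 hp
  have hsame (q : ℕ × ι) (hq : q ∈ A) (hqp : q.2 = p.2) : b q.1 = b p.1 :=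
    le_antisymm (not_lt.1 fun h => hlater ⟨q, hq, hqp, h⟩)
      (not_lt.1 fun h => hearlier ⟨q, hq, hqp, h⟩)
  have hp'b := hsame p' (mem_filter.1 hp').1 hcol
  rcases (mem_filter.1 hp').2 with ⟨q, hq, hqp', hlt⟩ | ⟨q, hq, hqp', hlt⟩ <;>
  · have := hsame q hq (hqp'.trans hcol)
    omega

theorem card_eq_local_add_first_add_last_add_middle (b : ℕ → ℕ) (A : Finset (ℕ × ι)) :
    #A = #(A.filter fun p => ¬HasEarlier b A p ∧ ¬HasLater b A p) +
      #(A.filter fun p => ¬HasEarlier b A p ∧ HasLater b A p) +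
      #(A.filter fun p => HasEarlier b A p ∧ ¬HasLater b A p) +
      #(A.filter fun p => HasEarlier b A p ∧ HasLater b A p) := by
  have hE := card_filter_add_card_filter_not (s := A) (HasEarlier b A)
  have hL := card_filter_add_card_filter_not (s := A.filter (HasEarlier b A)) (HasLater b A)
  have hL' := card_filter_add_card_filter_not (s := A.filter fun p => ¬HasEarlier b A p)
    (HasLater b A)
  simp only [filter_filter] at hL hL'
  omega

-- A column inside one block is counted by `h₃`. In a block, the points of the columns starting
-- (ending) there lack an `(r, s + 2)`-formation and those of the columns passing through lack an
-- `(r, s + 1)`-formation; contracting the latter to one row per block creates no formation.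
theorem card_le_of_formationBound_blocks {a m g k R X R₁ X₁ R₂ X₂ R' X' : ℕ} (hg : 0 < g)
    (hm : m ≤ k * g) (h₃ : ∀ m' ≤ g, FormationBound ι r (s + 3) m' R X)
    (h₂ : ∀ m' ≤ g, FormationBound ι r (s + 2) m' R₁ X₁)
    (h₁ : ∀ m' ≤ g, FormationBound ι r (s + 1) m' R₂ X₂)
    (hk : FormationBound ι r (s + 3) k R' X') (hA : ∀ p ∈ A, p.1 ∈ Ico a (a + m))
    (hform : ¬HasFormation r (s + 3) A) :
    ∃ nl ng, nl + ng ≤ #(A.image Prod.snd) ∧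
      #A ≤ R * (nl + X * m) + 2 * (R₁ * (ng + X₁ * m)) +
        R₂ * (R' * (ng + X' * k) + X₂ * m) := by
  let E := HasEarlier (block a g) A
  let L := HasLater (block a g) A
  have hsub (P : ℕ × ι → Prop) [DecidablePred P] : A.filter P ⊆ A := filter_subset P A
  have hmono := monotone_block a g
  have hlocal := card_le_of_forall_not_hasFormation_block (B := A.filter fun p => ¬E p ∧ ¬L p) hg
    (fun p hp => hA p (hsub _ hp))
    (fun i h => hform (h.mono ((filter_subset _ _).trans (hsub _)))) h₃
  have hfirst := card_le_of_forall_not_hasFormation_block (B := A.filter fun p => ¬E p ∧ L p) hg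
    (fun p hp => hA p (hsub _ hp)) (not_hasFormation_block_of_hasLater hmono hform (hsub _)
      fun p hp => (mem_filter.1 hp).2.2) h₂
  have hlast := card_le_of_forall_not_hasFormation_block (B := A.filter fun p => E p ∧ ¬L p) hg
    (fun p hp => hA p (hsub _ hp)) (not_hasFormation_block_of_hasEarlier hmono hform (hsub _)
      fun p hp => (mem_filter.1 hp).2.1) h₂
  have hmiddle := card_le_of_forall_not_hasFormation_block (B := A.filter fun p => E p ∧ L p) hg
    (fun p hp => hA p (hsub _ hp)) (not_hasFormation_block_of_hasEarlier_of_hasLater hmono hform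
      (hsub _) (fun p hp => (mem_filter.1 hp).2.1) fun p hp => (mem_filter.1 hp).2.2) h₁
  have hcontract := card_contraction_le (fun p hp => hA p (hsub (fun p => E p ∧ L p) hp)) hm
    (fun h => hform (h.mono (hsub _))) hk
  have hglobal (P : ℕ × ι → Prop) [DecidablePred P] (hP : ∀ p, P p → E p ∨ L p) :
      #((A.filter P).image Prod.snd) ≤ #((A.filter fun p => E p ∨ L p).image Prod.snd) :=
    card_le_card (image_subset_image (monotone_filter_right A fun p _ => hP p))
  refine ⟨_, _, card_local_columns_add_card_columns_le (block a g) A, ?_⟩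
  rw [card_eq_local_add_first_add_last_add_middle (block a g) A, two_mul, ← add_assoc]
  refine add_le_add (add_le_add (add_le_add (hlocal.trans ?_) (hfirst.trans ?_))
    (hlast.trans ?_)) (hmiddle.trans ?_)
  · gcongr
    exact card_image_block_le_of_not_hasLater (hsub _) fun p hp => (mem_filter.1 hp).2.2
  · gcongr
    exact (card_image_block_le_of_not_hasEarlier (hsub _) fun p hp => (mem_filter.1 hp).2.1).trans
      (hglobal _ fun p hp => .inr hp.2)
  · gcongr
    exact (card_image_block_le_of_not_hasLater (hsub _) fun p hp => (mem_filter.1 hp).2.2).trans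
      (hglobal _ fun p hp => .inl hp.1)
  · gcongr
    exact hcontract.trans (Nat.mul_le_mul_left _
      (Nat.add_le_add_right (hglobal _ fun p hp => .inl hp.1) _))

theorem pow_add_two_add_le (x s : ℕ) : x ^ (s + 2) + 2 * x ^ (s + 1) ≤ (x + 1) ^ (s + 2) := by
  calc x ^ (s + 2) + 2 * x ^ (s + 1) = x ^ s * (x ^ 2 + 2 * x) := by ring
    _ ≤ (x + 1) ^ s * (x + 1) ^ 2 := by gcongr <;> nlinarith
    _ = (x + 1) ^ (s + 2) := by ring

theorem FormationBound.of_blocks {m g k R₁ R₂ R' X' x : ℕ} (hg : 0 < g) (hm : m ≤ k * g)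
    (hx : 0 < x) (hR' : 0 < R') (hX' : X' * k ≤ r * m)
    (h₃ : ∀ m' ≤ g, FormationBound ι r (s + 4) m' (2 * R₁ + R₂ * R') (r * x ^ (s + 2)))
    (h₂ : ∀ m' ≤ g, FormationBound ι r (s + 3) m' R₁ (r * x ^ (s + 1)))
    (h₁ : ∀ m' ≤ g, FormationBound ι r (s + 2) m' R₂ (r * x ^ s))
    (hk : FormationBound ι r (s + 4) k R' X') :
    FormationBound ι r (s + 4) m (2 * R₁ + R₂ * R') (r * (x + 1) ^ (s + 2)) := by
  intro a A hA hform
  obtain ⟨nl, ng, hcols, hcard⟩ := card_le_of_formationBound_blocks hg hm h₃ h₂ h₁ hk hA hform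
  have hcontract : X' * k ≤ r * x ^ (s + 1) * m :=
    hX'.trans (Nat.mul_le_mul_right m (Nat.le_mul_of_pos_right r (by positivity)))
  have hmiddle : r * x ^ s * m ≤ R' * (r * x ^ (s + 1) * m) :=
    calc r * x ^ s * m ≤ r * x ^ (s + 1) * m := by gcongr; omega
      _ ≤ R' * (r * x ^ (s + 1) * m) := Nat.le_mul_of_pos_left _ hR'
  have hthrough : R₂ * (R' * (X' * k) + r * x ^ s * m) ≤ R₂ * R' * (2 * (r * x ^ (s + 1) * m)) :=
    calc R₂ * (R' * (X' * k) + r * x ^ s * m)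
        ≤ R₂ * (R' * (r * x ^ (s + 1) * m) + R' * (r * x ^ (s + 1) * m)) :=
          Nat.mul_le_mul_left _ (add_le_add (Nat.mul_le_mul_left R' hcontract) hmiddle)
      _ = R₂ * R' * (2 * (r * x ^ (s + 1) * m)) := by ring
  calc #A ≤ _ := hcard
    _ = (2 * R₁ + R₂ * R') * (nl + ng + r * x ^ (s + 2) * m) + 2 * R₁ * (r * x ^ (s + 1) * m) +
          R₂ * (R' * (X' * k) + r * x ^ s * m) := by ring
    _ ≤ (2 * R₁ + R₂ * R') * (nl + ng + r * x ^ (s + 2) * m) +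
          2 * (2 * R₁ * (r * x ^ (s + 1) * m)) + R₂ * R' * (2 * (r * x ^ (s + 1) * m)) :=
        add_le_add (Nat.add_le_add_left (Nat.le_mul_of_pos_left _ two_pos) _) hthrough
    _ = (2 * R₁ + R₂ * R') * (nl + ng + r * (x ^ (s + 2) + 2 * x ^ (s + 1)) * m) := by ring
    _ ≤ _ := by
        gcongr
        exact pow_add_two_add_le x s

theorem mul_div_add_one_le {z g m : ℕ} (hz : z * 2 ≤ g) (hgm : g ≤ m) :
    z * (m / g + 1) ≤ m := by
  have hdouble : z * 2 * (m / g + 1) ≤ 2 * m :=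
    calc z * 2 * (m / g + 1) ≤ g * (m / g + 1) := by gcongr
      _ = g * (m / g) + g := by ring
      _ ≤ 2 * m := by linarith [Nat.mul_div_le m g]
  linarith

theorem FormationBound.of_blocks_div {m g z R₁ R₂ R' x : ℕ} (hz : 0 < z) (hzg : z * 2 ≤ g)
    (hgm : g ≤ m) (hx : 0 < x) (hR' : 0 < R')
    (h₃ : ∀ m' ≤ g, FormationBound ι r (s + 4) m' (2 * R₁ + R₂ * R') (r * x ^ (s + 2)))
    (h₂ : ∀ m' ≤ g, FormationBound ι r (s + 3) m' R₁ (r * x ^ (s + 1)))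
    (h₁ : ∀ m' ≤ g, FormationBound ι r (s + 2) m' R₂ (r * x ^ s))
    (hk : ∀ k ≤ m, FormationBound ι r (s + 4) k R' (r * z)) :
    FormationBound ι r (s + 4) m (2 * R₁ + R₂ * R') (r * (x + 1) ^ (s + 2)) := by
  have hgpos : 0 < g := by omega
  have hblocks : m / g + 1 ≤ m := by simpa using mul_div_add_one_le (z := 1) (by omega) hgm
  refine .of_blocks hgpos ?_ hx hR' ?_ h₃ h₂ h₁ (hk _ hblocks)
  · rw [mul_comm]
    exact (Nat.lt_mul_div_succ m hgpos).le
  · rw [mul_assoc]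
    exact Nat.mul_le_mul_left r (mul_div_add_one_le hzg hgm)

end FormationBound

/-! ### The Ackermann-type recursion -/

section Recursion

/-- The coefficient of the number of columns in the bound for `(r, s + 2)`-formations at level
`d` of the inverse Ackermann hierarchy. -/
def coeff : ℕ → ℕ → ℕ
  | 0, _ => 1
  | 1, _ => 2
  | s + 2, 0 => 2 * coeff (s + 1) 0 + 2 * coeff s 0
  | s + 2, d + 1 => 2 * coeff (s + 1) (d + 1) + coeff s (d + 1) * coeff (s + 2) d
  termination_by s d => (s, d)

theorem coeff_zero (d : ℕ) : coeff 0 d = 1 := by rw [coeff]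

theorem coeff_one (d : ℕ) : coeff 1 d = 2 := by rw [coeff]

theorem coeff_add_two_zero (s : ℕ) :
    coeff (s + 2) 0 = 2 * coeff (s + 1) 0 + coeff s 0 * 2 := by
  rw [coeff, mul_comm (coeff s 0)]

theorem coeff_add_two_succ (s d : ℕ) :
    coeff (s + 2) (d + 1) =
      2 * coeff (s + 1) (d + 1) + coeff s (d + 1) * coeff (s + 2) d := by
  rw [coeff]

theorem coeff_pos (s d : ℕ) : 0 < coeff s d := by
  induction s using Nat.twoStepInduction generalizing d with
  | zero => simp only [coeff_zero, zero_lt_one]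
  | one => simp only [coeff_one, two_pos]
  | more s _ ih =>
    have := ih d
    cases d with
    | zero => rw [coeff_add_two_zero]; omega
    | succ d => rw [coeff_add_two_succ]; omega

theorem coeff_le_succ (s d : ℕ) : coeff s d ≤ coeff s (d + 1) := by
  match s with
  | 0 => simp only [coeff_zero, le_refl]
  | 1 => simp only [coeff_one, le_refl]
  | s + 2 =>
    rw [coeff_add_two_succ]
    exact le_add_left (Nat.le_mul_of_pos_left _ (coeff_pos s (d + 1)))

variable (ι : Type*) [DecidableEq ι]

theorem formationBound_trivial (r s m : ℕ) : FormationBound ι r s m m 0 := by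
  intro a A hA _
  have hsub : A ⊆ Ico a (a + m) ×ˢ A.image Prod.snd := fun p hp =>
    mem_product.2 ⟨hA p hp, mem_image_of_mem _ hp⟩
  simpa using card_le_card hsub

theorem formationBound_of_le_two_pow (r k s m : ℕ) (hm : m ≤ 2 ^ k) :
    FormationBound ι r (s + 2) m (coeff s 0) (r * (k + 1) ^ s) := by
  induction k generalizing s m with
  | zero =>
    exact (formationBound_trivial ι r _ m).mono (hm.trans (coeff_pos s 0)) (Nat.zero_le _)
  | succ k ih =>
    match s with
    | 0 => simpa only [coeff_zero, pow_zero, mul_one] using formationBound_two r m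
    | 1 =>
      rw [coeff_one]
      exact (formationBound_three r m).mono le_rfl (Nat.le_mul_of_pos_right r (by positivity))
    | s + 2 =>
      have hblocks := FormationBound.of_blocks (ι := ι) (r := r) (s := s) (m := m) (k := 2)
        (x := k + 1) (X' := 0) (Nat.two_pow_pos k) (by omega) k.succ_pos two_pos (by omega)
        (fun m' hm' => coeff_add_two_zero s ▸ ih (s + 2) m' hm') (ih (s + 1)) (ih s)
        (formationBound_trivial ι r _ 2)
      rwa [← coeff_add_two_zero] at hblocks

/-- An Ackermann-type function bounding from above the arguments at which the `(d + 1)`-st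
function of the inverse Ackermann hierarchy is at most `k`; see `le_alphaHierInv`. -/
def alphaHierInv : ℕ → ℕ → ℕ
  | 0, k => 2 * k + 1
  | _ + 1, 0 => 1
  | d + 1, k + 1 => alphaHierInv d (alphaHierInv (d + 1) k)
  termination_by d k => (d, k)

theorem alphaHierInv_zero (k : ℕ) : alphaHierInv 0 k = 2 * k + 1 := by rw [alphaHierInv]

theorem alphaHierInv_apply_zero (d : ℕ) : alphaHierInv d 0 = 1 := by cases d <;> rw [alphaHierInv]

theorem alphaHierInv_succ_succ (d k : ℕ) :
    alphaHierInv (d + 1) (k + 1) = alphaHierInv d (alphaHierInv (d + 1) k) := by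
  rw [alphaHierInv]

theorem alphaHierInv_pos (d k : ℕ) : 0 < alphaHierInv d k := by
  induction d generalizing k with
  | zero => rw [alphaHierInv_zero]; omega
  | succ d ih =>
    cases k with
    | zero => rw [alphaHierInv_apply_zero]; exact one_pos
    | succ k => rw [alphaHierInv_succ_succ]; exact ih _

-- The blocks have `(alphaHierInv (d + 1) k + c + 1) ^ P` rows. This exceeds twice the `s`-th
-- power of the same base, so the number of blocks absorbs the row coefficient at level `d`.
theorem formationBound_of_le_alphaHierInv_pow {r c P : ℕ}
    (hcP : ∀ k, (2 * k + 1 + (c + 1)) ^ P ≤ 2 ^ (k + c)) (d k s m : ℕ) (hs : s < P)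
    (hm : m ≤ (alphaHierInv d k + (c + 1)) ^ P) :
    FormationBound ι r (s + 2) m (coeff s d) (r * (k + c + 1) ^ s) := by
  induction d generalizing k s m with
  | zero =>
    rw [alphaHierInv_zero] at hm
    exact formationBound_of_le_two_pow ι r (k + c) s m (hm.trans (hcP k))
  | succ d ihd =>
    induction k generalizing s m with
    | zero =>
      rw [alphaHierInv_apply_zero] at hm
      exact (ihd 0 s m hs (by rwa [alphaHierInv_apply_zero])).mono (coeff_le_succ s d) le_rfl
    | succ k ihk =>
      match s with
      | 0 => simpa only [coeff_zero, pow_zero, mul_one] using formationBound_two r m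
      | 1 =>
        rw [coeff_one]
        exact (formationBound_three r m).mono le_rfl (Nat.le_mul_of_pos_right r (by positivity))
      | s + 2 =>
        rw [alphaHierInv_succ_succ] at hm
        set K := alphaHierInv (d + 1) k
        have hK : 0 < K := alphaHierInv_pos (d + 1) k
        have hpow : (K + (c + 1)) ^ (s + 2) * 2 ≤ (K + (c + 1)) ^ P :=
          calc (K + (c + 1)) ^ (s + 2) * 2 ≤ (K + (c + 1)) ^ (s + 2) * (K + (c + 1)) := by
                gcongr; omega
            _ = (K + (c + 1)) ^ (s + 3) := (pow_succ _ _).symm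
            _ ≤ (K + (c + 1)) ^ P := Nat.pow_le_pow_right (by omega) hs
        rcases le_total m ((K + (c + 1)) ^ P) with hmg | hgm
        · exact (ihk (s + 2) m hs hmg).mono le_rfl (by gcongr; omega)
        · rw [coeff_add_two_succ, show k + 1 + c + 1 = k + c + 1 + 1 by omega]
          exact .of_blocks_div (by positivity) hpow hgm (k + c).succ_pos (coeff_pos _ _)
            (fun m' h => coeff_add_two_succ s d ▸ ihk (s + 2) m' hs h)
            (fun m' h => ihk (s + 1) m' (by omega) h) (fun m' h => ihk s m' (by omega) h)
            (fun k' h => ihd K (s + 2) k' hs (h.trans hm))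

theorem exists_forall_pow_le_two_pow (P : ℕ) :
    ∃ c, ∀ k, (2 * k + 1 + (c + 1)) ^ P ≤ 2 ^ (k + c) := by
  have hlim := tendsto_pow_const_div_const_pow_of_one_lt P (one_lt_two (α := ℝ))
  obtain ⟨N, hN⟩ := Filter.eventually_atTop.1
    (hlim.eventually (gt_mem_nhds (show (0 : ℝ) < 1 / 4 ^ P by positivity)))
  refine ⟨N + 1, fun k => ?_⟩
  have hlt := hN (k + (N + 1)) (by omega)
  rw [div_lt_div_iff₀ (by positivity) (by positivity), one_mul] at hlt
  calc (2 * k + 1 + (N + 1 + 1)) ^ P ≤ (4 * (k + (N + 1))) ^ P := by gcongr; omega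
    _ = (k + (N + 1)) ^ P * 4 ^ P := by rw [mul_pow, mul_comm]
    _ ≤ 2 ^ (k + (N + 1)) := by exact_mod_cast hlt.le

end Recursion

/-! ### The inverse Ackermann function -/

section InverseAckermann

theorem iterCount_le_sub_one {f : ℕ → ℕ} (hf : ∀ y, 2 ≤ y → f y < y) (fuel m : ℕ) :
    iterCount f fuel m ≤ m - 1 := by
  induction fuel generalizing m with
  | zero => exact Nat.zero_le _
  | succ n ih =>
    rw [iterCount]
    split_ifs with hm
    · exact Nat.zero_le _
    · have := ih (f m)
      have := hf m (by omega)
      omega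

theorem iterCount_le_sub_two {f : ℕ → ℕ} (hf : ∀ y, 2 ≤ y → f y < y)
    (hf' : ∀ y, 4 ≤ y → f y ≤ y - 2) (fuel m : ℕ) (hm : 4 ≤ m) :
    iterCount f fuel m ≤ m - 2 := by
  cases fuel with
  | zero => exact Nat.zero_le _
  | succ n =>
    rw [iterCount, if_neg (by omega)]
    have := iterCount_le_sub_one hf n (f m)
    have := hf' m hm
    omega

theorem alphaHier_one (m : ℕ) : alphaHier 1 m = (m + 1) / 2 := rfl

theorem alphaHier_add_two (d m : ℕ) :
    alphaHier (d + 2) m = iterCount (alphaHier (d + 1)) m m := rfl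

theorem alphaHier_lt (d m : ℕ) (hm : 2 ≤ m) : alphaHier (d + 1) m < m := by
  induction d generalizing m with
  | zero => rw [alphaHier_one]; omega
  | succ d ih =>
    have := iterCount_le_sub_one ih m m
    rw [alphaHier_add_two]
    omega

theorem alphaHier_le_sub_two (d m : ℕ) (hm : 4 ≤ m) : alphaHier (d + 1) m ≤ m - 2 := by
  induction d generalizing m with
  | zero => rw [alphaHier_one]; omega
  | succ d ih => exact iterCount_le_sub_two (alphaHier_lt d) ih m m hm

theorem alphaHier_add_two_le (d m : ℕ) :
    alphaHier (d + 2) m ≤ max 3 (alphaHier (d + 1) m - 1) := by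
  rw [alphaHier_add_two]
  cases m with
  | zero => exact Nat.zero_le _
  | succ m =>
    rw [iterCount]
    split_ifs
    · exact Nat.zero_le _
    · have := iterCount_le_sub_one (alphaHier_lt d) m (alphaHier (d + 1) (m + 1))
      have := iterCount_le_sub_two (alphaHier_lt d) (alphaHier_le_sub_two d) m
        (alphaHier (d + 1) (m + 1))
      omega

theorem alphaHier_le_max (d m : ℕ) : alphaHier (d + 1) m ≤ max 3 (m - d) := by
  induction d with
  | zero => rw [alphaHier_one]; omega
  | succ d ih =>
    have := alphaHier_add_two_le d m
    rw [add_assoc d 1 1, one_add_one_eq_two]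
    omega

theorem invAck_mem (m : ℕ) : 1 ≤ invAck m ∧ alphaHier (invAck m) m ≤ 3 :=
  Nat.sInf_mem (s := {k | 1 ≤ k ∧ alphaHier k m ≤ 3})
    ⟨m + 1, by omega, by simpa using alphaHier_le_max m m⟩

theorem le_alphaHierInv {d k n : ℕ} (h : alphaHier (d + 1) n ≤ k) : n ≤ alphaHierInv d k := by
  induction d generalizing k n with
  | zero =>
    rw [alphaHier_one] at h
    rw [alphaHierInv_zero]
    omega
  | succ d ihd =>
    suffices hfuel : ∀ fuel m k, m ≤ fuel → iterCount (alphaHier (d + 1)) fuel m ≤ k →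
        m ≤ alphaHierInv (d + 1) k from hfuel n n k le_rfl h
    intro fuel
    induction fuel with
    | zero => intro m k hm _; omega
    | succ fuel ih =>
      intro m k hm hk
      rw [iterCount] at hk
      split_ifs at hk with hm1
      · exact hm1.trans (alphaHierInv_pos _ _)
      · obtain ⟨k, rfl⟩ : ∃ k', k = k' + 1 := ⟨k - 1, by omega⟩
        have := alphaHier_lt d m (by omega)
        rw [alphaHierInv_succ_succ]
        exact ihd (ih _ k (by omega) (by omega))

theorem exists_formationBound_invAck (r s : ℕ) : ∃ X, ∀ (ι : Type*) [DecidableEq ι] (n m : ℕ),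
    m ≤ n → FormationBound ι r (s + 2) m (coeff s (invAck n - 1)) X := by
  obtain ⟨c, hc⟩ := exists_forall_pow_le_two_pow (s + 1)
  refine ⟨r * (3 + c + 1) ^ s, fun ι _ n m hm => ?_⟩
  obtain ⟨hpos, hthree⟩ := invAck_mem n
  obtain ⟨d, hd⟩ := Nat.exists_eq_add_of_le' hpos
  rw [hd] at hthree ⊢
  have hn : n ≤ alphaHierInv d 3 := le_alphaHierInv hthree
  refine formationBound_of_le_alphaHierInv_pow ι hc d 3 s m s.lt_succ_self ?_
  calc m ≤ alphaHierInv d 3 + (c + 1) := by omega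
    _ ≤ (alphaHierInv d 3 + (c + 1)) ^ (s + 1) := Nat.le_self_pow s.succ_ne_zero _

end InverseAckermann

/-! ### A Sauer–Shelah bound for boxes -/

section BoxShattering

variable {ι α : Type*} {F : Finset (ι → α)} {U : Finset ι} {A : Finset α} {j : ι} {b D : ℕ}

/-- The family `F` realises, on some `D`-element subset `T` of `U`, all elements of a product
`∏ i ∈ T, Θ i` of `b`-element sets. -/
def BoxShatters (F : Finset (ι → α)) (U : Finset ι) (b D : ℕ) : Prop :=
  ∃ T ⊆ U, #T = D ∧ ∃ Θ : ι → Finset α, (∀ i ∈ T, #(Θ i) = b) ∧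
    ∀ σ : ι → α, (∀ i ∈ T, σ i ∈ Θ i) → ∃ f ∈ F, ∀ i ∈ T, f i = σ i

theorem boxShatters_zero (hF : F.Nonempty) : BoxShatters F U b 0 := by
  obtain ⟨f, hf⟩ := hF
  exact ⟨∅, empty_subset U, card_empty, fun _ => ∅, by simp, fun _ _ => ⟨f, hf, by simp⟩⟩

section Fibres

variable [DecidableEq ι] [DecidableEq (ι → α)] [Zero α]

/-- The functions which result from members of `F` by erasing the value at `j` and which
extend to members of `F` by each of the values in `Θ` at `j`. -/
def commonFibre (F : Finset (ι → α)) (j : ι) (Θ : Finset α) : Finset (ι → α) :=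
  (F.image (Function.update · j 0)).filter fun q => ∀ θ ∈ Θ, Function.update q j θ ∈ F

theorem BoxShatters.of_image_update (hj : j ∉ U)
    (h : BoxShatters (F.image (Function.update · j 0)) U b D) :
    BoxShatters F (insert j U) b D := by
  obtain ⟨T, hTU, hT, Θ, hΘ, hσ⟩ := h
  refine ⟨T, hTU.trans (subset_insert j U), hT, Θ, hΘ, fun σ hσΘ => ?_⟩
  obtain ⟨q, hq, hqσ⟩ := hσ σ hσΘ
  obtain ⟨f, hf, rfl⟩ := mem_image.1 hq
  refine ⟨f, hf, fun i hi => ?_⟩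
  rw [← hqσ i hi, Function.update_of_ne (ne_of_mem_of_not_mem (hTU hi) hj)]

theorem BoxShatters.of_commonFibre {Θ : Finset α} (hj : j ∉ U) (hΘ : #Θ = b)
    (h : BoxShatters (commonFibre F j Θ) U b D) : BoxShatters F (insert j U) b (D + 1) := by
  obtain ⟨T, hTU, hT, Θ', hΘ', hσ⟩ := h
  have hjT : j ∉ T := fun hjT => hj (hTU hjT)
  have hne : ∀ i ∈ T, i ≠ j := fun i hi => ne_of_mem_of_not_mem hi hjT
  refine ⟨insert j T, insert_subset_insert j hTU, by rw [card_insert_of_notMem hjT, hT],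
    Function.update Θ' j Θ, ?_, fun σ hσΘ => ?_⟩
  · rw [forall_mem_insert, Function.update_self]
    exact ⟨hΘ, fun i hi => by rw [Function.update_of_ne (hne i hi), hΘ' i hi]⟩
  · rw [forall_mem_insert, Function.update_self] at hσΘ
    obtain ⟨q, hq, hqσ⟩ := hσ σ fun i hi => by
      simpa only [Function.update_of_ne (hne i hi)] using hσΘ.2 i hi
    refine ⟨Function.update q j (σ j), (mem_filter.1 hq).2 _ hσΘ.1, ?_⟩
    rw [forall_mem_insert, Function.update_self]
    exact ⟨rfl, fun i hi => by rw [Function.update_of_ne (hne i hi), hqσ i hi]⟩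

theorem card_eq_sum_card_fibre (hA : ∀ f ∈ F, f j ∈ A) :
    #F = ∑ q ∈ F.image (Function.update · j 0),
      #(A.filter fun θ => Function.update q j θ ∈ F) := by
  rw [card_eq_sum_card_image (Function.update · j 0) F]
  refine sum_congr rfl fun q hq => ?_
  have hqj : Function.update q j 0 = q := by
    obtain ⟨f, -, rfl⟩ := mem_image.1 hq
    exact Function.update_idem 0 0 f
  refine card_bij' (fun f _ => f j) (fun θ _ => Function.update q j θ) ?_ ?_ ?_ ?_
  · intro f hf
    obtain ⟨hfF, rfl⟩ := mem_filter.1 hf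
    rw [mem_filter, Function.update_idem, Function.update_eq_self]
    exact ⟨hA f hfF, hfF⟩
  · intro θ hθ
    exact mem_filter.2 ⟨(mem_filter.1 hθ).2, by rw [Function.update_idem, hqj]⟩
  · intro f hf
    rw [← (mem_filter.1 hf).2, Function.update_idem, Function.update_eq_self]
  · exact fun θ _ => Function.update_self j θ q

theorem sum_choose_card_fibre (F : Finset (ι → α)) (j : ι) (A : Finset α) (b : ℕ) :
    ∑ q ∈ F.image (Function.update · j 0),
        (#(A.filter fun θ => Function.update q j θ ∈ F)).choose b =
      ∑ Θ ∈ A.powersetCard b, #(commonFibre F j Θ) := by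
  have hfibre : ∀ q : ι → α, (#(A.filter fun θ => Function.update q j θ ∈ F)).choose b =
      #((A.powersetCard b).filter fun Θ => ∀ θ ∈ Θ, Function.update q j θ ∈ F) := by
    intro q
    rw [← card_powersetCard]
    congr 1
    ext Θ
    simp only [mem_powersetCard, mem_filter, subset_iff]
    grind
  simp_rw [hfibre, commonFibre, card_filter]
  exact sum_comm

theorem le_mul_one_add_choose (hb : 0 < b) (a : ℕ) : a ≤ b * (1 + a.choose b) := by
  induction a with
  | zero => exact Nat.zero_le _
  | succ a ih =>
    obtain ⟨b, rfl⟩ := Nat.exists_eq_add_of_le' hb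
    rcases lt_or_ge a (b + 1) with hab | hba
    · nlinarith
    · have := Nat.choose_pos (show b ≤ a by omega)
      rw [Nat.choose_succ_succ']
      nlinarith

theorem card_le_mul_card_image_add_sum_card_commonFibre (hb : 0 < b) (hA : ∀ f ∈ F, f j ∈ A) :
    #F ≤ b * (#(F.image (Function.update · j 0)) +
      ∑ Θ ∈ A.powersetCard b, #(commonFibre F j Θ)) := by
  rw [card_eq_sum_card_fibre hA, ← sum_choose_card_fibre, card_eq_sum_ones,
    ← sum_add_distrib, mul_sum]
  exact sum_le_sum fun q _ => le_mul_one_add_choose hb _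

theorem image_update_eq_zero (hF₀ : ∀ f ∈ F, ∀ i ∉ insert j U, f i = 0) :
    ∀ q ∈ F.image (Function.update · j 0), ∀ i ∉ U, q i = 0 :=
  forall_mem_image.2 fun f hf i hi => by
    rcases eq_or_ne i j with rfl | hij
    · exact Function.update_self i 0 f
    · rw [Function.update_of_ne hij, hF₀ f hf i (by simp [hij, hi])]

theorem image_update_mem {As : ι → Finset α} (hj : j ∉ U) (hF : ∀ f ∈ F, ∀ i ∈ U, f i ∈ As i) :
    ∀ q ∈ F.image (Function.update · j 0), ∀ i ∈ U, q i ∈ As i :=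
  forall_mem_image.2 fun f hf i hi => by
    rw [Function.update_of_ne (ne_of_mem_of_not_mem hi hj)]
    exact hF f hf i hi

end Fibres

theorem card_mul_pow_le_of_not_boxShatters [Zero α] {V : ℕ} {As : ι → Finset α} (hb : 0 < b)
    (hV : 0 < V) (hF₀ : ∀ f ∈ F, ∀ i ∉ U, f i = 0) (hF : ∀ f ∈ F, ∀ i ∈ U, f i ∈ As i)
    (hAs : ∀ i ∈ U, #(As i) ≤ V) (h : ¬BoxShatters F U b D) :
    #F * V ^ b ≤ (2 * b) ^ #U * V ^ (b * D) := by
  classical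
  induction U using Finset.induction_on generalizing D F with
  | empty =>
    rcases F.eq_empty_or_nonempty with rfl | hne
    · simp
    have hD : 0 < D := Nat.pos_of_ne_zero fun hD => h (hD ▸ boxShatters_zero hne)
    have hcard : #F ≤ 1 := card_le_one.2 fun f hf f' hf' =>
      funext fun i => (hF₀ f hf i (notMem_empty i)).trans (hF₀ f' hf' i (notMem_empty i)).symm
    calc #F * V ^ b ≤ 1 * V ^ (b * D) :=
          Nat.mul_le_mul hcard (Nat.pow_le_pow_right hV (Nat.le_mul_of_pos_right b hD))
      _ = (2 * b) ^ #(∅ : Finset ι) * V ^ (b * D) := by rw [card_empty, pow_zero]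
  | insert j U hj ih =>
    rw [forall_mem_insert] at hAs
    have hFA : ∀ f ∈ F, ∀ i ∈ U, f i ∈ As i := fun f hf i hi => hF f hf i (mem_insert_of_mem hi)
    rcases F.eq_empty_or_nonempty with rfl | hne
    · simp
    obtain ⟨D, rfl⟩ : ∃ D', D = D' + 1 :=
      Nat.exists_eq_succ_of_ne_zero fun hD => h (hD ▸ boxShatters_zero hne)
    have hfibre : ∀ Θ ∈ (As j).powersetCard b,
        #(commonFibre F j Θ) * V ^ b ≤ (2 * b) ^ #U * V ^ (b * D) := fun Θ hΘ =>
      ih (fun q hq => image_update_eq_zero hF₀ q (mem_filter.1 hq).1)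
        (fun q hq => image_update_mem hj hFA q (mem_filter.1 hq).1) hAs.2
        fun hsh => h (hsh.of_commonFibre hj (mem_powersetCard.1 hΘ).2)
    have hchoose : #((As j).powersetCard b) ≤ V ^ b := by
      rw [card_powersetCard]
      exact (Nat.choose_le_pow _ _).trans (Nat.pow_le_pow_left hAs.1 b)
    calc #F * V ^ b
        ≤ b * (#(F.image (Function.update · j 0)) +
            ∑ Θ ∈ (As j).powersetCard b, #(commonFibre F j Θ)) * V ^ b := by
          gcongr
          exact card_le_mul_card_image_add_sum_card_commonFibre hb fun f hf =>
            hF f hf j (mem_insert_self j U)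
      _ = b * (#(F.image (Function.update · j 0)) * V ^ b +
            ∑ Θ ∈ (As j).powersetCard b, #(commonFibre F j Θ) * V ^ b) := by
          rw [← sum_mul]; ring
      _ ≤ b * ((2 * b) ^ #U * V ^ (b * (D + 1)) + V ^ b * ((2 * b) ^ #U * V ^ (b * D))) :=
          Nat.mul_le_mul_left b <| Nat.add_le_add
            (ih (image_update_eq_zero hF₀) (image_update_mem hj hFA) hAs.2
              fun hsh => h (hsh.of_image_update hj))
            ((sum_le_card_nsmul _ _ _ hfibre).trans (Nat.mul_le_mul_right _ hchoose))
      _ = (2 * b) ^ #(insert j U) * V ^ (b * (D + 1)) := by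
          rw [card_insert_of_notMem hj]; ring

end BoxShattering

/-! ### Order shattering -/

section OrderShattering

variable {ι : Type*} {F : Finset (ι → ℕ)} {T U : Finset ι} {Θ : ι → Finset ℕ} {s : ℕ}

/-- Every linear preorder of `T`, encoded by a function `e`, is refined by the order of the
values of some member of `F`. -/
def OrderShatters (F : Finset (ι → ℕ)) (T : Finset ι) : Prop :=
  ∀ e : ι → ℕ, ∃ f ∈ F, ∀ i ∈ T, ∀ j ∈ T, e i < e j → f i < f j

/-- No `s`-element subset of `U` is order-shattered by `F`. -/
def OrderVCDimLT (F : Finset (ι → ℕ)) (U : Finset ι) (s : ℕ) : Prop :=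
  ∀ T ⊆ U, #T = s → ¬OrderShatters F T

variable [DecidableEq ι]

/-- The product `∏ i ∈ T, Θ i`, drawn as a set of points (value, coordinate). -/
def boxPoints (T : Finset ι) (Θ : ι → Finset ℕ) : Finset (ℕ × ι) :=
  T.biUnion fun i => Θ i ×ˢ {i}

theorem mem_boxPoints {p : ℕ × ι} : p ∈ boxPoints T Θ ↔ p.2 ∈ T ∧ p.1 ∈ Θ p.2 := by
  simp only [boxPoints, mem_biUnion, mem_product, mem_singleton]
  exact ⟨fun ⟨_, hi, hp, hpi⟩ => hpi ▸ ⟨hi, hp⟩, fun ⟨hp₂, hp₁⟩ => ⟨p.2, hp₂, hp₁, rfl⟩⟩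

theorem card_boxPoints (T : Finset ι) (Θ : ι → Finset ℕ) :
    #(boxPoints T Θ) = ∑ i ∈ T, #(Θ i) := by
  rw [boxPoints, card_biUnion]
  · simp only [card_product, card_singleton, mul_one]
  · intro i _ j _ hij
    exact disjoint_product.2 (Or.inr (disjoint_singleton.2 hij))

theorem card_image_snd_boxPoints_le (T : Finset ι) (Θ : ι → Finset ℕ) :
    #((boxPoints T Θ).image Prod.snd) ≤ #T :=
  card_le_card (image_subset_iff.2 fun _ hp => (mem_boxPoints.1 hp).1)

-- Given the order `e`, a column of rank `k` takes its value in the `k`-th row interval.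
theorem HasFormation.exists_orderShatters (h : HasFormation s s (boxPoints T Θ)) (hs : 0 < s)
    (hΘ : ∀ i ∈ T, (Θ i).Nonempty)
    (hF : ∀ σ : ι → ℕ, (∀ i ∈ T, σ i ∈ Θ i) → ∃ f ∈ F, ∀ i ∈ T, f i = σ i) :
    ∃ T' ⊆ T, #T' = s ∧ OrderShatters F T' := by
  obtain ⟨T', hT', g, hg, hpt⟩ := h
  choose! y hyg hyM using hpt
  choose! θ hθ using hΘ
  have hT'T : T' ⊆ T := fun c hc => (mem_boxPoints.1 (hyM c hc 0 hs)).1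
  refine ⟨T', hT'T, hT', fun e => ?_⟩
  let rank : ι → ℕ := fun c => #(T'.filter fun k => e k < e c)
  have hrank : ∀ c ∈ T', rank c < s := fun c hc =>
    hT' ▸ card_lt_card (filter_ssubset.2 ⟨c, hc, lt_irrefl _⟩)
  have hrank_lt : ∀ i ∈ T', ∀ j, e i < e j → rank i < rank j := fun i hi j hij =>
    card_lt_card <| (ssubset_iff_of_subset (monotone_filter_right T' fun k _ hk =>
      hk.trans hij)).2 ⟨i, mem_filter.2 ⟨hi, hij⟩, fun hmem => (mem_filter.1 hmem).2.false⟩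
  obtain ⟨f, hf, hfσ⟩ := hF (fun i => if i ∈ T' then y i (rank i) else θ i) fun i hi => by
    split_ifs with hiT'
    · exact (mem_boxPoints.1 (hyM i hiT' _ (hrank i hiT'))).2
    · exact hθ i hi
  refine ⟨f, hf, fun i hi j hj hij => ?_⟩
  rw [hfσ i (hT'T hi), hfσ j (hT'T hj), if_pos hi, if_pos hj]
  refine hg.reflect_lt ?_
  rw [hyg i hi _ (hrank i hi), hyg j hj _ (hrank j hj)]
  exact hrank_lt i hi j hij

theorem FormationBound.not_boxShatters {m R X : ℕ} (hbound : FormationBound ι s s m R X)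
    (hs : 0 < s) (hm : ∀ f ∈ F, ∀ i ∈ U, f i < m) (hdim : OrderVCDimLT F U s) :
    ¬BoxShatters F U (2 * R + 1) (X * m + 1) := by
  rintro ⟨T, hTU, hT, Θ, hΘ, hF⟩
  have hne : ∀ i ∈ T, (Θ i).Nonempty := fun i hi =>
    card_pos.1 (hΘ i hi ▸ Nat.succ_pos (2 * R))
  have hrow : ∀ p ∈ boxPoints T Θ, p.1 ∈ Ico 0 (0 + m) := by
    rintro ⟨y, c⟩ hp
    obtain ⟨hc, hy⟩ := mem_boxPoints.1 hp
    choose! θ hθ using hne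
    obtain ⟨f, hf, hfσ⟩ := hF (Function.update θ c y) fun i hi => by
      rcases eq_or_ne i c with rfl | hic
      · rwa [Function.update_self]
      · rw [Function.update_of_ne hic]
        exact hθ i hi
    have hfc : f c = y := (hfσ c hc).trans (Function.update_self c y θ)
    exact mem_Ico.2 ⟨Nat.zero_le y, by rw [zero_add, ← hfc]; exact hm f hf c (hTU hc)⟩
  have hform : HasFormation s s (boxPoints T Θ) := by
    by_contra hnot
    have hcard := hbound 0 _ hrow hnot
    rw [card_boxPoints, sum_congr rfl hΘ, sum_const, smul_eq_mul, hT] at hcard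
    have hcol := card_image_snd_boxPoints_le T Θ
    rw [hT] at hcol
    nlinarith [Nat.mul_le_mul_left R hcol]
  obtain ⟨T', hT'T, hT', hsh⟩ := hform.exists_orderShatters hs hne hF
  exact hdim T' (hT'T.trans hTU) hT' hsh

theorem FormationBound.card_le {m R X V : ℕ} (hbound : FormationBound ι s s m R X)
    (hs : 0 < s) (hV : 0 < V) {As : ι → Finset ℕ} (hF₀ : ∀ f ∈ F, ∀ i ∉ U, f i = 0)
    (hm : ∀ f ∈ F, ∀ i ∈ U, f i < m) (hF : ∀ f ∈ F, ∀ i ∈ U, f i ∈ As i)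
    (hAs : ∀ i ∈ U, #(As i) ≤ V) (hdim : OrderVCDimLT F U s) :
    #F ≤ (2 * (2 * R + 1)) ^ #U * V ^ ((2 * R + 1) * (X * m)) := by
  have hcard := card_mul_pow_le_of_not_boxShatters (b := 2 * R + 1) (2 * R).succ_pos hV hF₀ hF
    hAs (hbound.not_boxShatters hs hm hdim)
  refine Nat.le_of_mul_le_mul_right (hcard.trans_eq ?_) (pow_pos hV (2 * R + 1))
  ring

end OrderShattering

/-! ### Families of bijections -/

section BijectiveFamilies

variable {ι : Type*} {F F' : Finset (ι → ℕ)} {S T U : Finset ι} {I : Finset ℕ} {s Y : ℕ}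
  {f q q' : ι → ℕ}

/-- Every member of `F` vanishes off `U` and maps `U` bijectively onto `I`. -/
structure BijectiveFamily (F : Finset (ι → ℕ)) (U : Finset ι) (I : Finset ℕ) : Prop where
  eq_zero : ∀ f ∈ F, ∀ i ∉ U, f i = 0
  bijOn : ∀ f ∈ F, Set.BijOn f U I

theorem BijectiveFamily.card_eq (hF : BijectiveFamily F U I) (hne : F.Nonempty) : #U = #I := by
  obtain ⟨f, hf⟩ := hne
  exact (hF.bijOn f hf).finsetCard_eq

theorem OrderVCDimLT.of_order_agree (h : OrderVCDimLT F U s) (hSU : S ⊆ U)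
    (hF' : ∀ g ∈ F', ∃ f ∈ F, ∀ i ∈ S, ∀ j ∈ S, g i < g j → f i < f j) :
    OrderVCDimLT F' S s := fun T hTS hT hsh =>
  h T (hTS.trans hSU) hT fun e =>
    let ⟨g, hg, hge⟩ := hsh e
    let ⟨f, hf, hfg⟩ := hF' g hg
    ⟨f, hf, fun i hi j hj hij => hfg i (hTS hi) j (hTS hj) (hge i hi j hj hij)⟩

theorem card_le_pow_of_forall_mem {B : ι → Finset ℕ} {w : ℕ} (hF₀ : ∀ f ∈ F, ∀ i ∉ U, f i = 0)
    (hF : ∀ f ∈ F, ∀ i ∈ U, f i ∈ B i) (hB : ∀ i ∈ U, #(B i) ≤ w) : #F ≤ w ^ #U := by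
  classical
  calc #F ≤ #(U.pi B) := by
        refine card_le_card_of_injOn (fun f i _ => f i)
          (fun f hf => mem_coe.2 (mem_pi.2 (hF f hf))) fun f hf g hg hfg => funext fun i => ?_
        by_cases hi : i ∈ U
        · exact congrFun (congrFun hfg i) hi
        · rw [hF₀ f hf i hi, hF₀ g hg i hi]
    _ = ∏ i ∈ U, #(B i) := card_pi U B
    _ ≤ w ^ #U := prod_le_pow_card U _ w hB

/-- The members of `F` that coincide with `q` on `S`. -/
def agreeing (F : Finset (ι → ℕ)) (S : Finset ι) (q : ι → ℕ) : Finset (ι → ℕ) :=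
  {f ∈ F | ∀ i ∈ S, f i = q i}

theorem mem_agreeing : f ∈ agreeing F S q ↔ f ∈ F ∧ Set.EqOn f q S := mem_filter

theorem card_agreeing_pos (hq : q ∈ F) : 0 < #(agreeing F S q) :=
  card_pos.2 ⟨q, mem_agreeing.2 ⟨hq, Set.eqOn_refl q S⟩⟩

theorem agreeing_subset : agreeing F S q ⊆ F := filter_subset _ F

theorem agreeing_anti (hST : S ⊆ T) : agreeing F T q ⊆ agreeing F S q := fun _ hf =>
  mem_agreeing.2 ⟨(mem_agreeing.1 hf).1, (mem_agreeing.1 hf).2.mono (coe_subset.2 hST)⟩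

theorem agreeing_congr (h : Set.EqOn q q' S) : agreeing F S q = agreeing F S q' :=
  filter_congr fun _ _ =>
    ⟨fun hf i hi => (hf i hi).trans (h hi), fun hf i hi => (hf i hi).trans (h hi).symm⟩

theorem agreeing_empty : agreeing F ∅ q = F :=
  filter_true_of_mem fun _ _ i hi => absurd hi (notMem_empty i)

/-- The induction hypothesis of the main counting argument: the bound `Y ^ #U` for families of
bijections on index sets `U` with fewer than `n` elements. -/
def FamilyBound (ι : Type*) (s Y n : ℕ) : Prop :=
  ∀ (U : Finset ι) (I : Finset ℕ) (F : Finset (ι → ℕ)), #U < n → BijectiveFamily F U I →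
    OrderVCDimLT F U s → #F ≤ Y ^ #U

section Restriction

variable [DecidableEq ι]

theorem piecewise_zero_inj : S.piecewise q 0 = S.piecewise q' 0 ↔ Set.EqOn q q' S := by
  refine ⟨fun h i hi => ?_, fun h => funext fun i => ?_⟩
  · simpa only [piecewise_eq_of_mem _ _ _ (mem_coe.1 hi)] using congrFun h i
  · by_cases hi : i ∈ S
    · simpa only [piecewise_eq_of_mem _ _ _ hi] using h hi
    · simp only [piecewise_eq_of_notMem _ _ _ hi]

theorem eqOn_piecewise_zero (S : Finset ι) (q : ι → ℕ) : Set.EqOn (S.piecewise q 0) q S :=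
  fun _ hi => piecewise_eq_of_mem _ _ _ hi

theorem bijectiveFamily_image_piecewise [DecidableEq (ι → ℕ)]
    (hF : ∀ f ∈ F, Set.BijOn f S I) :
    BijectiveFamily (F.image (S.piecewise · 0)) S I where
  eq_zero := forall_mem_image.2 fun _ _ _ hi => piecewise_eq_of_notMem _ _ _ hi
  bijOn := forall_mem_image.2 fun f hf => (hF f hf).congr (eqOn_piecewise_zero S f).symm

theorem OrderVCDimLT.image_piecewise [DecidableEq (ι → ℕ)] (h : OrderVCDimLT F U s)
    (hSU : S ⊆ U) (hF' : F' ⊆ F) :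
    OrderVCDimLT (F'.image (S.piecewise · 0)) S s :=
  h.of_order_agree hSU <| forall_mem_image.2 fun f hf => ⟨f, hF' hf, fun i hi j hj hij => by
    rwa [eqOn_piecewise_zero S f hi, eqOn_piecewise_zero S f hj] at hij⟩

theorem agreeing_insert (j : ι) :
    agreeing F (insert j S) q = {f ∈ agreeing F S q | f j = q j} := by
  ext f
  simp only [agreeing, mem_filter, forall_mem_insert]
  tauto

theorem FamilyBound.card_agreeing_le (hbound : FamilyBound ι s Y #U) (hF : BijectiveFamily F U I)
    (hdim : OrderVCDimLT F U s) (hSU : S ⊆ U) (hS : S.Nonempty) (q : ι → ℕ) :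
    #(agreeing F S q) ≤ Y ^ #(U \ S) := by
  classical
  have hinj : Set.InjOn (fun f : ι → ℕ => (U \ S).piecewise f 0) (agreeing F S q) := by
    intro f hf g hg hfg
    have hf' := mem_agreeing.1 hf
    have hg' := mem_agreeing.1 hg
    funext i
    by_cases hi : i ∈ U
    · by_cases hiS : i ∈ S
      · exact (hf'.2 hiS).trans (hg'.2 hiS).symm
      · exact piecewise_zero_inj.1 hfg (mem_sdiff.2 ⟨hi, hiS⟩)
    · rw [hF.eq_zero f hf'.1 i hi, hF.eq_zero g hg'.1 i hi]
  rw [← card_image_of_injOn hinj]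
  refine hbound (U \ S) (I \ S.image q) _ (card_lt_card (sdiff_ssubset hSU hS))
    (bijectiveFamily_image_piecewise fun f hf => ?_)
    (hdim.image_piecewise sdiff_subset agreeing_subset)
  obtain ⟨hf, hfq⟩ := mem_agreeing.1 hf
  have hbij := hF.bijOn f hf
  have himage : I \ S.image q = (U \ S).image f := by
    rw [image_sdiff_of_injOn hbij.injOn hSU, image_congr hfq.symm]
    congr 1
    exact mod_cast hbij.image_eq.symm
  rw [himage, coe_image]
  exact (hbij.injOn.mono (coe_subset.2 sdiff_subset)).bijOn_image

theorem FamilyBound.card_image_piecewise_le [DecidableEq (ι → ℕ)]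
    (hbound : FamilyBound ι s Y #U)
    (hF : BijectiveFamily F U I) (hdim : OrderVCDimLT F U s) (hSU : S ⊂ U) :
    #(F.image (S.piecewise · (0 : ι → ℕ))) ≤ Y ^ #S * 2 ^ #U := by
  rcases F.eq_empty_or_nonempty with rfl | hne
  · simp only [image_empty, card_empty, zero_le]
  rw [hF.card_eq hne, ← card_powerset]
  refine card_le_mul_card_image_of_maps_to (f := fun g => S.image g)
    (forall_mem_image.2 fun f hf => ?_) _ fun J _ => ?_
  · rw [mem_powerset, image_congr (eqOn_piecewise_zero S f)]
    exact image_subset_iff.2 fun i hi => (hF.bijOn f hf).mapsTo (hSU.1 hi)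
  · rw [filter_image]
    refine hbound S J _ (card_lt_card hSU) (bijectiveFamily_image_piecewise fun f hf => ?_)
      (hdim.image_piecewise hSU.1 (filter_subset _ F))
    obtain ⟨hf, hfJ⟩ := mem_filter.1 hf
    rw [image_congr (eqOn_piecewise_zero S f)] at hfJ
    rw [← hfJ, coe_image]
    exact ((hF.bijOn f hf).injOn.mono (coe_subset.2 hSU.1)).bijOn_image

end Restriction

theorem FamilyBound.card_le_two_mul_pow (hbound : FamilyBound ι s Y #U)
    (hF : BijectiveFamily F U I) (hdim : OrderVCDimLT F U s) (hU : U.Nonempty) (hY : 0 < Y) :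
    #F ≤ (2 * Y) ^ #U := by
  classical
  rcases F.eq_empty_or_nonempty with rfl | hne
  · exact Nat.zero_le _
  obtain ⟨j, hj⟩ := hU
  have hcard : #F ≤ Y ^ #U * #I := by
    refine card_le_mul_card_image_of_maps_to (f := (· j))
      (fun f hf => (hF.bijOn f hf).mapsTo hj) _ fun v _ => ?_
    have hfibre := hbound.card_agreeing_le hF hdim (singleton_subset_iff.2 hj)
      (singleton_nonempty j) fun _ => v
    simp only [agreeing, mem_singleton, forall_eq] at hfibre
    exact hfibre.trans (Nat.pow_le_pow_right hY (card_le_card sdiff_subset))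
  calc #F ≤ Y ^ #U * #I := hcard
    _ ≤ Y ^ #U * 2 ^ #U := by
      rw [← hF.card_eq hne]
      exact Nat.mul_le_mul_left _ Nat.lt_two_pow_self.le
    _ = (2 * Y) ^ #U := by rw [mul_comm, mul_pow]

/-! ### Coordinates with few popular values -/

/-- Up to normalisation, the entropy of the restriction to `S` of a uniformly random member
of `F`. -/
noncomputable def restrictionEntropy (F : Finset (ι → ℕ)) (S : Finset ι) : ℝ :=
  ∑ f ∈ F, -Real.log #(agreeing F S f)

theorem restrictionEntropy_nonpos : restrictionEntropy F S ≤ 0 :=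
  sum_nonpos fun f _ => neg_nonpos.2 (Real.log_natCast_nonneg #(agreeing F S f))

theorem restrictionEntropy_empty : restrictionEntropy F ∅ = -(#F * Real.log #F) := by
  simp only [restrictionEntropy, agreeing_empty, sum_const, nsmul_eq_mul, mul_neg]

section Entropy

variable [DecidableEq ι]

theorem card_filter_mul_log_le_restrictionEntropy_sub (F : Finset (ι → ℕ)) (S : Finset ι) (j : ι)
    {c : ℕ} (hc : 0 < c) :
    #{f ∈ F | c * #(agreeing F (insert j S) f) < #(agreeing F S f)} * Real.log c ≤
      restrictionEntropy F (insert j S) - restrictionEntropy F S := by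
  have hpos : ∀ f ∈ F, ∀ T : Finset ι, (0 : ℝ) < #(agreeing F T f) := fun f hf T =>
    Nat.cast_pos.2 (card_agreeing_pos hf)
  rw [restrictionEntropy, restrictionEntropy, ← sum_sub_distrib, ← nsmul_eq_mul, ← sum_const]
  refine (sum_le_sum fun f hf => ?_).trans (sum_le_sum_of_subset_of_nonneg (filter_subset _ F)
    fun f hf _ => ?_)
  · obtain ⟨hfF, hlt⟩ := mem_filter.1 hf
    have hle : (c : ℝ) * #(agreeing F (insert j S) f) ≤ #(agreeing F S f) := mod_cast hlt.le
    have hc' : (0 : ℝ) < c := Nat.cast_pos.2 hc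
    have hlog := Real.log_le_log (mul_pos hc' (hpos f hfF _)) hle
    rw [Real.log_mul hc'.ne' (hpos f hfF _).ne'] at hlog
    linarith
  · have hle : (#(agreeing F (insert j S) f) : ℝ) ≤ #(agreeing F S f) :=
      mod_cast card_le_card (agreeing_anti (subset_insert j S))
    linarith [Real.log_le_log (hpos f hf _) hle]

-- Take `S` maximising the entropy penalised by `2 log Z` per coordinate and per function.
theorem exists_subset_forall_card_filter_le {Z : ℕ} (hZ : 1 < Z) (hF : F.Nonempty)
    (hcard : #F ≤ Z ^ #U) :
    ∃ S ⊆ U, 2 * #S ≤ #U ∧ ∀ j ∈ U \ S,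
      4 * #{f ∈ F | Z ^ 8 * #(agreeing F (insert j S) f) < #(agreeing F S f)} ≤ #F := by
  have hlog : 0 < Real.log Z := Real.log_pos (mod_cast hZ)
  have hF₀ : (0 : ℝ) < #F := Nat.cast_pos.2 (card_pos.2 hF)
  obtain ⟨S, hSU, hmax⟩ := exists_max_image U.powerset
    (fun S => restrictionEntropy F S - 2 * Real.log Z * #S * #F) ⟨∅, empty_mem_powerset U⟩
  rw [mem_powerset] at hSU
  refine ⟨S, hSU, ?_, fun j hj => ?_⟩
  · have hempty := hmax ∅ (empty_mem_powerset U)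
    rw [restrictionEntropy_empty, card_empty, Nat.cast_zero] at hempty
    have hlogF : Real.log #F ≤ #U * Real.log Z := by
      rw [← Real.log_pow]
      exact Real.log_le_log hF₀ (mod_cast hcard)
    have hle : (2 * #S : ℝ) * (Real.log Z * #F) ≤ #U * (Real.log Z * #F) := by
      nlinarith [mul_le_mul_of_nonneg_right hlogF hF₀.le,
        restrictionEntropy_nonpos (F := F) (S := S)]
    exact_mod_cast le_of_mul_le_mul_right hle (mul_pos hlog hF₀)
  · obtain ⟨hjU, hjS⟩ := mem_sdiff.1 hj
    have hinsert := hmax (insert j S) (mem_powerset.2 (insert_subset hjU hSU))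
    rw [card_insert_of_notMem hjS, Nat.cast_add_one] at hinsert
    have hgain := card_filter_mul_log_le_restrictionEntropy_sub F S j
      (pow_pos (zero_lt_one.trans hZ) 8)
    rw [Nat.cast_pow, Real.log_pow] at hgain
    set bad := #{f ∈ F | Z ^ 8 * #(agreeing F (insert j S) f) < #(agreeing F S f)}
    have hle : (4 * bad : ℝ) * (2 * Real.log Z) ≤ #F * (2 * Real.log Z) := by
      push_cast at hgain
      linarith
    exact_mod_cast le_of_mul_le_mul_right hle (mul_pos two_pos hlog)

end Entropy

theorem card_le_two_mul_card_filter {α β : Type*} {A : Finset α} {W : Finset β}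
    {good : α → β → Prop} [∀ a j, Decidable (good a j)]
    (h : ∀ j ∈ W, 4 * #{a ∈ A | ¬good a j} ≤ #A) :
    #A ≤ 2 * #{a ∈ A | #W ≤ 2 * #{j ∈ W | good a j}} := by
  rcases W.eq_empty_or_nonempty with rfl | hW
  · simp only [card_empty, zero_le, filter_true]
    lia
  set N := A.filter fun a => ¬#W ≤ 2 * #{j ∈ W | good a j}
  have hdouble : ∑ a ∈ A, #{j ∈ W | ¬good a j} = ∑ j ∈ W, #{a ∈ A | ¬good a j} := by
    simp only [card_filter]
    exact sum_comm
  have hupper : 4 * ∑ a ∈ A, #{j ∈ W | ¬good a j} ≤ #W * #A := by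
    rw [hdouble, mul_sum, ← smul_eq_mul (#W), ← sum_const]
    exact sum_le_sum h
  have hlower : #N * #W ≤ 2 * ∑ a ∈ A, #{j ∈ W | ¬good a j} := by
    rw [mul_sum, ← smul_eq_mul (#N), ← sum_const]
    refine (sum_le_sum fun a ha => ?_).trans (sum_le_sum_of_subset (filter_subset _ A))
    have := (mem_filter.1 ha).2
    have := card_filter_add_card_filter_not (s := W) (good a)
    lia
  have hN : 2 * #N ≤ #A := Nat.le_of_mul_le_mul_right (by linarith) (card_pos.2 hW)
  have := card_filter_add_card_filter_not (s := A) fun a => #W ≤ 2 * #{j ∈ W | good a j}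
  lia

/-! ### The main counting argument -/

/-- The index of the block containing `v` when the elements of `I`, in increasing order, are cut
into blocks of `w`. -/
def blockIndex (I : Finset ℕ) (w v : ℕ) : ℕ :=
  Nat.count (· ∈ I) v / w

theorem blockIndex_mono (I : Finset ℕ) (w : ℕ) : Monotone (blockIndex I w) := fun _ _ h =>
  Nat.div_le_div_right (Nat.count_monotone _ h)

theorem blockIndex_le (I : Finset ℕ) (w v : ℕ) : blockIndex I w v ≤ #I / w := by
  refine Nat.div_le_div_right ?_
  rw [Nat.count_eq_card_filter_range]
  exact card_le_card fun u hu => (mem_filter.1 hu).2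

theorem card_filter_blockIndex_eq_le (I : Finset ℕ) {w : ℕ} (hw : 0 < w) (c : ℕ) :
    #{v ∈ I | blockIndex I w v = c} ≤ w := by
  calc #{v ∈ I | blockIndex I w v = c} ≤ #(Ico (w * c) (w * c + w)) := by
        refine card_le_card_of_injOn (Nat.count (· ∈ I)) (fun v hv => ?_) fun v hv u hu =>
          Nat.count_injective (mem_filter.1 hv).1 (mem_filter.1 hu).1
        have hc : Nat.count (· ∈ I) v / w = c := (mem_filter.1 hv).2
        rw [coe_Ico, Set.mem_Ico, ← hc]
        exact ⟨Nat.mul_div_le _ w, Nat.lt_mul_div_succ _ hw⟩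
    _ = w := by rw [Nat.card_Ico, Nat.add_sub_cancel_left]

variable [DecidableEq ι]

/-- The restriction of `f` to `G` with every value replaced by the index of its block. -/
def blockProfile (I : Finset ℕ) (w : ℕ) (G : Finset ι) (f : ι → ℕ) : ι → ℕ :=
  G.piecewise (fun i => blockIndex I w (f i)) 0

theorem blockProfile_of_mem {G : Finset ι} {w : ℕ} {i : ι} (hi : i ∈ G) :
    blockProfile I w G f i = blockIndex I w (f i) :=
  piecewise_eq_of_mem _ _ _ hi

theorem blockProfile_of_notMem {G : Finset ι} {w : ℕ} {i : ι} (hi : i ∉ G) :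
    blockProfile I w G f i = 0 :=
  piecewise_eq_of_notMem _ _ _ hi

theorem blockProfile_piecewise (I : Finset ℕ) (w : ℕ) (G : Finset ι) (f : ι → ℕ) :
    blockProfile I w G (G.piecewise f 0) = blockProfile I w G f :=
  piecewise_zero_inj.2 fun _ hi => congrArg (blockIndex I w) (eqOn_piecewise_zero G f hi)

theorem card_le_pow_mul_card_image_blockProfile [DecidableEq (ι → ℕ)] {G : Finset ι} {w : ℕ}
    (hw : 0 < w) (hF₀ : ∀ f ∈ F, ∀ i ∉ G, f i = 0) (hF : ∀ f ∈ F, ∀ i ∈ G, f i ∈ I) :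
    #F ≤ w ^ #G * #(F.image (blockProfile I w G)) := by
  refine card_le_mul_card_image F _ fun a _ =>
    card_le_pow_of_forall_mem (B := fun i => {v ∈ I | blockIndex I w v = a i})
      (fun f hf => hF₀ f (mem_filter.1 hf).1) (fun f hf i hi => ?_)
      fun i _ => card_filter_blockIndex_eq_le I hw (a i)
  obtain ⟨hf, hfa⟩ := mem_filter.1 hf
  exact mem_filter.2 ⟨hF f hf i hi, by rw [← hfa, blockProfile_of_mem hi]⟩

/-- The values taken by `g` on at least a proportion `1 / V` of `A`. -/
def popularValues {α : Type*} (A : Finset α) (g : α → ℕ) (V : ℕ) : Finset ℕ :=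
  {v ∈ A.image g | #A ≤ V * #{a ∈ A | g a = v}}

theorem card_popularValues_le {α : Type*} (A : Finset α) (g : α → ℕ) (V : ℕ) :
    #(popularValues A g V) ≤ V := by
  rcases A.eq_empty_or_nonempty with rfl | hA
  · simp only [popularValues, image_empty, filter_empty, card_empty, zero_le]
  refine Nat.le_of_mul_le_mul_right ?_ (card_pos.2 hA)
  calc #(popularValues A g V) * #A
      ≤ ∑ v ∈ popularValues A g V, V * #{a ∈ A | g a = v} := by
        rw [← smul_eq_mul, ← sum_const]
        exact sum_le_sum fun v hv => (mem_filter.1 hv).2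
    _ = V * #{a ∈ A | g a ∈ popularValues A g V} := by
        rw [← mul_sum, sum_card_fiberwise_eq_card_filter]
    _ ≤ V * #A := Nat.mul_le_mul_left V (card_filter_le A _)

/-- The coordinates `j ∈ W` at which `f` takes a value that is popular (with threshold `V`) among
the members of `F` coinciding with `f` on `S`. -/
def popularCoords (F : Finset (ι → ℕ)) (S W : Finset ι) (V : ℕ) (f : ι → ℕ) :
    Finset ι :=
  {j ∈ W | #(agreeing F S f) ≤ V * #(agreeing F (insert j S) f)}

theorem mem_popularValues_of_mem_popularCoords {W : Finset ι} {V : ℕ} {j : ι}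
    (hf : f ∈ agreeing F S q) (hj : j ∈ popularCoords F S W V f) :
    f j ∈ popularValues (agreeing F S q) (· j) V := by
  have hpopular := (mem_filter.1 hj).2
  rw [agreeing_insert, agreeing_congr (mem_agreeing.1 hf).2] at hpopular
  exact mem_filter.2 ⟨mem_image_of_mem (· j) hf, hpopular⟩

theorem FamilyBound.card_le_mul_card_image_blockProfile [DecidableEq (ι → ℕ)] {G : Finset ι}
    {w : ℕ}
    (hbound : FamilyBound ι s Y #U) (hF : BijectiveFamily F U I) (hdim : OrderVCDimLT F U s)
    (hw : 0 < w) (hSU : S ⊆ U) (hGU : G ⊆ U) (hG : G.Nonempty) (hF' : F' ⊆ agreeing F S q) :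
    #F' ≤ Y ^ #(U \ (S ∪ G)) * (w ^ #G * #(F'.image (blockProfile I w G))) := by
  have hfibre : #F' ≤ Y ^ #(U \ (S ∪ G)) * #(F'.image (G.piecewise · (0 : ι → ℕ))) := by
    refine card_le_mul_card_image F' _ (forall_mem_image.2 fun f hf => ?_)
    refine (card_le_card fun g hg => ?_).trans <| hbound.card_agreeing_le hF hdim
      (union_subset hSU hGU) (hG.mono subset_union_right) f
    obtain ⟨hg, hgf⟩ := mem_filter.1 hg
    obtain ⟨hgF, hgq⟩ := mem_agreeing.1 (hF' hg)
    rw [mem_agreeing, coe_union]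
    exact ⟨hgF, (hgq.trans (mem_agreeing.1 (hF' hf)).2.symm).union (piecewise_zero_inj.1 hgf)⟩
  have hblock := card_le_pow_mul_card_image_blockProfile (I := I)
    (F := F'.image (G.piecewise · 0)) hw
    (forall_mem_image.2 fun f _ i hi => piecewise_eq_of_notMem _ _ _ hi)
    (forall_mem_image.2 fun f hf i hi => by
      rw [eqOn_piecewise_zero G f hi]
      exact (hF.bijOn f (agreeing_subset (hF' hf))).mapsTo (hGU hi))
  simp only [image_image, Function.comp_def, blockProfile_piecewise] at hblock
  exact hfibre.trans (Nat.mul_le_mul_left _ hblock)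

theorem FamilyBound.card_le_of_subset_agreeing {G W : Finset ι} {w V R X : ℕ}
    (hbound : FamilyBound ι s Y #U) (hF : BijectiveFamily F U I) (hdim : OrderVCDimLT F U s)
    (hs : 0 < s) (hw : 0 < w) (hV : 0 < V) (hSU : S ⊆ U) (hGU : G ⊆ U) (hG : G.Nonempty)
    (hform : FormationBound ι s s (#U / w + 1) R X) (hF' : F' ⊆ agreeing F S q)
    (hpop : ∀ f ∈ F', G ⊆ popularCoords F S W V f) :
    #F' ≤ Y ^ #(U \ (S ∪ G)) *
      (w ^ #G * ((2 * (2 * R + 1)) ^ #G * V ^ ((2 * R + 1) * (X * (#U / w + 1))))) := by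
  classical
  have hF'F : F' ⊆ F := hF'.trans agreeing_subset
  refine (hbound.card_le_mul_card_image_blockProfile hF hdim hw hSU hGU hG hF').trans
    (Nat.mul_le_mul_left _ (Nat.mul_le_mul_left _ ?_))
  refine hform.card_le hs hV
    (As := fun j => (popularValues (agreeing F S q) (· j) V).image (blockIndex I w))
    ?_ ?_ ?_ (fun i _ => card_image_le.trans (card_popularValues_le _ _ V))
    (hdim.of_order_agree hGU ?_) <;> refine forall_mem_image.2 fun f hf => ?_
  · exact fun i hi => blockProfile_of_notMem hi
  · intro i hi
    rw [blockProfile_of_mem hi, hF.card_eq ⟨f, hF'F hf⟩]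
    exact Nat.lt_succ_of_le (blockIndex_le I w (f i))
  · intro i hi
    rw [blockProfile_of_mem hi]
    exact mem_image_of_mem _ (mem_popularValues_of_mem_popularCoords (hF' hf) (hpop f hf hi))
  · refine ⟨f, hF'F hf, fun i hi j hj hij => ?_⟩
    rw [blockProfile_of_mem hi, blockProfile_of_mem hj] at hij
    exact (blockIndex_mono I w).reflect_lt hij

/-- The length `w` of the blocks of values in the counting argument, such that
`V ^ ((2 * R + 1) * X * (n / w + 1)) ≤ 4 ^ n` for `V = (2 * 2 ^ y) ^ 8` and `w ≤ n`. -/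
def blockLength (y R X : ℕ) : ℕ :=
  8 * (y + 1) * ((2 * R + 1) * X)

theorem pow_div_blockLength_le {y R X n : ℕ} (hn : blockLength y R X ≤ n) :
    ((2 * 2 ^ y) ^ 8) ^ ((2 * R + 1) * (X * (n / blockLength y R X + 1))) ≤ 2 ^ (2 * n) := by
  rw [← pow_succ', ← pow_mul, ← pow_mul]
  refine Nat.pow_le_pow_right two_pos ?_
  calc (y + 1) * (8 * ((2 * R + 1) * (X * (n / blockLength y R X + 1))))
      = blockLength y R X * (n / blockLength y R X) + blockLength y R X := by
        unfold blockLength; ring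
    _ ≤ n + n := Nat.add_le_add (Nat.mul_div_le n _) hn
    _ = 2 * n := (two_mul n).symm

/-- The numerical hypothesis under which `(2 ^ y) ^ n` bounds the size of families of bijections
between `n`-element sets. With `g ≥ n / 4` popular coordinates, the factor `2 ^ (20 * g)` pays for
the five factors `2 ^ n` lost in the count, and one more `2 ^ g` comes from the Sauer–Shelah
bound. -/
def Admissible (y R X : ℕ) : Prop :=
  2 ^ 21 * ((2 * R + 1) * blockLength y R X) ≤ 2 ^ y

theorem Admissible.blockLength_le {y R X : ℕ} (h : Admissible y R X) :
    blockLength y R X ≤ 2 ^ y :=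
  (Nat.le_mul_of_pos_left _ (2 * R).succ_pos).trans
    ((Nat.le_mul_of_pos_left _ (by norm_num)).trans h)

theorem Admissible.mul_le_pow {y R X n r σ g : ℕ} (h : Admissible y R X)
    (hn : blockLength y R X ≤ n) (hsum : r + σ + g = n) (hg : n ≤ 4 * g) :
    (2 ^ y) ^ r * (blockLength y R X ^ g * ((2 * (2 * R + 1)) ^ g *
      ((2 * 2 ^ y) ^ 8) ^ ((2 * R + 1) * (X * (n / blockLength y R X + 1))))) *
      ((2 ^ y) ^ σ * 2 ^ n) * 2 ^ (2 * n) ≤ (2 ^ y) ^ n := by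
  set w := blockLength y R X
  set Y := 2 ^ y
  calc Y ^ r * (w ^ g * ((2 * (2 * R + 1)) ^ g *
        ((2 * Y) ^ 8) ^ ((2 * R + 1) * (X * (n / w + 1))))) * (Y ^ σ * 2 ^ n) * 2 ^ (2 * n)
      ≤ Y ^ r * (w ^ g * ((2 * (2 * R + 1)) ^ g * 2 ^ (2 * n))) * (Y ^ σ * 2 ^ n) *
          2 ^ (2 * n) := by
        gcongr Y ^ r * (w ^ g * ((2 * (2 * R + 1)) ^ g * ?_)) * (Y ^ σ * 2 ^ n) * 2 ^ (2 * n)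
        exact pow_div_blockLength_le hn
    _ = 2 ^ (5 * n) * (w * (2 * (2 * R + 1))) ^ g * Y ^ (r + σ) := by
        rw [mul_pow w, pow_add Y, show 5 * n = 2 * n + n + 2 * n by ring, pow_add, pow_add]
        ring
    _ ≤ (2 ^ 20) ^ g * (w * (2 * (2 * R + 1))) ^ g * Y ^ (r + σ) := by
        gcongr ?_ * (w * (2 * (2 * R + 1))) ^ g * Y ^ (r + σ)
        rw [← pow_mul]
        exact Nat.pow_le_pow_right two_pos (by lia)
    _ = (2 ^ 21 * ((2 * R + 1) * w)) ^ g * Y ^ (r + σ) := by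
        rw [← mul_pow]
        congr 2
        ring
    _ ≤ Y ^ g * Y ^ (r + σ) := by gcongr; exact h
    _ = Y ^ n := by rw [← pow_add, ← hsum, add_comm]

variable {y R X : ℕ}

theorem FamilyBound.card_mul_pow_le_of_popular {G : Finset ι} (hbound : FamilyBound ι s (2 ^ y) #U)
    (hF : BijectiveFamily F U I) (hdim : OrderVCDimLT F U s) (hs : 0 < s) (hX : 0 < X)
    (hy : Admissible y R X) (hU : blockLength y R X ≤ #U)
    (hform : FormationBound ι s s (#U / blockLength y R X + 1) R X)
    (hSU : S ⊆ U) (hS : 2 * #S ≤ #U) (hGU : G ⊆ U \ S) (hG : #(U \ S) ≤ 2 * #G) (hF' : F' ⊆ F)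
    (hpop : ∀ f ∈ F', G ⊆ popularCoords F S (U \ S) ((2 * 2 ^ y) ^ 8) f) :
    #F' * 2 ^ (2 * #U) ≤ (2 ^ y) ^ #U := by
  classical
  have hw : 0 < blockLength y R X := by unfold blockLength; positivity
  have hcardS := card_sdiff_add_card_eq_card hSU
  have hcardG := card_sdiff_add_card_eq_card hGU
  rw [sdiff_sdiff_left, sup_eq_union] at hcardG
  set w := blockLength y R X
  have hfibres : #F' ≤ (2 ^ y) ^ #(U \ (S ∪ G)) * (w ^ #G * ((2 * (2 * R + 1)) ^ #G *
      ((2 * 2 ^ y) ^ 8) ^ ((2 * R + 1) * (X * (#U / w + 1))))) *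
      #(F'.image (S.piecewise · (0 : ι → ℕ))) := by
    refine card_le_mul_card_image F' _ (forall_mem_image.2 fun f _ => ?_)
    refine hbound.card_le_of_subset_agreeing (q := f) hF hdim hs hw (by positivity) hSU
      (hGU.trans sdiff_subset) (card_pos.1 (by lia)) hform (fun g hg => ?_)
      fun g hg => hpop g (mem_filter.1 hg).1
    exact mem_agreeing.2 ⟨hF' (mem_filter.1 hg).1, piecewise_zero_inj.1 (mem_filter.1 hg).2⟩
  have himage : #(F'.image (S.piecewise · (0 : ι → ℕ))) ≤ (2 ^ y) ^ #S * 2 ^ #U :=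
    (card_le_card (image_subset_image hF')).trans
      (hbound.card_image_piecewise_le hF hdim (hSU.ssubset_of_ne fun h => by
        rw [h] at hS; lia))
  exact (Nat.mul_le_mul_right _ (hfibres.trans (Nat.mul_le_mul_left _ himage))).trans
    (hy.mul_le_pow hU (by lia) (by lia))

theorem FamilyBound.card_le_of_blockLength_le (hbound : FamilyBound ι s (2 ^ y) #U)
    (hF : BijectiveFamily F U I) (hdim : OrderVCDimLT F U s) (hs : 0 < s) (hX : 0 < X)
    (hy : Admissible y R X) (hU : blockLength y R X ≤ #U)
    (hform : FormationBound ι s s (#U / blockLength y R X + 1) R X) : #F ≤ (2 ^ y) ^ #U := by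
  classical
  rcases F.eq_empty_or_nonempty with rfl | hne
  · exact Nat.zero_le _
  have hw : 0 < blockLength y R X := by unfold blockLength; positivity
  have hYpos : 0 < 2 ^ y := Nat.two_pow_pos y
  obtain ⟨S, hSU, hS, hbad⟩ := exists_subset_forall_card_filter_le (Z := 2 * 2 ^ y) (by lia) hne
    (hbound.card_le_two_mul_pow hF hdim (card_pos.1 (by lia)) hYpos)
  set G := popularCoords F S (U \ S) ((2 * 2 ^ y) ^ 8)
  set F₁ := {f ∈ F | #(U \ S) ≤ 2 * #(G f)}
  have hF₁ : #F ≤ 2 * #F₁ := card_le_two_mul_card_filter fun j hj => by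
    simpa only [not_le] using hbad j hj
  have hsub : ∀ f, G f ⊆ U \ S := fun f => filter_subset _ _
  have hclass : ∀ A ∈ F₁.image G, #{f ∈ F₁ | G f = A} * 2 ^ (2 * #U) ≤ (2 ^ y) ^ #U :=
    forall_mem_image.2 fun f hf => hbound.card_mul_pow_le_of_popular hF hdim hs hX hy hU hform
      hSU hS (hsub f) (mem_filter.1 hf).2 ((filter_subset _ _).trans (filter_subset _ _))
      fun g hg => (mem_filter.1 hg).2.ge
  have hclasses : #(F₁.image G) ≤ 2 ^ #U := by
    rw [← card_powerset]
    exact card_le_card (image_subset_iff.2 fun f _ =>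
      mem_powerset.2 ((hsub f).trans sdiff_subset))
  have hsum : #F₁ * 2 ^ (2 * #U) ≤ 2 ^ #U * (2 ^ y) ^ #U := by
    rw [card_eq_sum_card_image G F₁, sum_mul]
    refine (sum_le_sum hclass).trans ?_
    rw [sum_const, smul_eq_mul]
    exact Nat.mul_le_mul_right _ hclasses
  refine hF₁.trans (Nat.le_of_mul_le_mul_right ?_ (Nat.two_pow_pos #U))
  calc 2 * #F₁ * 2 ^ #U ≤ 2 ^ #U * #F₁ * 2 ^ #U := by
        gcongr
        exact Nat.le_self_pow (by lia) 2
    _ = #F₁ * 2 ^ (2 * #U) := by rw [two_mul, pow_add]; ring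
    _ ≤ (2 ^ y) ^ #U * 2 ^ #U := hsum.trans_eq (mul_comm _ _)

theorem BijectiveFamily.card_le (hF : BijectiveFamily F U I) (hdim : OrderVCDimLT F U s)
    (hs : 0 < s) (hX : 0 < X) (hy : Admissible y R X)
    (hform : ∀ m ≤ #U, FormationBound ι s s m R X) : #F ≤ (2 ^ y) ^ #U := by
  induction hn : #U using Nat.strong_induction_on generalizing U I F with | _ n ih
  subst hn
  rcases lt_or_ge #U (blockLength y R X) with hlt | hle
  · rcases F.eq_empty_or_nonempty with rfl | hne
    · exact Nat.zero_le _
    exact card_le_pow_of_forall_mem hF.eq_zero (fun f hf i hi => (hF.bijOn f hf).mapsTo hi)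
      fun _ _ => (hF.card_eq hne).ge.trans (hlt.le.trans hy.blockLength_le)
  · refine FamilyBound.card_le_of_blockLength_le (fun U' I' F' hU' hF' hdim' => ?_) hF hdim hs hX
      hy hle (hform _ ?_)
    · exact ih _ hU' hF' hdim' (fun m hm => hform m (hm.trans hU'.le)) rfl
    · have hw : 2 ≤ blockLength y R X := by
        have : 0 < (y + 1) * ((2 * R + 1) * X) := by positivity
        rw [blockLength, mul_assoc]
        lia
      have := Nat.div_le_div_left (a := #U) hw two_pos
      lia

end BijectiveFamilies

/-! ### Families of permutations -/

section Permutations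

variable {n k : ℕ} {P : Finset (Equiv.Perm (Fin n))}

/-- The permutations in `P`, viewed as functions with values in `ℕ`. -/
def valueFamily (P : Finset (Equiv.Perm (Fin n))) : Finset (Fin n → ℕ) :=
  P.image fun π i => π i

theorem mem_valueFamily {f : Fin n → ℕ} :
    f ∈ valueFamily P ↔ ∃ π ∈ P, (fun i => (π i : ℕ)) = f := mem_image

theorem card_valueFamily (P : Finset (Equiv.Perm (Fin n))) : #(valueFamily P) = #P :=
  card_image_of_injective P fun _ _ h => Equiv.ext fun i => Fin.ext (congrFun h i)

theorem bijectiveFamily_valueFamily (P : Finset (Equiv.Perm (Fin n))) :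
    BijectiveFamily (valueFamily P) univ (range n) where
  eq_zero _ _ i hi := absurd (mem_univ i) hi
  bijOn := forall_mem_image.2 fun π _ => by
    refine ⟨fun i _ => mem_coe.2 (mem_range.2 (π i).isLt),
      fun i _ j _ hij => π.injective (Fin.ext hij), fun v hv => ?_⟩
    refine ⟨π.symm ⟨v, mem_range.1 (mem_coe.1 hv)⟩, mem_coe.2 (mem_univ _), ?_⟩
    simp only [Equiv.apply_symm_apply]

theorem permRestrictionIs_of_forall_lt {π : Equiv.Perm (Fin n)} {a : Fin k → Fin n}
    {σ : Equiv.Perm (Fin k)} (h : ∀ i j, σ i < σ j → π (a i) < π (a j)) :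
    PermRestrictionIs π a σ := by
  have hmono : StrictMono fun v => π (a (σ.symm v)) := fun v w hvw => h _ _ (by simpa using hvw)
  intro i j
  simpa using (hmono.lt_iff_lt (a := σ i) (b := σ j)).symm

theorem orderVCDimLT_valueFamily (hP : VCDimLE n k P) :
    OrderVCDimLT (valueFamily P) univ (k + 1) := by
  intro T _ hT hsh
  set a := T.orderEmbOfFin hT
  refine hP a ⟨a.strictMono, fun σ => ?_⟩
  set e : Fin n → ℕ := Function.extend a (fun j => (σ j : ℕ)) 0
  have he : ∀ j, e (a j) = σ j := a.injective.extend_apply _ _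
  have ha : ∀ j, a j ∈ T := orderEmbOfFin_mem T hT
  obtain ⟨f, hf, hfe⟩ := hsh e
  obtain ⟨π, hπ, rfl⟩ := mem_valueFamily.1 hf
  refine ⟨π, hπ, permRestrictionIs_of_forall_lt fun i j hij => ?_⟩
  exact hfe (a i) (ha i) (a j) (ha j) (by rwa [he, he])

theorem exists_card_le_of_admissible (s : ℕ) : ∃ X,
    ∀ (n : ℕ) (P : Finset (Equiv.Perm (Fin n))), VCDimLE n (s + 1) P →
      ∀ y, Admissible y (coeff s (invAck n - 1)) X → #P ≤ (2 ^ y) ^ n := by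
  obtain ⟨X, hX⟩ := exists_formationBound_invAck (s + 2) s
  refine ⟨X + 1, fun n P hP y hy => ?_⟩
  simpa only [card_valueFamily, card_fin] using
    (bijectiveFamily_valueFamily P).card_le (orderVCDimLT_valueFamily hP) (s + 1).succ_pos
      X.succ_pos hy fun m hm =>
        (hX (Fin n) n m (hm.trans_eq (card_fin n))).mono le_rfl X.le_succ

end Permutations

/-! ### Growth of the coefficients -/

section Growth

open Nat (factorial)
open Real (logb)

theorem coeff_add_two_le_prod (s d : ℕ) : coeff (s + 2) d ≤
    (∏ i ∈ range (d + 1), coeff s i) * coeff (s + 1) d * (coeff (s + 2) 0 + 2 * d) := by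
  have hprod : ∀ d, 1 ≤ ∏ i ∈ range d, coeff s i := fun d => prod_pos fun i _ => coeff_pos s i
  induction d with
  | zero =>
    exact Nat.le_mul_of_pos_left _ (Nat.mul_pos (hprod 1) (coeff_pos (s + 1) 0))
  | succ d ih =>
    rw [prod_range_succ _ (d + 1), coeff_add_two_succ]
    set p := ∏ i ∈ range (d + 1), coeff s i
    set u := coeff (s + 1) (d + 1)
    set v := coeff s (d + 1)
    have hpv : 1 ≤ p * v := Nat.mul_pos (hprod (d + 1)) (coeff_pos s (d + 1))
    have hu : coeff (s + 1) d ≤ u := coeff_le_succ (s + 1) d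
    calc 2 * u + v * coeff (s + 2) d
        ≤ 2 * (p * v * u) + v * (p * u * (coeff (s + 2) 0 + 2 * d)) := by
          gcongr
          · exact Nat.le_mul_of_pos_left u hpv
          · exact ih.trans (by gcongr)
      _ = p * v * u * (coeff (s + 2) 0 + 2 * (d + 1)) := by ring

theorem logb_two_natCast_le (n : ℕ) : logb 2 n ≤ n := by
  rcases n.eq_zero_or_pos with rfl | hn
  · simp
  · rw [Real.logb_le_iff_le_rpow one_lt_two (Nat.cast_pos.2 hn), Real.rpow_natCast]
    exact_mod_cast Nat.lt_two_pow_self.le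

theorem logb_two_natCast_add_one_nonneg (d : ℕ) : 0 ≤ logb 2 ((d : ℝ) + 1) := by
  exact_mod_cast Real.logb_nonneg one_lt_two (Nat.one_le_cast.2 d.succ_pos)

theorem logb_two_natCast_add_one_le (d : ℕ) : logb 2 ((d : ℝ) + 1) ≤ d + 1 := by
  exact_mod_cast logb_two_natCast_le (d + 1)

theorem logb_coeff_add_two_le (s d : ℕ) : logb 2 (coeff (s + 2) d) ≤
    ∑ i ∈ range (d + 1), logb 2 (coeff s i) + logb 2 (coeff (s + 1) d) +
      (coeff (s + 2) 0 + 2 + logb 2 ((d : ℝ) + 1)) := by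
  have hpos : ∀ s d, (0 : ℝ) < coeff s d := fun s d => Nat.cast_pos.2 (coeff_pos s d)
  set K := coeff (s + 2) 0
  have hlast : logb 2 ((K : ℝ) + 2 * d) ≤ K + 2 + logb 2 ((d : ℝ) + 1) := by
    have hle : (K : ℝ) + 2 * d ≤ ((K + 2 : ℕ) : ℝ) * ((d : ℝ) + 1) := by
      exact_mod_cast (show K + 2 * d ≤ (K + 2) * (d + 1) by nlinarith)
    calc logb 2 ((K : ℝ) + 2 * d) ≤ logb 2 (((K + 2 : ℕ) : ℝ) * ((d : ℝ) + 1)) :=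
          Real.logb_le_logb_of_le one_lt_two (by have := hpos (s + 2) 0; positivity) hle
      _ = logb 2 (K + 2 : ℕ) + logb 2 ((d : ℝ) + 1) :=
          Real.logb_mul (by positivity) (by positivity)
      _ ≤ K + 2 + logb 2 ((d : ℝ) + 1) := by
          have := logb_two_natCast_le (K + 2)
          push_cast at this ⊢
          linarith
  have hprod : (coeff (s + 2) d : ℝ) ≤
      (∏ i ∈ range (d + 1), (coeff s i : ℝ)) * coeff (s + 1) d * (K + 2 * d) := by
    exact_mod_cast coeff_add_two_le_prod s d
  refine (Real.logb_le_logb_of_le one_lt_two (hpos _ _) hprod).trans ?_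
  have hprod_ne : ∏ i ∈ range (d + 1), (coeff s i : ℝ) ≠ 0 :=
    prod_ne_zero_iff.2 fun i _ => (hpos s i).ne'
  rw [Real.logb_mul (mul_ne_zero hprod_ne (hpos _ _).ne')
      (by have := hpos (s + 2) 0; positivity),
    Real.logb_mul hprod_ne (hpos _ _).ne', Real.logb_prod _ _ fun i _ => (hpos s i).ne']
  gcongr

theorem sum_range_add_one_pow_le (t d : ℕ) : ∑ i ∈ range (d + 1), ((i : ℝ) + 1) ^ t ≤
    ((d : ℝ) + 1) ^ (t + 1) / (t + 1) + ((d : ℝ) + 1) ^ t := by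
  have hmono : MonotoneOn (fun x : ℝ => x ^ t) (Set.Icc 1 (1 + d)) := fun x hx y _ hxy =>
    pow_le_pow_left₀ (zero_le_one.trans hx.1) hxy t
  have hint : ∑ i ∈ range d, ((i : ℝ) + 1) ^ t ≤ (((d : ℝ) + 1) ^ (t + 1) - 1) / (t + 1) := by
    simpa only [integral_pow, one_pow, add_comm (1 : ℝ)] using hmono.sum_le_integral
  rw [sum_range_succ]
  refine add_le_add_left (hint.trans ?_) _
  gcongr
  exact sub_le_self _ zero_le_one

theorem sum_range_add_one_pow_le_pow (t d : ℕ) :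
    ∑ i ∈ range (d + 1), ((i : ℝ) + 1) ^ t ≤ ((d : ℝ) + 1) ^ (t + 1) := by
  calc ∑ i ∈ range (d + 1), ((i : ℝ) + 1) ^ t
      ≤ ∑ _i ∈ range (d + 1), ((d : ℝ) + 1) ^ t := by
        refine sum_le_sum fun i hi => ?_
        have : (i : ℝ) ≤ d := Nat.cast_le.2 (mem_range_succ_iff.1 hi)
        gcongr
    _ = ((d : ℝ) + 1) ^ (t + 1) := by
        rw [sum_const, card_range, nsmul_eq_mul, pow_succ']
        push_cast
        rfl

/-- The leading term `x ^ t * log₂ x / t!`, at `x = d + 1`, of the logarithm of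
`coeff (2 * t + 2) d`. -/
noncomputable def leadingTerm (t d : ℕ) : ℝ :=
  1 / (factorial t : ℝ) * ((d : ℝ) + 1) ^ t * logb 2 ((d : ℝ) + 1)

theorem leadingTerm_nonneg (t d : ℕ) : 0 ≤ leadingTerm t d :=
  mul_nonneg (by positivity) (logb_two_natCast_add_one_nonneg d)

theorem leadingTerm_le_pow (t d : ℕ) : leadingTerm t d ≤ ((d : ℝ) + 1) ^ (t + 1) := by
  have hfact : 1 / (factorial t : ℝ) ≤ 1 :=
    (div_le_one (by positivity)).2 (mod_cast Nat.factorial_pos t)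
  calc leadingTerm t d ≤ 1 * ((d : ℝ) + 1) ^ t * ((d : ℝ) + 1) := by
        unfold leadingTerm
        gcongr
        exacts [logb_two_natCast_add_one_nonneg d, logb_two_natCast_add_one_le d]
    _ = ((d : ℝ) + 1) ^ (t + 1) := by rw [one_mul, pow_succ]

theorem leadingTerm_add_le_pow {C : ℝ} (hC : 0 ≤ C) (t d : ℕ) :
    leadingTerm t d + C * ((d : ℝ) + 1) ^ t ≤ (1 + C) * ((d : ℝ) + 1) ^ (t + 1) := by
  rw [one_add_mul]
  gcongr
  exacts [leadingTerm_le_pow t d, by simp, t.le_succ]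

theorem sum_leadingTerm_le (t d : ℕ) : ∑ i ∈ range (d + 1), leadingTerm t i ≤
    leadingTerm (t + 1) d + ((d : ℝ) + 1) ^ (t + 1) := by
  have hlog : 0 ≤ 1 / (factorial t : ℝ) * logb 2 ((d : ℝ) + 1) :=
    mul_nonneg (by positivity) (logb_two_natCast_add_one_nonneg d)
  calc ∑ i ∈ range (d + 1), leadingTerm t i
      ≤ ∑ i ∈ range (d + 1), 1 / (factorial t : ℝ) * logb 2 ((d : ℝ) + 1) * ((i : ℝ) + 1) ^ t := by
        refine sum_le_sum fun i hi => ?_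
        have hid : (i : ℝ) ≤ d := Nat.cast_le.2 (mem_range_succ_iff.1 hi)
        rw [leadingTerm, mul_right_comm]
        gcongr
        exact one_lt_two
    _ ≤ 1 / (factorial t : ℝ) * logb 2 ((d : ℝ) + 1) *
          (((d : ℝ) + 1) ^ (t + 1) / (t + 1) + ((d : ℝ) + 1) ^ t) := by
        rw [← mul_sum]
        exact mul_le_mul_of_nonneg_left (sum_range_add_one_pow_le t d) hlog
    _ = leadingTerm (t + 1) d + leadingTerm t d := by
        rw [leadingTerm, leadingTerm, Nat.factorial_succ]
        push_cast
        field_simp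
    _ ≤ leadingTerm (t + 1) d + ((d : ℝ) + 1) ^ (t + 1) := by
        gcongr
        exact leadingTerm_le_pow t d

theorem logb_two_natCast_add_one_le_pow (t d : ℕ) :
    logb 2 ((d : ℝ) + 1) ≤ ((d : ℝ) + 1) ^ (t + 1) :=
  (logb_two_natCast_add_one_le d).trans (le_self_pow₀ (by simp) t.succ_ne_zero)

theorem logb_coeff_add_two_le_pow {s t : ℕ} {A B : ℝ} (hA : 0 ≤ A)
    (hs : ∀ d, logb 2 (coeff s d) ≤ A * ((d : ℝ) + 1) ^ t) {d : ℕ}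
    (hs₁ : logb 2 (coeff (s + 1) d) ≤ B * ((d : ℝ) + 1) ^ (t + 1)) :
    logb 2 (coeff (s + 2) d) ≤ (A + B + (coeff (s + 2) 0 + 3)) * ((d : ℝ) + 1) ^ (t + 1) := by
  have hsum : ∑ i ∈ range (d + 1), logb 2 (coeff s i) ≤ A * ((d : ℝ) + 1) ^ (t + 1) := by
    refine (sum_le_sum fun i _ => hs i).trans ?_
    rw [← mul_sum]
    exact mul_le_mul_of_nonneg_left (sum_range_add_one_pow_le_pow t d) hA
  have hconst : ((coeff (s + 2) 0 : ℝ) + 2) * 1 ≤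
      (coeff (s + 2) 0 + 2) * ((d : ℝ) + 1) ^ (t + 1) := by
    gcongr
    exact one_le_pow₀ (by simp)
  linarith [logb_coeff_add_two_le s d, logb_two_natCast_add_one_le_pow t d]

theorem logb_coeff_add_two_le_leadingTerm_add {s t : ℕ} {A B : ℝ} (hA : 0 ≤ A)
    (hs : ∀ d, logb 2 (coeff s d) ≤ leadingTerm t d + A * ((d : ℝ) + 1) ^ t) {d : ℕ}
    (hs₁ : logb 2 (coeff (s + 1) d) ≤ B * ((d : ℝ) + 1) ^ (t + 1)) :
    logb 2 (coeff (s + 2) d) ≤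
      leadingTerm (t + 1) d + (A + B + (coeff (s + 2) 0 + 4)) * ((d : ℝ) + 1) ^ (t + 1) := by
  have hsum : ∑ i ∈ range (d + 1), logb 2 (coeff s i) ≤
      leadingTerm (t + 1) d + ((d : ℝ) + 1) ^ (t + 1) + A * ((d : ℝ) + 1) ^ (t + 1) := by
    refine (sum_le_sum fun i _ => hs i).trans ?_
    rw [sum_add_distrib, ← mul_sum]
    exact add_le_add (sum_leadingTerm_le t d)
      (mul_le_mul_of_nonneg_left (sum_range_add_one_pow_le_pow t d) hA)
  have hconst : ((coeff (s + 2) 0 : ℝ) + 2) * 1 ≤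
      (coeff (s + 2) 0 + 2) * ((d : ℝ) + 1) ^ (t + 1) := by
    gcongr
    exact one_le_pow₀ (by simp)
  linarith [logb_coeff_add_two_le s d, logb_two_natCast_add_one_le_pow t d]

theorem exists_logb_coeff_le (t : ℕ) : ∃ C : ℝ, 0 ≤ C ∧ ∀ d,
    logb 2 (coeff (2 * t + 1) d) ≤ C * ((d : ℝ) + 1) ^ t ∧
      logb 2 (coeff (2 * t + 2) d) ≤ leadingTerm t d + C * ((d : ℝ) + 1) ^ t := by
  induction t with
  | zero =>
    refine ⟨coeff 2 0 + 3, by positivity, fun d => ?_⟩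
    have h₀ : ∀ i, logb 2 (coeff 0 i) = 0 := fun i => by simp [coeff_zero]
    have h₁ : logb 2 (coeff 1 d) = 1 := by simp [coeff_one]
    have hrec := logb_coeff_add_two_le 0 d
    simp only [zero_add, h₀, h₁, sum_const_zero] at hrec
    simp only [mul_zero, zero_add, h₁, leadingTerm, Nat.factorial_zero, Nat.cast_one, div_one,
      pow_zero, mul_one, one_mul]
    exact ⟨by linarith [(coeff 2 0).cast_nonneg (α := ℝ)], by linarith⟩
  | succ t ih =>
    obtain ⟨C, hC, ih⟩ := ih
    have hodd d := logb_coeff_add_two_le_pow hC (fun d => (ih d).1)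
      ((ih d).2.trans (leadingTerm_add_le_pow hC t d))
    have heven d := logb_coeff_add_two_le_leadingTerm_add hC (fun d => (ih d).2) (hodd d)
    refine ⟨_, by positivity, fun d => ⟨(hodd d).trans ?_, heven d⟩⟩
    refine mul_le_mul_of_nonneg_right ?_ (by positivity)
    linarith [(coeff (2 * t + 2 + 2) 0).cast_nonneg (α := ℝ)]

end Growth

/-! ### The choice of the exponent -/

section Exponent

open Nat (factorial)
open Real (logb)

theorem admissible_add_log {c R X u : ℕ} (hR : 0 < R) (hc : R ^ 2 ≤ 2 ^ c)
    (hu : u = c + 28 + X) : Admissible (u + (Nat.log 2 u + 3)) R X := by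
  set l := Nat.log 2 u
  have hul : u < 2 ^ (l + 1) := Nat.lt_pow_succ_log_self one_lt_two u
  have hl : l + 1 < 2 ^ (l + 1) := Nat.lt_two_pow_self
  have hy : u + (l + 3) + 1 ≤ 2 ^ (l + 3) := by
    rw [show l + 3 = l + 1 + 2 from rfl, pow_add]
    lia
  calc 2 ^ 21 * ((2 * R + 1) * (8 * (u + (l + 3) + 1) * ((2 * R + 1) * X)))
      = 2 ^ 24 * (2 * R + 1) ^ 2 * X * (u + (l + 3) + 1) := by ring
    _ ≤ 2 ^ 24 * (4 * R) ^ 2 * 2 ^ X * 2 ^ (l + 3) := by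
        gcongr
        · lia
        · exact Nat.lt_two_pow_self.le
    _ = R ^ 2 * 2 ^ (28 + X + (l + 3)) := by ring
    _ ≤ 2 ^ c * 2 ^ (28 + X + (l + 3)) := Nat.mul_le_mul_right _ hc
    _ = 2 ^ (u + (l + 3)) := by rw [hu, ← pow_add]; ring_nf

theorem exists_admissible_le {R : ℕ} (hR : 0 < R) (X : ℕ) {v : ℝ}
    (hv : 2 * logb 2 R + (X + 30) ≤ v) :
    ∃ y : ℕ, Admissible y R X ∧ (y : ℝ) ≤ v + logb 2 v + 3 := by
  set u := 2 * Nat.clog 2 R + 28 + X with hu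
  have hRc : R ^ 2 ≤ 2 ^ (2 * Nat.clog 2 R) := by
    rw [mul_comm, pow_mul]
    exact Nat.pow_le_pow_left (Nat.le_pow_clog one_lt_two R) 2
  have hclog : (Nat.clog 2 R : ℝ) < logb 2 R + 1 := by
    rw [← Real.natCeil_logb_natCast]
    exact_mod_cast Nat.ceil_lt_add_one (Real.logb_nonneg one_lt_two (Nat.one_le_cast.2 hR))
  have huv : (u : ℝ) ≤ v := by
    rw [hu]
    push_cast
    linarith
  have hlog : (Nat.log 2 u : ℝ) ≤ logb 2 v :=
    (Real.natLog_le_logb u 2).trans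
      (Real.logb_le_logb_of_le one_lt_two (Nat.cast_pos.2 (by lia)) huv)
  refine ⟨_, admissible_add_log hR hRc hu, ?_⟩
  push_cast
  linarith

theorem exists_admissible_exponent {t : ℕ} (ht : 1 ≤ t) (X : ℕ) : ∃ C : ℝ, ∀ d, ∃ y : ℕ,
    Admissible y (coeff (2 * t + 2) d) X ∧
      (y : ℝ) ≤ 2 / (factorial t : ℝ) * ((d : ℝ) + 1) ^ t * logb 2 ((d : ℝ) + 1) +
        C * ((d : ℝ) + 1) ^ t := by
  obtain ⟨C, hC, hlogb⟩ := exists_logb_coeff_le t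
  set K : ℝ := X + 30
  set B : ℝ := 2 * (1 + C) + K
  refine ⟨2 * C + K + logb 2 B + (t + 1) + 3, fun d => ?_⟩
  have hB : 1 ≤ B := by
    have : (0 : ℝ) ≤ X := X.cast_nonneg
    linarith
  set x : ℝ := d + 1 with hxd
  have hx : 1 ≤ x := by simp [hxd]
  have hxt : 1 ≤ x ^ t := one_le_pow₀ hx
  set v := 2 * (leadingTerm t d + C * x ^ t) + K
  have hv : 0 < v := by
    have := leadingTerm_nonneg t d
    positivity
  have hvB : v ≤ B * x ^ (t + 1) := by
    have hK : K * 1 ≤ K * x ^ (t + 1) := by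
      gcongr
      exact one_le_pow₀ hx
    linarith [leadingTerm_add_le_pow hC t d]
  have hlogv : logb 2 v ≤ logb 2 B + (t + 1) * x ^ t :=
    calc logb 2 v ≤ logb 2 (B * x ^ (t + 1)) := Real.logb_le_logb_of_le one_lt_two hv hvB
      _ = logb 2 B + (t + 1) * logb 2 x := by
        rw [Real.logb_mul (by positivity) (by positivity), Real.logb_pow, Nat.cast_add_one]
      _ ≤ logb 2 B + (t + 1) * x ^ t := by
        gcongr
        exact (logb_two_natCast_add_one_le d).trans (le_self_pow₀ hx (by lia))
  obtain ⟨y, hy, hyv⟩ := exists_admissible_le (coeff_pos (2 * t + 2) d) X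
    (add_le_add_left (mul_le_mul_of_nonneg_left (hlogb d).2 zero_le_two) K)
  refine ⟨y, hy, hyv.trans ?_⟩
  have hconst : (K + logb 2 B + 3) * 1 ≤ (K + logb 2 B + 3) * x ^ t := by
    have := Real.logb_nonneg one_lt_two hB
    gcongr
  have hlead : 2 * leadingTerm t d = 2 / (factorial t : ℝ) * x ^ t * logb 2 x := by
    rw [leadingTerm]
    ring
  linarith

end Exponent

end PermVC

/-- For every `t ≥ 1` there is a constant `C_t` such that for every `n ≥ 1`,
every family of `n`-permutations with VC-dimension at most `2t+3` has size at most
`2 ^ (n·((2/t!)·α(n)^t·log₂ α(n) + C_t·α(n)^t))`. -/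
theorem r_odd_upper_bound :
    ∀ t : ℕ, 1 ≤ t → ∃ C : ℝ, ∀ n : ℕ, 1 ≤ n →
      ∀ P : Finset (Equiv.Perm (Fin n)), VCDimLE n (2 * t + 3) P →
        (P.card : ℝ) ≤ (2 : ℝ) ^ ((n : ℝ) *
          ((2 / (Nat.factorial t : ℝ)) * (invAck n : ℝ) ^ t * Real.logb 2 (invAck n)
            + C * (invAck n : ℝ) ^ t)) := by
  intro t ht
  obtain ⟨X, hcard⟩ := PermVC.exists_card_le_of_admissible (2 * t + 2)
  obtain ⟨C, hC⟩ := PermVC.exists_admissible_exponent ht X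
  refine ⟨C, fun n _ P hP => ?_⟩
  obtain ⟨y, hy, hyC⟩ := hC (invAck n - 1)
  have hα : ((invAck n - 1 : ℕ) : ℝ) + 1 = invAck n := by
    exact_mod_cast Nat.sub_add_cancel (PermVC.invAck_mem n).1
  rw [hα] at hyC
  calc (P.card : ℝ) ≤ ((2 ^ y) ^ n : ℕ) := by exact_mod_cast hcard n P hP y hy
    _ = (2 : ℝ) ^ ((n : ℝ) * y) := by
      rw [← pow_mul', ← Nat.cast_mul, Real.rpow_natCast, Nat.cast_pow, Nat.cast_two]
    _ ≤ _ := by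
      gcongr
      exact one_le_two
end

section
/- There exists a constant C such that for every integer n with α(n) ≥ 2C + 2, there is a family of n-permutations of size at least (α(n)/2 − C)^n whose VC-dimension is at most 3; in other words, r₃(n) ≥ (α(n)/2 − C)^n. -/
/-!
Place the symbols `1, …, n` in linearly ordered rows, every symbol in `d` rows, so that no two
symbols alternate as `ababa`, where the order of the symbols within a row is fixed once and for all
by a rank. Choosing for each symbol one of its rows lists the symbols in some order, so the `d ^ n`
choices yield a family of permutations. If four positions are shattered by the family, then their
symbols occur in all `24` orders, which forces two of them to alternate; hence the VC-dimension is
at most `3`. A permutation and the multiset of the chosen rows determine the choice, so with at most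
`n / 4` rows each permutation comes from at most `2 ^ n` choices, and `(d / 2) ^ n` permutations
are left.

An arrangement with `d = α(n) - 8` and at most `n / 4` rows comes from an Ackermann-type recursion.
The symbols are divided into blocks whose symbols start in a common row. From an arrangement of
multiplicity `d` and one of multiplicity `d + 1` we get a new one of multiplicity `d + 1`: insert a
copy of the second above every block of the first, and let each symbol of that block also start in
a block of the copy, becoming its last symbol.
-/

/-- `X` and `Y` alternate if they contain points `x₁ < y₁ < x₂ < y₂ < x₃`, where `xᵢ ∈ X` and
`yᵢ ∈ Y`. Reading the points as occurrences of two letters, this is the pattern `ababa` that is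
forbidden in Davenport–Schinzel sequences of order `3`. -/
def Alternates {P : Type*} [LT P] (X Y : Finset P) : Prop :=
  ∃ x₁ ∈ X, ∃ y₁ ∈ Y, ∃ x₂ ∈ X, ∃ y₂ ∈ Y, ∃ x₃ ∈ X, x₁ < y₁ ∧ y₁ < x₂ ∧ x₂ < y₂ ∧ y₂ < x₃

section Alternates

variable {P Q : Type*}

theorem Alternates.of_forall_lt [LT P] [LT Q] {X Y : Finset P} {X' Y' : Finset Q} (f g : P → Q)
    (hf : ∀ x ∈ X, f x ∈ X') (hg : ∀ y ∈ Y, g y ∈ Y')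
    (hfg : ∀ x ∈ X, ∀ y ∈ Y, x < y → f x < g y) (hgf : ∀ x ∈ X, ∀ y ∈ Y, y < x → g y < f x)
    (h : Alternates X Y) : Alternates X' Y' := by
  obtain ⟨x₁, hx₁, y₁, hy₁, x₂, hx₂, y₂, hy₂, x₃, hx₃, h₁, h₂, h₃, h₄⟩ := h
  exact ⟨f x₁, hf _ hx₁, g y₁, hg _ hy₁, f x₂, hf _ hx₂, g y₂, hg _ hy₂, f x₃, hf _ hx₃,
    hfg _ hx₁ _ hy₁ h₁, hgf _ hx₂ _ hy₁ h₂, hfg _ hx₂ _ hy₂ h₃, hgf _ hx₃ _ hy₂ h₄⟩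

theorem not_alternates_fin_four (X Y : Finset (Fin 4)) : ¬ Alternates X Y := by
  rintro ⟨x₁, -, y₁, -, x₂, -, y₂, -, x₃, -, h₁, h₂, h₃, h₄⟩
  omega

end Alternates

section Shattering

variable {P : Type*} [LinearOrder P]

theorem exists_latest_first {ι : Type*} {A : Finset ι} (hA : A.Nonempty) {O : ι → Finset P}
    (hO : ∀ i ∈ A, (O i).Nonempty) :
    ∃ d ∈ A, ∃ x ∈ O d, (∀ y ∈ O d, x ≤ y) ∧ ∀ i ∈ A, ∃ y ∈ O i, y ≤ x := by
  let first (i : A) : P := (O i).min' (hO i i.2)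
  have mem_first (i : A) : first i ∈ O i := (O i).min'_mem _
  obtain ⟨d, -, hmax⟩ := A.attach.exists_max_image first (A.attach_nonempty_iff.2 hA)
  exact ⟨d, d.2, first d, mem_first d, fun y hy => (O d).min'_le y hy,
    fun i hi => ⟨_, mem_first ⟨i, hi⟩, hmax ⟨i, hi⟩ (A.mem_attach _)⟩⟩

theorem exists_perm_fin_four {c d : Fin 4} (h : c ≠ d) :
    ∃ τ : Equiv.Perm (Fin 4), τ 0 = d ∧ τ 1 = c := by
  revert c d
  decide

theorem alternates_or_alternates_of_cuts {X Y : Finset P} (hXY : Disjoint X Y) {c₁ c₂ : P}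
    (hX₁ : ∃ x ∈ X, x ≤ c₁) (hY₁ : ∃ y ∈ Y, y ≤ c₁)
    (hX₂ : ∃ x ∈ X, c₁ < x ∧ x ≤ c₂) (hY₂ : ∃ y ∈ Y, c₁ < y ∧ y ≤ c₂)
    (hX₃ : ∃ x ∈ X, ∃ y ∈ Y, c₂ < x ∧ x < y) (hY₃ : ∃ y ∈ Y, ∃ x ∈ X, c₂ < y ∧ y < x) :
    Alternates X Y ∨ Alternates Y X := by
  obtain ⟨x₁, hx₁, hx₁c⟩ := hX₁
  obtain ⟨y₁, hy₁, hy₁c⟩ := hY₁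
  rcases (Finset.disjoint_iff_ne.1 hXY _ hx₁ _ hy₁).lt_or_gt with h | h
  · obtain ⟨x₂, hx₂, hcx₂, hx₂c⟩ := hX₂
    obtain ⟨y₃, hy₃, x₃, hx₃, hcy₃, hyx₃⟩ := hY₃
    exact .inl ⟨x₁, hx₁, y₁, hy₁, x₂, hx₂, y₃, hy₃, x₃, hx₃,
      h, hy₁c.trans_lt hcx₂, hx₂c.trans_lt hcy₃, hyx₃⟩
  · obtain ⟨y₂, hy₂, hcy₂, hy₂c⟩ := hY₂
    obtain ⟨x₃, hx₃, y₃, hy₃, hcx₃, hxy₃⟩ := hX₃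
    exact .inr ⟨y₁, hy₁, x₁, hx₁, y₂, hy₂, x₃, hx₃, y₃, hy₃,
      h, hx₁c.trans_lt hcy₂, hy₂c.trans_lt hcx₃, hxy₃⟩

/-- The index `d` whose first occurrence `x` is latest is followed by any two other indices in
either order, so the index `c` that first appears latest after `x`, at `y`, is followed by both
orders of the two remaining indices. -/
theorem exists_alternates_of_forall_perm {O : Fin 4 → Finset P}
    (hdisj : Pairwise fun i j => Disjoint (O i) (O j))
    (hperm : ∀ τ : Equiv.Perm (Fin 4), ∃ p : Fin 4 → P, (∀ i, p i ∈ O (τ i)) ∧ StrictMono p) :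
    ∃ i j, i ≠ j ∧ Alternates (O i) (O j) := by
  have hO (i : Fin 4) : (O i).Nonempty :=
    let ⟨p, hp, _⟩ := hperm 1
    ⟨p i, hp i⟩
  obtain ⟨d, -, x, -, hxd, hbefore⟩ := exists_latest_first Finset.univ_nonempty fun i _ => hO i
  have hO' (i : Fin 4) (hi : i ∈ Finset.univ.erase d) : ((O i).filter (x < ·)).Nonempty := by
    obtain ⟨τ, hτd, hτi⟩ := exists_perm_fin_four (Finset.ne_of_mem_erase hi)
    obtain ⟨p, hp, hmono⟩ := hperm τ
    have hxp : x < p 1 := (hxd _ (hτd ▸ hp 0)).trans_lt (hmono (by decide))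
    exact ⟨p 1, Finset.mem_filter.2 ⟨hτi ▸ hp 1, hxp⟩⟩
  obtain ⟨c, hc, y, -, hyc, hbetween⟩ := exists_latest_first ⟨d + 1, by simp⟩ hO'
  have hafter (τ : Equiv.Perm (Fin 4)) (hd : τ 0 = d) (hc : τ 1 = c) :
      ∃ u ∈ O (τ 2), ∃ v ∈ O (τ 3), y < u ∧ u < v := by
    obtain ⟨p, hp, hmono⟩ := hperm τ
    have hxp : x < p 1 := (hxd _ (hd ▸ hp 0)).trans_lt (hmono (by decide))
    have hyp : y ≤ p 1 := hyc _ (Finset.mem_filter.2 ⟨hc ▸ hp 1, hxp⟩)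
    exact ⟨p 2, hp 2, p 3, hp 3, hyp.trans_lt (hmono (by decide)), hmono (by decide)⟩
  obtain ⟨τ, hτd, hτc⟩ := exists_perm_fin_four (Finset.ne_of_mem_erase hc)
  have hbetween' (i : Fin 4) (hi : i ≠ 0) : ∃ z ∈ O (τ i), x < z ∧ z ≤ y := by
    simpa only [Finset.mem_filter, and_assoc] using hbetween (τ i) (by simpa [← hτd] using hi)
  have hne : τ 2 ≠ τ 3 := τ.injective.ne (by decide)
  have hswap : ∃ u ∈ O (τ 3), ∃ v ∈ O (τ 2), y < u ∧ u < v :=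
    hafter (τ * Equiv.swap 2 3) hτd hτc
  rcases alternates_or_alternates_of_cuts (hdisj hne) (hbefore _ (Finset.mem_univ _))
    (hbefore _ (Finset.mem_univ _)) (hbetween' 2 (by decide)) (hbetween' 3 (by decide))
    (hafter τ hτd hτc) hswap with h | h
  · exact ⟨_, _, hne, h⟩
  · exact ⟨_, _, hne.symm, h⟩

end Shattering

/-- The points at which a symbol occurs if its rows are `X` and its rank is `q`: the symbols of a
row are read in the order of their ranks, so points are ordered lexicographically. -/
def points {A B : Type*} [LinearOrder A] [LinearOrder B] (X : Finset A) (q : B) :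
    Finset (A ×ₗ B) :=
  X.image fun r => toLex (r, q)

section points

variable {A B : Type*} [LinearOrder A] [LinearOrder B] {X Y : Finset A} {p q : B}

theorem mem_points {z : A ×ₗ B} : z ∈ points X q ↔ ∃ r ∈ X, toLex (r, q) = z :=
  Finset.mem_image

theorem disjoint_points (hpq : p ≠ q) : Disjoint (points X p) (points Y q) := by
  simp only [Finset.disjoint_left, mem_points]
  rintro _ ⟨r, -, rfl⟩ ⟨s, -, h⟩
  exact hpq (Prod.ext_iff.1 (toLex_inj.1 h)).2.symm

theorem Alternates.of_points {P : Type*} [LT P] {X' Y' : Finset P} (f g : A → P)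
    (hf : ∀ r ∈ X, f r ∈ X') (hg : ∀ s ∈ Y, g s ∈ Y')
    (hfg : ∀ r ∈ X, ∀ s ∈ Y, toLex (r, p) < toLex (s, q) → f r < g s)
    (hgf : ∀ r ∈ X, ∀ s ∈ Y, toLex (s, q) < toLex (r, p) → g s < f r)
    (h : Alternates (points X p) (points Y q)) : Alternates X' Y' := by
  refine h.of_forall_lt (fun z => f (ofLex z).1) (fun z => g (ofLex z).1) ?_ ?_ ?_ ?_ <;>
    simpa only [points, Finset.forall_mem_image]

theorem Alternates.exists_rows (h : Alternates (points X p) (points Y q)) :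
    ∃ r₁ ∈ X, ∃ s₁ ∈ Y, ∃ r₂ ∈ X, ∃ s₂ ∈ Y, ∃ r₃ ∈ X,
      (r₁ ≤ s₁ ∧ s₁ ≤ r₂ ∧ r₂ ≤ s₂ ∧ s₂ ≤ r₃) ∧ r₁ < r₂ ∧ s₁ < s₂ := by
  obtain ⟨_, hx₁, _, hy₁, _, hx₂, _, hy₂, _, hx₃, h₁, h₂, h₃, h₄⟩ := h
  obtain ⟨r₁, hr₁, rfl⟩ := mem_points.1 hx₁
  obtain ⟨s₁, hs₁, rfl⟩ := mem_points.1 hy₁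
  obtain ⟨r₂, hr₂, rfl⟩ := mem_points.1 hx₂
  obtain ⟨s₂, hs₂, rfl⟩ := mem_points.1 hy₂
  obtain ⟨r₃, hr₃, rfl⟩ := mem_points.1 hx₃
  have lt_of_same_rank {r s : A} {q : B} (h : toLex (r, q) < toLex (s, q)) : r < s := by
    simpa [Prod.Lex.toLex_lt_toLex] using h
  exact ⟨r₁, hr₁, s₁, hs₁, r₂, hr₂, s₂, hs₂, r₃, hr₃,
    ⟨Prod.Lex.monotone_fst _ _ h₁.le, Prod.Lex.monotone_fst _ _ h₂.le,
      Prod.Lex.monotone_fst _ _ h₃.le, Prod.Lex.monotone_fst _ _ h₄.le⟩,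
    lt_of_same_rank (h₁.trans h₂), lt_of_same_rank (h₂.trans h₃)⟩

theorem not_alternates_points_of_monotone {K : Type*} [PartialOrder K] {f : A → K}
    (hf : Monotone f) {k l : K} (hkl : k ≠ l) (hX : ∀ r ∈ X, f r = k) (hY : ∀ s ∈ Y, f s = l) :
    ¬ Alternates (points X p) (points Y q) := by
  intro h
  obtain ⟨r₁, hr₁, s₁, hs₁, r₂, hr₂, -, -, -, -, ⟨hrs, hsr, -, -⟩, -, -⟩ := h.exists_rows
  refine hkl (le_antisymm ?_ ?_)
  · simpa only [hX _ hr₁, hY _ hs₁] using hf hrs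
  · simpa only [hX _ hr₂, hY _ hs₁] using hf hsr

end points

universe u

/-- A placement of the symbols `i : ι` in linearly ordered rows, each symbol in exactly `d` of the
finitely many rows `rows`, such that the points of no two distinct symbols alternate. The order of
the symbols within a row is that of their ranks. -/
structure Arrangement (ι : Type u) (d : ℕ) where
  Row : Type u
  Rank : Type u
  [linearOrderRow : LinearOrder Row]
  [linearOrderRank : LinearOrder Rank]
  rows : Finset Row
  occ : ι → Finset Row
  rank : ι → Rank
  card_occ : ∀ i, (occ i).card = d
  occ_subset_rows : ∀ i, occ i ⊆ rows
  rank_injective : Function.Injective rank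
  not_alternates : ∀ i j, i ≠ j → ¬ Alternates (points (occ i) (rank i)) (points (occ j) (rank j))

attribute [instance] Arrangement.linearOrderRow Arrangement.linearOrderRank

namespace Arrangement

variable {ι κ : Type u} {d : ℕ}

/-- The arrangement of the symbols in the range of `e`, indexed by their preimages. -/
def restrict (A : Arrangement ι d) (e : κ ↪ ι) : Arrangement κ d where
  Row := A.Row
  Rank := A.Rank
  rows := A.rows
  occ i := A.occ (e i)
  rank i := A.rank (e i)
  card_occ i := A.card_occ (e i)
  occ_subset_rows i := A.occ_subset_rows (e i)
  rank_injective := A.rank_injective.comp e.injective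
  not_alternates i j hij := A.not_alternates (e i) (e j) (e.injective.ne hij)

/-- Copies of an arrangement indexed by `κ`, placed one below the other. -/
def copies (κ : Type u) [LinearOrder κ] [Fintype κ] (A : Arrangement ι d) :
    Arrangement (κ × ι) d where
  Row := κ ×ₗ A.Row
  Rank := κ ×ₗ A.Rank
  rows := (Finset.univ ×ˢ A.rows).map toLex.toEmbedding
  occ i := (A.occ i.2).image fun r => toLex (i.1, r)
  rank i := toLex (i.1, A.rank i.2)
  card_occ i := by
    rw [Finset.card_image_of_injective _ fun r s h => (Prod.ext_iff.1 (toLex_inj.1 h)).2,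
      A.card_occ]
  occ_subset_rows i := by
    simpa [Finset.subset_iff] using fun r hr => A.occ_subset_rows i.2 hr
  rank_injective := by
    rintro ⟨k, i⟩ ⟨l, j⟩ h
    obtain ⟨hkl, hij⟩ := Prod.ext_iff.1 (toLex_inj.1 h)
    exact Prod.ext hkl (A.rank_injective hij)
  not_alternates := by
    rintro ⟨k, i⟩ ⟨l, j⟩ hne
    rcases eq_or_ne k l with rfl | hkl
    · refine mt (Alternates.of_points (fun r => toLex ((ofLex r).2, A.rank i))
        (fun s => toLex ((ofLex s).2, A.rank j)) ?_ ?_ ?_ ?_)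
        (A.not_alternates i j fun hij => hne (by rw [hij])) <;>
        simp [mem_points, Prod.Lex.toLex_lt_toLex]
    · exact not_alternates_points_of_monotone Prod.Lex.monotone_fst_ofLex hkl
        (by simp) (by simp)

theorem card_rows_copies (κ : Type u) [LinearOrder κ] [Fintype κ] (A : Arrangement ι d) :
    (A.copies κ).rows.card = Fintype.card κ * A.rows.card := by
  simp [copies]

end Arrangement

/-- An arrangement of symbols `(s, t)` that form blocks `{s} × T`. All the symbols of the block
`s` have the same first row `start s`, which contains no symbol of another block, and the other
rows of `(s, t)` all precede the other rows of `(s, t')` if `t < t'`. -/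
structure BlockArrangement (S T : Type u) [LinearOrder S] [LinearOrder T] (d : ℕ) extends
    Arrangement (S × T) d where
  start : S → Row
  start_mem_rows : ∀ s, start s ∈ rows
  start_strictMono : StrictMono start
  isLeast_start : ∀ s t, IsLeast (occ (s, t) : Set Row) (start s)
  eq_of_start_mem : ∀ {s s' t}, start s ∈ occ (s', t) → s = s'
  lt_of_ne_start : ∀ {s t t' r r'}, t < t' → r ∈ occ (s, t) → r' ∈ occ (s, t') →
    r ≠ start s → r' ≠ start s → r < r'
  rank_strictAnti : ∀ s, StrictAnti fun t => rank (s, t)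

namespace BlockArrangement

variable {S S' T T' : Type u} [LinearOrder S] [LinearOrder S'] [LinearOrder T] [LinearOrder T']
  {d : ℕ}

/-- The arrangement that places each block in a single row. The hypothesis on `d` is vacuous if
there are no symbols. -/
def single (S T : Type u) [LinearOrder S] [LinearOrder T] [Fintype S] (hd : T → d = 1) :
    BlockArrangement S T d where
  Row := S
  Rank := S ×ₗ Tᵒᵈ
  rows := Finset.univ
  occ p := {p.1}
  rank p := toLex (p.1, OrderDual.toDual p.2)
  card_occ p := by rw [Finset.card_singleton, hd p.2]
  occ_subset_rows _ := Finset.subset_univ _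
  rank_injective := by
    rintro ⟨s, t⟩ ⟨s', t'⟩ h
    simpa using h
  not_alternates p q _ h := by
    obtain ⟨r₁, hr₁, -, -, r₂, hr₂, -, -, -, -, -, hlt, -⟩ := h.exists_rows
    rw [Finset.mem_singleton.1 hr₁, Finset.mem_singleton.1 hr₂] at hlt
    exact hlt.false
  start := id
  start_mem_rows := Finset.mem_univ
  start_strictMono := strictMono_id
  isLeast_start s t := by simp
  eq_of_start_mem := Finset.mem_singleton.1
  lt_of_ne_start _ hr _ hne := absurd (Finset.mem_singleton.1 hr) hne
  rank_strictAnti s t t' h := by simpa [Prod.Lex.toLex_lt_toLex] using h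

/-- The arrangement obtained by renaming blocks and the symbols within blocks, preserving their
orders. -/
def reindex (Z : BlockArrangement S T d) (e : S' ≃o S) (f : T' ≃o T) :
    BlockArrangement S' T' d where
  toArrangement := Z.restrict (e.toEquiv.prodCongr f.toEquiv).toEmbedding
  start s := Z.start (e s)
  start_mem_rows s := Z.start_mem_rows (e s)
  start_strictMono := Z.start_strictMono.comp e.strictMono
  isLeast_start s t := Z.isLeast_start (e s) (f t)
  eq_of_start_mem h := e.injective (Z.eq_of_start_mem h)
  lt_of_ne_start h := Z.lt_of_ne_start (f.strictMono h)
  rank_strictAnti s := (Z.rank_strictAnti (e s)).comp_strictMono f.strictMono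

section compose

variable (Zs : BlockArrangement S S' d) (Z : BlockArrangement S' T (d + 1))

/-- Rows of `compose Zs Z`: `(r, ⊤)` is the row `r` of `Zs`, and `(start i, r)` is the row `r` of
the copy of `Z` that is inserted directly above the first row `(start i, ⊤)` of the block `i`. -/
abbrev ComposeRow : Type u := Zs.Row ×ₗ WithTop Z.Row

/-- Ranks of `compose Zs Z`: the symbols inherited from `Zs` come before those of the copies
of `Z`. -/
abbrev ComposeRank : Type u := Zs.Rank ⊕ₗ (S ×ₗ Z.Rank)

/-- The first row of the block `(i, j)` of `compose Zs Z`. -/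
def composeStart (i : S) (j : S') : ComposeRow Zs Z :=
  toLex (Zs.start i, (Z.start j : WithTop Z.Row))

/-- The rows of the symbol `((i, j), t)` of `compose Zs Z`. The symbol `(i, j)` of `Zs` becomes the
last symbol `((i, j), ⊤)` of the block `(i, j)` and additionally occurs in the first row of this
block. -/
def composeOcc (i : S) (j : S') : WithTop T → Finset (ComposeRow Zs Z)
  | none => insert (composeStart Zs Z i j) ((Zs.occ (i, j)).image fun r => toLex (r, ⊤))
  | some t => (Z.occ (j, t)).image fun r : Z.Row => toLex (Zs.start i, (r : WithTop Z.Row))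

/-- The rank of the symbol `((i, j), t)` of `compose Zs Z`. -/
def composeRank (i : S) (j : S') : WithTop T → ComposeRank Zs Z
  | none => toLex (Sum.inl (Zs.rank (i, j)))
  | some t => toLex (Sum.inr (toLex (i, Z.rank (j, t))))

/-- All the rows of `compose Zs Z`. -/
def composeRows [Fintype S] : Finset (ComposeRow Zs Z) :=
  (Zs.rows.image fun r => toLex (r, ⊤)) ∪
    (Finset.univ ×ˢ Z.rows).image fun p => toLex (Zs.start p.1, (p.2 : WithTop Z.Row))

variable {Zs Z} {i i' : S} {j j' : S'} {t t' : WithTop T} {r s : ComposeRow Zs Z}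

theorem mem_composeOcc_top : r ∈ composeOcc Zs Z i j ⊤ ↔
    r = composeStart Zs Z i j ∨ ∃ a ∈ Zs.occ (i, j), toLex (a, ⊤) = r := by
  simp [composeOcc, WithTop.none_eq_top.symm]

theorem mem_composeOcc_coe {t : T} : r ∈ composeOcc Zs Z i j t ↔
    ∃ b ∈ Z.occ (j, t), toLex (Zs.start i, (b : WithTop Z.Row)) = r :=
  Finset.mem_image

theorem composeRank_top : composeRank Zs Z i j ⊤ = toLex (Sum.inl (Zs.rank (i, j))) := rfl

theorem composeRank_coe {t : T} :
    composeRank Zs Z i j t = toLex (Sum.inr (toLex (i, Z.rank (j, t)))) := rfl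

theorem mem_composeRows_top [Fintype S] {a : Zs.Row} (ha : a ∈ Zs.rows) :
    toLex (a, ⊤) ∈ composeRows Zs Z :=
  Finset.mem_union_left _ (Finset.mem_image_of_mem _ ha)

theorem mem_composeRows_coe [Fintype S] (i : S) {b : Z.Row} (hb : b ∈ Z.rows) :
    toLex (Zs.start i, (b : WithTop Z.Row)) ∈ composeRows Zs Z :=
  Finset.mem_union_right _ (Finset.mem_image.2
    ⟨(i, b), Finset.mem_product.2 ⟨Finset.mem_univ _, hb⟩, rfl⟩)

variable (Zs Z) in
theorem card_composeRows_le [Fintype S] :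
    (composeRows Zs Z).card ≤ Zs.rows.card + Fintype.card S * Z.rows.card := by
  refine (Finset.card_union_le _ _).trans (add_le_add Finset.card_image_le ?_)
  simpa using Finset.card_image_le (s := Finset.univ ×ˢ Z.rows)

theorem composeOcc_subset_composeRows [Fintype S] : composeOcc Zs Z i j t ⊆ composeRows Zs Z := by
  intro r hr
  induction t with
  | top =>
    obtain rfl | ⟨a, ha, rfl⟩ := mem_composeOcc_top.1 hr
    · exact mem_composeRows_coe i (Z.start_mem_rows j)
    · exact mem_composeRows_top (Zs.occ_subset_rows _ ha)
  | coe t =>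
    obtain ⟨b, hb, rfl⟩ := mem_composeOcc_coe.1 hr
    exact mem_composeRows_coe i (Z.occ_subset_rows _ hb)

theorem card_composeOcc : (composeOcc Zs Z i j t).card = d + 1 := by
  induction t with
  | top =>
    have hstart : composeStart Zs Z i j ∉ (Zs.occ (i, j)).image fun r => toLex (r, ⊤) := by
      simp [composeStart]
    change (insert _ _ : Finset (ComposeRow Zs Z)).card = _
    rw [Finset.card_insert_of_notMem hstart, Finset.card_image_of_injective, Zs.card_occ]
    exact fun a b h => (Prod.ext_iff.1 (toLex_inj.1 h)).1
  | coe t =>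
    refine (Finset.card_image_of_injective _ fun b c h => ?_).trans (Z.card_occ _)
    simpa using h

theorem isLeast_composeStart : IsLeast (composeOcc Zs Z i j t : Set _) (composeStart Zs Z i j) := by
  induction t with
  | top =>
    refine ⟨mem_composeOcc_top.2 (.inl rfl), fun r hr => ?_⟩
    obtain rfl | ⟨a, ha, rfl⟩ := mem_composeOcc_top.1 hr
    · exact le_rfl
    · exact Prod.Lex.toLex_mono ⟨(Zs.isLeast_start i j).2 ha, le_top⟩
  | coe t =>
    refine ⟨mem_composeOcc_coe.2 ⟨_, (Z.isLeast_start j t).1, rfl⟩, fun r hr => ?_⟩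
    obtain ⟨b, hb, rfl⟩ := mem_composeOcc_coe.1 hr
    exact Prod.Lex.toLex_mono ⟨le_rfl, WithTop.coe_le_coe.2 ((Z.isLeast_start j t).2 hb)⟩

theorem composeStart_strictMono :
    StrictMono fun s : S ×ₗ S' => composeStart Zs Z (ofLex s).1 (ofLex s).2 := by
  intro s s' h
  rcases Prod.Lex.lt_iff.1 h with h | ⟨hi, hj⟩
  · exact Prod.Lex.lt_iff.2 (.inl (Zs.start_strictMono h))
  · exact Prod.Lex.lt_iff.2
      (.inr ⟨congrArg Zs.start hi, WithTop.coe_lt_coe.2 (Z.start_strictMono hj)⟩)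

theorem eq_and_eq_of_composeStart_eq (h : composeStart Zs Z i j = composeStart Zs Z i' j') :
    i = i' ∧ j = j' := by
  obtain ⟨hi, hj⟩ := Prod.ext_iff.1 (toLex_inj.1 h)
  exact ⟨Zs.start_strictMono.injective hi,
    Z.start_strictMono.injective (WithTop.coe_injective hj)⟩

theorem eq_and_eq_of_composeStart_mem (h : composeStart Zs Z i j ∈ composeOcc Zs Z i' j' t) :
    i = i' ∧ j = j' := by
  induction t with
  | top =>
    obtain h | ⟨a, -, h⟩ := mem_composeOcc_top.1 h
    · exact eq_and_eq_of_composeStart_eq h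
    · exact absurd (Prod.ext_iff.1 (toLex_inj.1 h)).2 WithTop.top_ne_coe
  | coe t =>
    obtain ⟨b, hb, h⟩ := mem_composeOcc_coe.1 h
    obtain ⟨hi, hj⟩ := Prod.ext_iff.1 (toLex_inj.1 h)
    obtain rfl : b = Z.start j := WithTop.coe_injective hj
    exact ⟨(Zs.start_strictMono.injective hi).symm, Z.eq_of_start_mem hb⟩

theorem lt_of_ne_composeStart (htt : t < t') (hr : r ∈ composeOcc Zs Z i j t)
    (hs : s ∈ composeOcc Zs Z i j t') (hr' : r ≠ composeStart Zs Z i j)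
    (hs' : s ≠ composeStart Zs Z i j) : r < s := by
  induction t with
  | top => exact absurd htt not_top_lt
  | coe t =>
    obtain ⟨b, hb, rfl⟩ := mem_composeOcc_coe.1 hr
    induction t' with
    | top =>
      obtain rfl | ⟨a, ha, rfl⟩ := mem_composeOcc_top.1 hs
      · exact absurd rfl hs'
      · exact Prod.Lex.toLex_lt_toLex'.2
          ⟨(Zs.isLeast_start i j).2 ha, fun _ => WithTop.coe_lt_top b⟩
    | coe t' =>
      obtain ⟨c, hc, rfl⟩ := mem_composeOcc_coe.1 hs
      refine Prod.Lex.toLex_lt_toLex.2 (.inr ⟨rfl, WithTop.coe_lt_coe.2 ?_⟩)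
      refine Z.lt_of_ne_start (WithTop.coe_lt_coe.1 htt) hb hc ?_ ?_
      · rintro rfl
        exact hr' rfl
      · rintro rfl
        exact hs' rfl

theorem composeRank_strictAnti : StrictAnti (composeRank Zs Z i j) := by
  intro t t' htt
  induction t with
  | top => exact absurd htt not_top_lt
  | coe t =>
    induction t' with
    | top => exact Sum.Lex.inl_lt_inr _ _
    | coe t' =>
      exact Sum.Lex.inr_lt_inr_iff.2
        (Prod.Lex.toLex_lt_toLex.2 (.inr ⟨rfl, Z.rank_strictAnti j (WithTop.coe_lt_coe.1 htt)⟩))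

theorem eq_of_composeRank_eq (h : composeRank Zs Z i j t = composeRank Zs Z i' j' t') :
    i = i' ∧ j = j' ∧ t = t' := by
  induction t <;> induction t' <;>
    simp only [composeRank_top, composeRank_coe, toLex_inj, Sum.inl.injEq, Sum.inr.injEq,
      reduceCtorEq, Prod.mk.injEq, Zs.rank_injective.eq_iff, Z.rank_injective.eq_iff] at h
  · exact ⟨h.1, h.2, rfl⟩
  · exact ⟨h.1, h.2.1, congrArg _ h.2.2⟩

theorem eq_composeStart_of_mem_of_le_of_le {k : S} {b c : Z.Row}
    (hr : r ∈ composeOcc Zs Z i j ⊤) (hb : toLex (Zs.start k, (b : WithTop Z.Row)) ≤ r)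
    (hc : r ≤ toLex (Zs.start k, (c : WithTop Z.Row))) : r = composeStart Zs Z i j := by
  obtain h | ⟨a, -, rfl⟩ := mem_composeOcc_top.1 hr
  · exact h
  · have hka : Zs.start k ≤ a := Prod.Lex.monotone_fst _ _ hb
    exact absurd hc (by simp [Prod.Lex.toLex_le_toLex, hka.not_gt])

theorem not_alternates_compose_coe_coe {t t' : T} (hne : ¬ (i = i' ∧ j = j' ∧ t = t')) :
    ¬ Alternates (points (composeOcc Zs Z i j t) (composeRank Zs Z i j t))
      (points (composeOcc Zs Z i' j' t') (composeRank Zs Z i' j' t')) := by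
  rcases eq_or_ne i i' with rfl | hi
  · have hp : (j, t) ≠ (j', t') := fun h => hne ⟨rfl, Prod.ext_iff.1 h⟩
    let φ (r : ComposeRow Zs Z) : Z.Row := (ofLex r).2.untopD (Z.start j)
    refine mt (Alternates.of_points (fun r => toLex (φ r, Z.rank (j, t)))
      (fun r => toLex (φ r, Z.rank (j', t'))) ?_ ?_ ?_ ?_) (Z.not_alternates _ _ hp) <;>
      simp [composeOcc, φ, mem_points, composeRank_coe, Prod.Lex.toLex_lt_toLex]
  · exact not_alternates_points_of_monotone Prod.Lex.monotone_fst_ofLex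
      (Zs.start_strictMono.injective.ne hi) (by simp [composeOcc]) (by simp [composeOcc])

theorem not_alternates_compose_coe_top {t : T} :
    ¬ Alternates (points (composeOcc Zs Z i j t) (composeRank Zs Z i j t))
      (points (composeOcc Zs Z i' j' ⊤) (composeRank Zs Z i' j' ⊤)) := by
  intro h
  obtain ⟨r₁, hr₁, s₁, hs₁, r₂, hr₂, s₂, hs₂, r₃, hr₃, ⟨h₁, h₂, h₃, h₄⟩, -, hlt⟩ := h.exists_rows
  obtain ⟨b₁, -, rfl⟩ := mem_composeOcc_coe.1 hr₁
  obtain ⟨b₂, -, rfl⟩ := mem_composeOcc_coe.1 hr₂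
  obtain ⟨b₃, -, rfl⟩ := mem_composeOcc_coe.1 hr₃
  rw [eq_composeStart_of_mem_of_le_of_le hs₁ h₁ h₂,
    eq_composeStart_of_mem_of_le_of_le hs₂ h₃ h₄] at hlt
  exact hlt.false

theorem not_alternates_compose_top_coe {t' : T} :
    ¬ Alternates (points (composeOcc Zs Z i j ⊤) (composeRank Zs Z i j ⊤))
      (points (composeOcc Zs Z i' j' t') (composeRank Zs Z i' j' t')) := by
  intro h
  obtain ⟨r₁, hr₁, s₁, hs₁, r₂, hr₂, s₂, hs₂, -, -, ⟨-, h₂, h₃, -⟩, hlt, -⟩ := h.exists_rows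
  obtain ⟨b₁, -, rfl⟩ := mem_composeOcc_coe.1 hs₁
  obtain ⟨b₂, -, rfl⟩ := mem_composeOcc_coe.1 hs₂
  rw [eq_composeStart_of_mem_of_le_of_le hr₂ h₂ h₃] at hlt
  exact (isLeast_composeStart.2 hr₁).not_gt hlt

theorem fst_mem_occ_of_mem_composeOcc_top (hr : r ∈ composeOcc Zs Z i j ⊤) :
    (ofLex r).1 ∈ Zs.occ (i, j) := by
  obtain rfl | ⟨a, ha, rfl⟩ := mem_composeOcc_top.1 hr
  · exact (Zs.isLeast_start i j).1
  · exact ha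

theorem eq_of_mem_composeOcc_top_of_fst_eq (hi : i ≠ i') (hr : r ∈ composeOcc Zs Z i j ⊤)
    (hs : s ∈ composeOcc Zs Z i' j' ⊤) (hrs : (ofLex r).1 = (ofLex s).1) : r = s := by
  obtain rfl | ⟨a, -, rfl⟩ := mem_composeOcc_top.1 hr
  · have h := fst_mem_occ_of_mem_composeOcc_top hs
    rw [← hrs] at h
    exact absurd (Zs.eq_of_start_mem h) hi
  · obtain rfl | ⟨b, -, rfl⟩ := mem_composeOcc_top.1 hs
    · have h := fst_mem_occ_of_mem_composeOcc_top hr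
      rw [hrs] at h
      exact absurd (Zs.eq_of_start_mem h) hi.symm
    · exact congrArg (fun a => toLex (a, ⊤)) hrs

theorem toLex_fst_lt_toLex_fst_of_mem_composeOcc_top (hi : i ≠ i')
    (hr : r ∈ composeOcc Zs Z i j ⊤) (hs : s ∈ composeOcc Zs Z i' j' ⊤)
    (h : toLex (r, composeRank Zs Z i j ⊤) < toLex (s, composeRank Zs Z i' j' ⊤)) :
    toLex ((ofLex r).1, Zs.rank (i, j)) < toLex ((ofLex s).1, Zs.rank (i', j')) := by
  rw [Prod.Lex.toLex_lt_toLex'] at h ⊢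
  have hfst : (ofLex r).1 ≤ (ofLex s).1 := Prod.Lex.monotone_fst_ofLex h.1
  refine ⟨hfst, fun hrs => ?_⟩
  exact Sum.Lex.inl_lt_inl_iff.1 (h.2 (eq_of_mem_composeOcc_top_of_fst_eq hi hr hs hrs))

theorem not_alternates_compose_top_top_of_ne (hi : i ≠ i') :
    ¬ Alternates (points (composeOcc Zs Z i j ⊤) (composeRank Zs Z i j ⊤))
      (points (composeOcc Zs Z i' j' ⊤) (composeRank Zs Z i' j' ⊤)) := by
  have hne : (i, j) ≠ (i', j') := fun h => hi (congrArg Prod.fst h)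
  refine mt (Alternates.of_points (fun r => toLex ((ofLex r).1, Zs.rank (i, j)))
    (fun s => toLex ((ofLex s).1, Zs.rank (i', j'))) ?_ ?_ ?_ ?_) (Zs.not_alternates _ _ hne)
  · exact fun r hr => mem_points.2 ⟨_, fst_mem_occ_of_mem_composeOcc_top hr, rfl⟩
  · exact fun s hs => mem_points.2 ⟨_, fst_mem_occ_of_mem_composeOcc_top hs, rfl⟩
  · exact fun r hr s hs => toLex_fst_lt_toLex_fst_of_mem_composeOcc_top hi hr hs
  · exact fun r hr s hs => toLex_fst_lt_toLex_fst_of_mem_composeOcc_top hi.symm hs hr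

theorem composeStart_lt_of_mem_composeOcc_top (hj : j < j') (hs : s ∈ composeOcc Zs Z i j' ⊤) :
    composeStart Zs Z i j < s := by
  have hlt : toLex (i, j) < toLex (i, j') := Prod.Lex.toLex_lt_toLex.2 (.inr ⟨rfl, hj⟩)
  exact (composeStart_strictMono hlt).trans_le (isLeast_composeStart.2 hs)

theorem exists_eq_top_of_ne_composeStart (hr : r ∈ composeOcc Zs Z i j ⊤)
    (hne : r ≠ composeStart Zs Z i j) : ∃ a ∈ Zs.occ (i, j), Zs.start i ≤ a ∧ toLex (a, ⊤) = r := by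
  obtain ⟨a, ha, har⟩ := (mem_composeOcc_top.1 hr).resolve_left hne
  exact ⟨a, ha, (Zs.isLeast_start i j).2 ha, har⟩

theorem lt_of_mem_composeOcc_top_of_start_lt (hj : j < j') (hr : r ∈ composeOcc Zs Z i j ⊤)
    (hne : r ≠ composeStart Zs Z i j) (hs : s ∈ composeOcc Zs Z i j' ⊤)
    (hlt : toLex (Zs.start i, ⊤) < s) : r < s := by
  have hs' : s ≠ composeStart Zs Z i j' := by
    rintro rfl
    simp [composeStart, Prod.Lex.toLex_lt_toLex] at hlt
  obtain ⟨a, ha, -, rfl⟩ := exists_eq_top_of_ne_composeStart hr hne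
  obtain ⟨b, hb, -, rfl⟩ := exists_eq_top_of_ne_composeStart hs hs'
  simp only [Prod.Lex.toLex_lt_toLex, lt_self_iff_false, and_false, or_false] at hlt ⊢
  rcases eq_or_ne a (Zs.start i) with rfl | hai
  · exact hlt
  · exact Zs.lt_of_ne_start hj ha hb hai hlt.ne'

/-- The first row of `((i, j), ⊤)`, the rows up to `(start i, ⊤)` of `((i, j'), ⊤)`, the remaining
rows of `((i, j), ⊤)` and those of `((i, j'), ⊤)` follow each other in this order. -/
theorem exists_phases_compose_top_top (hj : j < j') :
    ∃ f g : ComposeRow Zs Z → Fin 4,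
      ∀ r ∈ composeOcc Zs Z i j ⊤, ∀ s ∈ composeOcc Zs Z i j' ⊤,
        (toLex (r, composeRank Zs Z i j ⊤) < toLex (s, composeRank Zs Z i j' ⊤) → f r < g s) ∧
        (toLex (s, composeRank Zs Z i j' ⊤) < toLex (r, composeRank Zs Z i j ⊤) → g s < f r) := by
  refine ⟨fun r => if r = composeStart Zs Z i j then 0 else 2,
    fun s => if s ≤ toLex (Zs.start i, ⊤) then 1 else 3, fun r hr s hs => ?_⟩
  have hrank : composeRank Zs Z i j' ⊤ < composeRank Zs Z i j ⊤ :=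
    Sum.Lex.inl_lt_inl_iff.2 (Zs.rank_strictAnti i hj)
  simp only [Prod.Lex.toLex_lt_toLex', hrank, hrank.not_gt, implies_true, and_true]
  rcases eq_or_ne r (composeStart Zs Z i j) with rfl | hr'
  · have hlt := composeStart_lt_of_mem_composeOcc_top hj hs
    rw [if_pos rfl]
    split_ifs <;> simp [hlt.not_ge]
  rw [if_neg hr']
  split_ifs with hs'
  · obtain ⟨a, -, hia, rfl⟩ := exists_eq_top_of_ne_composeStart hr hr'
    have hsa : s ≤ toLex (a, ⊤) := hs'.trans (Prod.Lex.toLex_mono ⟨hia, le_rfl⟩)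
    simp [hsa.ge_iff_eq']
  · have hrs : r < s := lt_of_mem_composeOcc_top_of_start_lt hj hr hr' hs (not_le.1 hs')
    simp [hrs.not_ge]

theorem not_alternates_compose_top_top_of_lt (hj : j < j') :
    ¬ Alternates (points (composeOcc Zs Z i j ⊤) (composeRank Zs Z i j ⊤))
        (points (composeOcc Zs Z i j' ⊤) (composeRank Zs Z i j' ⊤)) ∧
      ¬ Alternates (points (composeOcc Zs Z i j' ⊤) (composeRank Zs Z i j' ⊤))
        (points (composeOcc Zs Z i j ⊤) (composeRank Zs Z i j ⊤)) := by
  obtain ⟨f, g, hfg⟩ := exists_phases_compose_top_top (i := i) (Zs := Zs) (Z := Z) hj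
  constructor <;> refine fun h => not_alternates_fin_four Finset.univ Finset.univ ?_
  · exact h.of_points f g (by simp) (by simp) (fun r hr s hs => (hfg r hr s hs).1)
      fun r hr s hs => (hfg r hr s hs).2
  · exact h.of_points g f (by simp) (by simp) (fun s hs r hr => (hfg r hr s hs).2)
      fun s hs r hr => (hfg r hr s hs).1

theorem not_alternates_compose (hne : ¬ (i = i' ∧ j = j' ∧ t = t')) :
    ¬ Alternates (points (composeOcc Zs Z i j t) (composeRank Zs Z i j t))
      (points (composeOcc Zs Z i' j' t') (composeRank Zs Z i' j' t')) := by
  induction t with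
  | coe t =>
    induction t' with
    | coe t' => exact not_alternates_compose_coe_coe (by simpa using hne)
    | top => exact not_alternates_compose_coe_top
  | top =>
    induction t' with
    | coe t' => exact not_alternates_compose_top_coe
    | top =>
      rcases eq_or_ne i i' with rfl | hi
      · rcases lt_trichotomy j j' with hj | rfl | hj
        · exact (not_alternates_compose_top_top_of_lt hj).1
        · exact absurd ⟨rfl, rfl, rfl⟩ hne
        · exact (not_alternates_compose_top_top_of_lt hj).2
      · exact not_alternates_compose_top_top_of_ne hi

variable (Zs Z) in
/-- The arrangement obtained from `Zs` by inserting a copy of `Z` directly above the first row of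
each block `i` and extending the symbol `(i, j)`, for every `j`, to the first row of the block `j`
of this copy, where it becomes a new last symbol. -/
def compose [Fintype S] : BlockArrangement (S ×ₗ S') (WithTop T) (d + 1) where
  Row := ComposeRow Zs Z
  Rank := ComposeRank Zs Z
  rows := composeRows Zs Z
  occ p := composeOcc Zs Z (ofLex p.1).1 (ofLex p.1).2 p.2
  rank p := composeRank Zs Z (ofLex p.1).1 (ofLex p.1).2 p.2
  card_occ _ := card_composeOcc
  occ_subset_rows _ := composeOcc_subset_composeRows
  rank_injective p q h := by
    obtain ⟨hi, hj, ht⟩ := eq_of_composeRank_eq h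
    exact Prod.ext (ofLex_inj.1 (Prod.ext hi hj)) ht
  not_alternates p q hne := not_alternates_compose fun ⟨hi, hj, ht⟩ =>
    hne (Prod.ext (ofLex_inj.1 (Prod.ext hi hj)) ht)
  start s := composeStart Zs Z (ofLex s).1 (ofLex s).2
  start_mem_rows s := mem_composeRows_coe _ (Z.start_mem_rows (ofLex s).2)
  start_strictMono := composeStart_strictMono
  isLeast_start _ _ := isLeast_composeStart
  eq_of_start_mem h :=
    ofLex_inj.1 (Prod.ext (eq_and_eq_of_composeStart_mem h).1 (eq_and_eq_of_composeStart_mem h).2)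
  lt_of_ne_start := lt_of_ne_composeStart
  rank_strictAnti s := composeRank_strictAnti (i := (ofLex s).1) (j := (ofLex s).2)

end compose

end BlockArrangement

/-- The number of blocks of the arrangements with blocks of size `m` and multiplicity `d + 1` that
are obtained by iterating `BlockArrangement.compose`. -/
def blockCount : ℕ → ℕ → ℕ
  | 0, _ => 2
  | _ + 1, 0 => 1
  | d + 1, m + 1 => blockCount d (blockCount (d + 1) m) * blockCount (d + 1) m

section blockCount

theorem blockCount_zero (m : ℕ) : blockCount 0 m = 2 := by rw [blockCount]

theorem blockCount_succ_zero (d : ℕ) : blockCount (d + 1) 0 = 1 := by rw [blockCount]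

theorem blockCount_succ_succ (d m : ℕ) : blockCount (d + 1) (m + 1) =
    blockCount d (blockCount (d + 1) m) * blockCount (d + 1) m := by rw [blockCount]

theorem blockCount_pos (d m : ℕ) : 0 < blockCount d m := by
  induction d generalizing m with
  | zero => simp [blockCount_zero]
  | succ d ihd =>
    induction m with
    | zero => simp [blockCount_succ_zero]
    | succ m ihm => simpa [blockCount_succ_succ] using ⟨ihd _, ihm⟩

theorem two_le_blockCount (d : ℕ) {m : ℕ} (hm : 1 ≤ m) : 2 ≤ blockCount d m := by
  induction d generalizing m with
  | zero => simp [blockCount_zero]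
  | succ d ih =>
    obtain ⟨m, rfl⟩ := Nat.exists_eq_add_of_le' hm
    rw [blockCount_succ_succ]
    exact (ih (blockCount_pos _ _)).trans (Nat.le_mul_of_pos_right _ (blockCount_pos _ _))

theorem monotone_blockCount (d : ℕ) : Monotone (blockCount d) := by
  refine monotone_nat_of_le_succ fun m => ?_
  cases d with
  | zero => simp only [blockCount_zero, le_refl]
  | succ d =>
    rw [blockCount_succ_succ]
    exact Nat.le_mul_of_pos_left _ (blockCount_pos _ _)

end blockCount

namespace BlockArrangement

theorem exists_reindex_fin {S T : Type} [LinearOrder S] [LinearOrder T] [Fintype S] [Fintype T]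
    {d f m : ℕ} (Z : BlockArrangement S T d) (hS : Fintype.card S = f) (hT : Fintype.card T = m) :
    ∃ Z' : BlockArrangement (Fin f) (Fin m) d, Z'.rows.card = Z.rows.card :=
  ⟨Z.reindex (Fintype.orderIsoFinOfCardEq S hS) (Fintype.orderIsoFinOfCardEq T hT), rfl⟩

theorem exists_compose_fin {d f g m : ℕ} (Zs : BlockArrangement (Fin g) (Fin f) d)
    (Z : BlockArrangement (Fin f) (Fin m) (d + 1)) :
    ∃ Z' : BlockArrangement (Fin (g * f)) (Fin (m + 1)) (d + 1),
      Z'.rows.card ≤ Zs.rows.card + g * Z.rows.card := by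
  obtain ⟨Z', hZ'⟩ := (compose Zs Z).exists_reindex_fin (f := g * f) (m := m + 1) (by simp)
    (Fintype.card_option.trans (by rw [Fintype.card_fin]))
  have hcard := card_composeRows_le Zs Z
  rw [Fintype.card_fin] at hcard
  exact ⟨Z', hZ'.trans_le hcard⟩

/-- The terms `2 ^ (d + 1) + blockCount d m` and `2` make the bound strong enough for the
induction. -/
theorem exists_card_rows_add_le (d m : ℕ) :
    ∃ Z : BlockArrangement (Fin (blockCount d m)) (Fin m) (d + 1),
      Z.rows.card + (2 ^ (d + 1) + blockCount d m) ≤ 2 ^ (d + 1) * blockCount d m + 2 := by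
  induction d generalizing m with
  | zero => exact ⟨single _ _ fun _ => rfl, by simp [single, blockCount_zero]⟩
  | succ d ihd =>
    induction m with
    | zero => exact ⟨single _ _ fun t => t.elim0, by simp [single, blockCount_succ_zero]; omega⟩
    | succ m ihm =>
      obtain ⟨Z, hZ⟩ := ihm
      rw [blockCount_succ_succ]
      have hf : 1 ≤ blockCount (d + 1) m := blockCount_pos _ _
      generalize blockCount (d + 1) m = f at *
      obtain ⟨Zs, hZs⟩ := ihd f
      have hg : 2 ≤ blockCount d f := two_le_blockCount d hf
      generalize blockCount d f = g at *
      obtain ⟨Z', hZ'⟩ := exists_compose_fin Zs Z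
      refine ⟨Z', ?_⟩
      have hP : 2 ≤ 2 ^ (d + 1) := by simpa using Nat.pow_le_pow_right two_pos (Nat.le_add_left 1 d)
      rw [pow_succ _ (d + 1)] at hZ ⊢
      generalize 2 ^ (d + 1) = P at *
      nlinarith [Nat.mul_le_mul_left g hZ, Nat.add_le_mul hP hg]

theorem exists_card_rows_le (d m : ℕ) :
    ∃ Z : BlockArrangement (Fin (blockCount d m)) (Fin m) (d + 1),
      Z.rows.card ≤ 2 ^ (d + 1) * blockCount d m := by
  obtain ⟨Z, hZ⟩ := exists_card_rows_add_le d m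
  have := Nat.one_le_two_pow (n := d + 1)
  have := blockCount_pos d m
  exact ⟨Z, by omega⟩

end BlockArrangement

/-- With `q + 1` copies of an arrangement with blocks of size `m = 2 ^ (d + 4)`, where `q` copies
contain at most `n` symbols, the number of rows is at most `(q + 1) m B / 8 ≤ n / 4`, where `B` is
the number of blocks. -/
theorem Arrangement.exists_four_mul_card_rows_le {d n : ℕ}
    (hn : 2 ^ (d + 4) * blockCount d (2 ^ (d + 4)) ≤ n) :
    ∃ A : Arrangement (Fin n) (d + 1), 4 * A.rows.card ≤ n := by
  set m := 2 ^ (d + 4) with hm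
  obtain ⟨Z, hZ⟩ := BlockArrangement.exists_card_rows_le d m
  have hpos : 0 < m * blockCount d m := Nat.mul_pos (by positivity) (blockCount_pos d m)
  generalize blockCount d m = B at *
  set q := n / (m * B)
  have hcard : Fintype.card (Fin n) ≤ Fintype.card (Fin (q + 1) × (Fin B × Fin m)) := by
    simpa [mul_comm B] using (Nat.lt_div_mul_add hpos (a := n)).le.trans_eq (by ring)
  obtain ⟨e⟩ := Function.Embedding.nonempty_of_card_le hcard
  refine ⟨(Z.copies (Fin (q + 1))).restrict e, ?_⟩
  have hq : 1 ≤ q := (Nat.one_le_div_iff hpos).2 hn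
  have hqn : q * (m * B) ≤ n := Nat.div_mul_le_self _ _
  calc 4 * (Z.copies (Fin (q + 1))).rows.card
      = 4 * ((q + 1) * Z.rows.card) := by rw [Arrangement.card_rows_copies, Fintype.card_fin]
    _ ≤ 4 * (2 * q * (2 ^ (d + 1) * B)) := by gcongr; omega
    _ = q * (m * B) := by rw [hm]; ring
    _ ≤ n := hqn

section InverseAckermann

theorem exists_le_iterCount_of_succ_le {f : ℕ → ℕ} {k fuel m : ℕ}
    (h : k + 1 ≤ iterCount f fuel m) : 2 ≤ m ∧ ∃ fuel', k ≤ iterCount f fuel' (f m) := by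
  cases fuel with
  | zero => simp [iterCount] at h
  | succ fuel =>
    rw [iterCount] at h
    split_ifs at h with hm
    · omega
    · exact ⟨by omega, fuel, by omega⟩

theorem five_le_of_three_le_iterCount {f : ℕ → ℕ} (h₂ : ∀ m, 2 ≤ f m → 3 ≤ m)
    (h₃ : ∀ m, 3 ≤ f m → 5 ≤ m) {fuel m : ℕ} (h : 3 ≤ iterCount f fuel m) : 5 ≤ m := by
  obtain ⟨-, fuel₁, hfuel₁⟩ := exists_le_iterCount_of_succ_le h
  obtain ⟨-, fuel₂, hfuel₂⟩ := exists_le_iterCount_of_succ_le hfuel₁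
  exact h₃ _ (h₂ _ (exists_le_iterCount_of_succ_le hfuel₂).1)

theorem three_le_of_two_le_alphaHier {d m : ℕ} (h : 2 ≤ alphaHier (d + 1) m) : 3 ≤ m := by
  induction d generalizing m with
  | zero =>
    rw [alphaHier] at h
    omega
  | succ d ih =>
    obtain ⟨-, fuel, hfuel⟩ := exists_le_iterCount_of_succ_le h
    exact ih (exists_le_iterCount_of_succ_le hfuel).1

theorem five_le_of_three_le_alphaHier {d m : ℕ} (h : 3 ≤ alphaHier (d + 1) m) : 5 ≤ m := by
  induction d generalizing m with
  | zero =>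
    rw [alphaHier] at h
    omega
  | succ d ih =>
    exact five_le_of_three_le_iterCount (fun _ => three_le_of_two_le_alphaHier) (fun _ => ih) h

theorem ack_add_four_le_of_le_alphaHier {d n m : ℕ} (h : n + 4 ≤ alphaHier (d + 1) m) :
    ack (d + 2) n + 4 ≤ m := by
  induction d generalizing n m with
  | zero =>
    rw [alphaHier] at h
    rw [ack_two]
    omega
  | succ d ihd =>
    suffices key : ∀ fuel, n + 4 ≤ iterCount (alphaHier (d + 1)) fuel m →
        ack (d + 3) n + 4 ≤ m from key m h
    clear h
    induction n generalizing m with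
    | zero =>
      intro fuel h
      obtain ⟨-, fuel', h'⟩ := exists_le_iterCount_of_succ_le h
      rw [ack_succ_zero]
      exact ihd (n := 1) (five_le_of_three_le_iterCount
        (fun _ => three_le_of_two_le_alphaHier) (fun _ => five_le_of_three_le_alphaHier) h')
    | succ n ihn =>
      intro fuel h
      obtain ⟨-, fuel', h'⟩ := exists_le_iterCount_of_succ_le h
      rw [ack_succ_succ]
      exact ihd (ihn fuel' h')

theorem four_le_alphaHier_of_lt_invAck {k n : ℕ} (hk : 1 ≤ k) (hkn : k < invAck n) :
    4 ≤ alphaHier k n := by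
  by_contra! h
  exact Nat.notMem_of_lt_sInf hkn ⟨hk, Nat.le_of_lt_succ h⟩

theorem blockCount_mul_sq_le_ack (d m : ℕ) : blockCount d m * (m + 2) ^ 2 ≤ ack (d + 5) m := by
  induction d generalizing m with
  | zero =>
    calc blockCount 0 m * (m + 2) ^ 2 = 2 * (m + 2) ^ 2 := by rw [blockCount_zero]
      _ ≤ (ack 2 m + 1) ^ 2 := by rw [ack_two]; nlinarith
      _ ≤ ack 5 m := ack_add_one_sq_lt_ack_add_three 2 m
  | succ d ihd =>
    induction m with
    | zero =>
      rw [blockCount_succ_zero]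
      have := add_lt_ack (d + 1 + 5) 0
      omega
    | succ m ihm =>
      rw [blockCount_succ_succ, ack_succ_succ]
      set f := blockCount (d + 1) m
      set y := ack (d + 1 + 5) m
      have hfy : f ≤ y := (Nat.le_mul_of_pos_right f (by positivity)).trans ihm
      have hsq : f * (m + 3) ^ 2 ≤ (y + 2) ^ 2 :=
        calc f * (m + 3) ^ 2 ≤ f * (2 * (m + 2)) ^ 2 := by gcongr; omega
          _ = 4 * (f * (m + 2) ^ 2) := by ring
          _ ≤ 4 * y := by gcongr
          _ ≤ (y + 2) ^ 2 := by nlinarith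
      calc blockCount d f * f * (m + 1 + 2) ^ 2
          = blockCount d f * (f * (m + 3) ^ 2) := by ring
        _ ≤ blockCount d y * (y + 2) ^ 2 :=
          Nat.mul_le_mul (monotone_blockCount d hfy) hsq
        _ ≤ ack (d + 5) y := ihd y

theorem two_pow_mul_blockCount_le_ack (d : ℕ) :
    2 ^ (d + 4) * blockCount d (2 ^ (d + 4)) ≤ ack (d + 9) 0 := by
  set m := 2 ^ (d + 4) with hm
  have hmack : m ≤ ack 3 (d + 2) := by
    rw [ack_three, hm, show d + 2 + 3 = d + 4 + 1 by rfl, pow_succ 2 (d + 4)]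
    have : 2 ^ 2 ≤ 2 ^ (d + 4) := Nat.pow_le_pow_right two_pos (by omega)
    generalize 2 ^ (d + 4) = x at *
    omega
  have hd : d + 2 ≤ ack (d + 8) 0 := by
    have := add_lt_ack (d + 8) 0
    omega
  calc m * blockCount d m ≤ blockCount d m * (m + 2) ^ 2 := by
        rw [mul_comm]
        gcongr
        nlinarith
    _ ≤ ack (d + 5) m := blockCount_mul_sq_le_ack d m
    _ ≤ ack (d + 5) (ack 3 (d + 2)) := ack_mono_right _ hmack
    _ ≤ ack (d + 7) (d + 2) := by
        have h := ack_ack_lt_ack_max_add_two (d + 5) 3 (d + 2)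
        rw [max_eq_left (by omega)] at h
        exact h.le
    _ ≤ ack (d + 7) (ack (d + 8) 0) := ack_mono_right _ hd
    _ = ack (d + 9) 0 := by rw [ack_succ_zero (d + 8), ← ack_succ_succ]

end InverseAckermann

section Permutations

theorem sort_symm_lt_sort_symm_iff {n : ℕ} {A : Type*} [LinearOrder A] {f : Fin n → A}
    (hf : Function.Injective f) {x y : Fin n} :
    (Tuple.sort f).symm x < (Tuple.sort f).symm y ↔ f x < f y := by
  have hmono : StrictMono (f ∘ Tuple.sort f) :=
    (Tuple.monotone_sort f).strictMono_of_injective (hf.comp (Tuple.sort f).injective)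
  simpa using (hmono.lt_iff_lt (a := (Tuple.sort f).symm x) (b := (Tuple.sort f).symm y)).symm

theorem card_finset_sym {A : Type*} [DecidableEq A] (U : Finset A) (n : ℕ) :
    (U.sym n).card = U.card.multichoose n := by
  conv_lhs => rw [← U.attach_map_val, Finset.sym_map, Finset.card_map, Finset.attach_eq_univ,
    Finset.sym_univ, Finset.card_univ, Sym.card_sym_eq_multichoose, Fintype.card_coe]

/-- A function that is monotone after `σ` is determined by the multiset of its values. -/
theorem card_le_multichoose_of_monotone_comp {n : ℕ} {A : Type*} [LinearOrder A]
    {F : Finset (Fin n → A)} {U : Finset A} (hU : ∀ f ∈ F, ∀ x, f x ∈ U)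
    (σ : Equiv.Perm (Fin n)) (hσ : ∀ f ∈ F, Monotone (f ∘ σ)) :
    F.card ≤ U.card.multichoose n := by
  let values (f : Fin n → A) : Sym A n := ⟨(List.ofFn (f ∘ σ) : Multiset A), by simp⟩
  have hmem : Set.MapsTo values F (U.sym n) := by
    intro f hf
    refine Finset.mem_coe.2 (Finset.mem_sym_iff.2 fun a ha => ?_)
    obtain ⟨x, rfl⟩ := List.mem_ofFn.1 (Multiset.mem_coe.1 ha)
    exact hU f hf _
  have hinj : Set.InjOn values F := by
    intro f hf g hg hfg
    have hperm : (List.ofFn (f ∘ σ)).Perm (List.ofFn (g ∘ σ)) :=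
      Multiset.coe_eq_coe.1 (congrArg Subtype.val hfg)
    have hlist := hperm.eq_of_sortedLE (hσ f hf).sortedLE_ofFn (hσ g hg).sortedLE_ofFn
    exact σ.surjective.injective_comp_right (List.ofFn_injective hlist)
  calc F.card ≤ (U.sym n).card := Finset.card_le_card_of_injOn values hmem hinj
    _ = U.card.multichoose n := card_finset_sym U n

end Permutations

namespace Arrangement

variable {n d : ℕ}

/-- The point at which the symbol `i` occurs in the row `f i`. -/
def point (A : Arrangement (Fin n) d) (f : Fin n → A.Row) (i : Fin n) : A.Row ×ₗ A.Rank :=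
  toLex (f i, A.rank i)

/-- The permutation that lists the symbols in the order of the points `A.point f i`. -/
def perm (A : Arrangement (Fin n) d) (f : Fin n → A.Row) : Equiv.Perm (Fin n) :=
  (Tuple.sort (A.point f)).symm

theorem perm_lt_perm_iff (A : Arrangement (Fin n) d) (f : Fin n → A.Row) {i j : Fin n} :
    A.perm f i < A.perm f j ↔ A.point f i < A.point f j :=
  sort_symm_lt_sort_symm_iff fun _ _ h => A.rank_injective (Prod.ext_iff.1 (toLex_inj.1 h)).2

theorem monotone_comp_perm_symm (A : Arrangement (Fin n) d) (f : Fin n → A.Row) :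
    Monotone (f ∘ (A.perm f).symm) :=
  Prod.Lex.monotone_fst_ofLex.comp (Tuple.monotone_sort (A.point f))

/-- The permutations given by all the ways to choose one row for each symbol. -/
def perms (A : Arrangement (Fin n) d) : Finset (Equiv.Perm (Fin n)) :=
  (Fintype.piFinset A.occ).image A.perm

theorem vcDimLE_perms (A : Arrangement (Fin n) d) : VCDimLE n 3 A.perms := by
  rintro a ⟨ha, hshatter⟩
  obtain ⟨i, j, hij, h⟩ := exists_alternates_of_forall_perm
    (O := fun i => points (A.occ (a i)) (A.rank (a i)))
    (fun i j hij => disjoint_points (A.rank_injective.ne (ha.injective.ne hij))) fun τ => by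
      obtain ⟨_, hπ, hrestrict⟩ := hshatter τ⁻¹
      obtain ⟨f, hf, rfl⟩ := Finset.mem_image.1 hπ
      refine ⟨fun i => A.point f (a (τ i)), fun i => ?_, fun i j hij => ?_⟩
      · exact mem_points.2 ⟨_, Fintype.mem_piFinset.1 hf _, rfl⟩
      · rw [← perm_lt_perm_iff, ← hrestrict]
        simpa using hij
  exact A.not_alternates _ _ (ha.injective.ne hij) h

theorem pow_le_card_perms_mul (A : Arrangement (Fin n) d) :
    d ^ n ≤ A.perms.card * A.rows.card.multichoose n := by
  calc d ^ n = (Fintype.piFinset A.occ).card := by simp [A.card_occ]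
    _ ≤ A.rows.card.multichoose n * A.perms.card :=
      Finset.card_le_mul_card_image _ _ fun π _ => card_le_multichoose_of_monotone_comp
        (fun f hf x => A.occ_subset_rows x <|
          Fintype.mem_piFinset.1 (Finset.mem_filter.1 hf).1 x)
        π.symm fun f hf => (Finset.mem_filter.1 hf).2 ▸ A.monotone_comp_perm_symm f
    _ = A.perms.card * A.rows.card.multichoose n := mul_comm _ _

end Arrangement

section Counting

theorem choose_mul_pow_le (a N k : ℕ) : N.choose k * a ^ k ≤ (a + 1) ^ N := by
  rcases lt_or_ge N k with hk | hk
  · simp [Nat.choose_eq_zero_of_lt hk]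
  rw [add_pow]
  simpa [mul_comm] using Finset.single_le_sum
    (f := fun m => a ^ m * 1 ^ (N - m) * (N.choose m)) (fun _ _ => Nat.zero_le _)
    (Finset.mem_range_succ_iff.2 hk)

theorem multichoose_le_two_pow {R n : ℕ} (h : 4 * R ≤ n) : R.multichoose n ≤ 2 ^ n := by
  obtain ⟨t, rfl⟩ := Nat.exists_eq_add_of_le h
  refine Nat.le_of_mul_le_mul_right ?_ (pow_pos two_pos (4 * R + t))
  calc R.multichoose (4 * R + t) * 2 ^ (4 * R + t)
      ≤ (R + (4 * R + t)).choose (4 * R + t) * 2 ^ (4 * R + t) := by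
        rw [Nat.multichoose_eq]
        gcongr
        exact Nat.sub_le _ _
    _ ≤ 3 ^ (R + (4 * R + t)) := choose_mul_pow_le 2 _ _
    _ = 243 ^ R * 3 ^ t := by
        rw [show R + (4 * R + t) = 5 * R + t by ring, pow_add, pow_mul]
        norm_num
    _ ≤ 256 ^ R * 4 ^ t := by gcongr <;> norm_num
    _ = 2 ^ (4 * R + t) * 2 ^ (4 * R + t) := by
        rw [← mul_pow, pow_add, pow_mul]
        norm_num

end Counting

/-- There is a constant `C` such that for every `n` with `α(n) ≥ 2C + 2`
there is a family of `n`-permutations of size at least `(α(n)/2 − C)^n` with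
VC-dimension at most 3. -/
theorem r3_lower_bound :
    ∃ C : ℝ, ∀ n : ℕ, 2 * C + 2 ≤ (invAck n : ℝ) →
      ∃ P : Finset (Equiv.Perm (Fin n)), VCDimLE n 3 P ∧
        ((invAck n : ℝ) / 2 - C) ^ n ≤ (P.card : ℝ) := by
  refine ⟨4, fun n hα => ?_⟩
  obtain ⟨D, hD⟩ : ∃ D, invAck n = D + 9 := Nat.exists_eq_add_of_le' <| by
    have : 10 ≤ invAck n := by exact_mod_cast show (10 : ℝ) ≤ invAck n by linarith
    omega
  have hack : ack (D + 9) 0 ≤ n := by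
    have := ack_add_four_le_of_le_alphaHier (d := D + 7) (n := 0) (m := n)
      (four_le_alphaHier_of_lt_invAck (by omega) (by omega))
    exact le_of_add_le_left this
  obtain ⟨A, hA⟩ := Arrangement.exists_four_mul_card_rows_le
    ((two_pow_mul_blockCount_le_ack D).trans hack)
  refine ⟨A.perms, A.vcDimLE_perms, ?_⟩
  have hcard : ((D + 1 : ℕ) : ℝ) ^ n ≤ A.perms.card * 2 ^ n := by
    exact_mod_cast A.pow_le_card_perms_mul.trans
      (Nat.mul_le_mul_left _ (multichoose_le_two_pow hA))
  calc ((invAck n : ℝ) / 2 - 4) ^ n = ((D + 1 : ℕ) : ℝ) ^ n / 2 ^ n := by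
        rw [hD, ← div_pow]
        push_cast
        ring
    _ ≤ A.perms.card := (div_le_iff₀ (by positivity)).2 hcard
end
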